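/- Let n ≥ 1, s ∈ ℝ, p, q ∈ (0,∞], A > 0, and let (u_j)_{j∈ℕ₀} be continuous, polynomially bounded functions ℝⁿ → ℂ (hence tempered distributions) whose Fourier transforms satisfy supp ℱu_0 ⊂ {ξ : |ξ| ≤ A} and supp ℱu_j ⊂ {ξ : A^{−1}2^j ≤ |ξ| ≤ A2^j} for j ≥ 1. (1) If B := ‖(2^{sj} ‖u_j‖_{L_p(ℝⁿ)})_{j∈ℕ₀}‖_{ℓ_q} < ∞, then Σ_{j=0}^∞ u_j converges in 𝒮′(ℝⁿ) (i.e. Σ_j ⟨u_j, φ⟩ converges for every Schwartz φ) to a limit u ∈ B^s_{p,q}(ℝⁿ) with ‖u‖_{B^s_{p,q}(ℝⁿ)} ≤ C·B, where C depends only on n, A, s, p, q. (2) If p < ∞ and B := ‖ x ↦ ‖(2^{sj} u_j(x))_{j∈ℕ₀}‖_{ℓ_q} ‖_{L_p(ℝⁿ)} < ∞, then Σ_{j=0}^∞ u_j converges in 𝒮′(ℝⁿ) to a limit u ∈ F^s_{p,q}(ℝⁿ) with ‖u‖_{F^s_{p,q}(ℝⁿ)} ≤ C·B, where C depends only on n,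 A, s, p, q. -/

import Mathlib

/-! The terms `u_k` live at frequency `2^k`, so a fixed smooth cutoff equal to `1` on the ball of
radius `A`, dilated by `2^k`, reproduces `u_k` (`SF.rep`). This bounds `|u_k|` by its averages against
the kernels `peK D k z = 2^{kn} (1 + 2^k |z|)^{-D}`, for every `D`. Peetre's trick (`kc_le_kc_rpow`,
`peetre_SF`) upgrades this to averages of `|u_k|^r` for any `0 < r ≤ 1`; the maximal function one
divides by is finite because `u_k` is polynomially bounded. No integrability is needed there, which is
what allows `p, q < 1`.

The `j`-th Littlewood–Paley piece of `u = ∑ u_k` is the sum of the `ℱ⁻¹(Φ_j ℱu_k)`, of which only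
those with `|k - j| ≤ h` are nonzero, `h` depending on `A` alone (`LP_disj`, `SF.LP_eq`). The kernels
of `Φ_j` are rapidly decreasing at scale `2^{-j}` uniformly in `j`, so each such piece is pointwise
bounded by `(K_k * |u_k|^r)^{1/r}` (`cv_SF`, `SF.LP_bound`). Sums over the window `|k - j| ≤ h` are
harmless in weighted `ℓ_q` and in `L_p` (`ellq_win`, `eLpNorm_win`). It remains to fix
`r < min(1, p, q)` and `D r > n` and to remove the averages.

* In the Besov scale each `k` is treated separately by Jensen's and Young's inequalities (`kc_Lp`).
* In the Triebel–Lizorkin scale one needs the vector-valued inequality `vec_all` in `L_P(ℓ_Q)` with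
  `P = p / r > 1` and `Q = q / r > 1`. It is derived from the scalar Hardy–Littlewood theorem
  `hl_strong`, which dominates all the averages at once (`kc_le_hlM`): for `P > Q` by duality, for
  `P = Q` by Jensen and Fubini, for `P < Q` by a factorization `f_k = (f_k F^{-b}) F^b` and Hölder's
  inequality, and for `Q = ∞` directly from the scalar theorem.

Convergence in `𝒮'` comes from Nikol'skii's inequality, which gives `‖u_k‖_∞ ≤ K 2^{kL}` for some `L`
(`SF.exp_bound`). For `k ≥ 1` the Fourier transform of `u_k` avoids a neighbourhood of the origin of
size `2^k`, so `|ξ|^{2(L+1)}` can be divided out and moved onto the test function (`SF.pair_eq`);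
the resulting factor `2^{-2k(L+1)}` makes `∑ ⟨u_k, φ⟩` converge geometrically (`SF.exists_sum`). -/

open MeasureTheory Filter Complex
open scoped ENNReal NNReal Real BigOperators Topology

noncomputable section

/-- `ℝ^m`, with its (sup-normed) product structure; the Lebesgue measure is the
product measure. -/
abbrev Eu (m : ℕ) : Type := Fin m → ℝ

/-- Tempered distributions on `ℝ^m`. -/
abbrev TD (m : ℕ) := SchwartzMap (Eu m) ℂ →L[ℂ] ℂ

/-- The dot product `x · ξ = ∑ xᵢ ξᵢ`. -/
def dotp {m : ℕ} (x ξ : Eu m) : ℝ := ∑ i, x i * ξ i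

/-- The euclidean norm `|x|`. -/
def eun {m : ℕ} (x : Eu m) : ℝ := Real.sqrt (∑ i, x i ^ 2)

/-- The japanese bracket `⟨ξ⟩ = (1 + |ξ|²)^(1/2)`. -/
def jap {m : ℕ} (ξ : Eu m) : ℝ := Real.sqrt (1 + ∑ i, ξ i ^ 2)

/-- The Fourier transform `ℱf(ξ) = ∫ e^{-i x·ξ} f(x) dx` (paper convention). -/
def pF {m : ℕ} (f : Eu m → ℂ) (ξ : Eu m) : ℂ :=
  ∫ x : Eu m, Complex.exp (-(Complex.I * (dotp x ξ : ℂ))) * f x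

/-- The inverse Fourier transform `(2π)^{-m} ∫ e^{i x·ξ} f(ξ) dξ`. -/
def pFinv {m : ℕ} (f : Eu m → ℂ) (x : Eu m) : ℂ :=
  (((2 * Real.pi) ^ m : ℝ)⁻¹) • ∫ ξ : Eu m, Complex.exp (Complex.I * (dotp x ξ : ℂ)) * f ξ

/-- One-dimensional Fourier transform. -/
def pF1 (f : ℝ → ℂ) (τ : ℝ) : ℂ :=
  ∫ t : ℝ, Complex.exp (-(Complex.I * ((t * τ : ℝ) : ℂ))) * f t

/-- One-dimensional inverse Fourier transform. -/
def pFinv1 (f : ℝ → ℂ) (t : ℝ) : ℂ :=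
  ((2 * Real.pi)⁻¹ : ℝ) • ∫ τ : ℝ, Complex.exp (Complex.I * ((t * τ : ℝ) : ℂ)) * f τ

/-- `ℓ_q`-norm (`0 < q ≤ ∞`) of a sequence of extended nonnegative reals. -/
def ellqNorm (q : ℝ≥0∞) (b : ℕ → ℝ≥0∞) : ℝ≥0∞ :=
  if q = ∞ then ⨆ j, b j else (∑' j, b j ^ q.toReal) ^ (1 / q.toReal)

/-- The weight `2^{s j}` as an extended nonnegative real. -/
def tw (s : ℝ) (j : ℕ) : ℝ≥0∞ := ENNReal.ofReal ((2 : ℝ) ^ (s * (j : ℝ)))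

/-- `1/p ∈ ℝ` for `p ∈ (0,∞]`. -/
def iv (p : ℝ≥0∞) : ℝ := p⁻¹.toReal

/-- An admissible Littlewood–Paley generating function `Ψ`. -/
def GoodPsi (Ψ : ℝ → ℝ) : Prop :=
  ContDiff ℝ (⊤ : ℕ∞) Ψ ∧ (∀ t : ℝ, t ≤ 11 / 10 → Ψ t = 1) ∧ (∀ t : ℝ, 13 / 10 ≤ t → Ψ t = 0)

/-- The `j`-th Littlewood–Paley symbol `Φ_j(ξ) = Ψ(2^{-j}|ξ|) − Ψ(2^{1-j}|ξ|)` (with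
`Ψ_{-1} = 0`). -/
def LPsym (Ψ : ℝ → ℝ) {m : ℕ} (j : ℕ) (ξ : Eu m) : ℝ :=
  Ψ ((2 : ℝ) ^ (-(j : ℝ)) * eun ξ) - (if j = 0 then 0 else Ψ ((2 : ℝ) ^ (1 - (j : ℝ)) * eun ξ))

/-- `Φs` is the Littlewood–Paley partition of unity built from `Ψ`, realised as a family
of Schwartz functions. -/
def IsLP (Ψ : ℝ → ℝ) {m : ℕ} (Φs : ℕ → SchwartzMap (Eu m) ℂ) : Prop :=
  ∀ j ξ, Φs j ξ = (LPsym Ψ j ξ : ℂ)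

/-- The tempered distribution `T` is represented by the function `g`. -/
def Represents {m : ℕ} (T : TD m) (g : Eu m → ℂ) : Prop :=
  ∀ φ : SchwartzMap (Eu m) ℂ, T φ = ∫ x, g x * φ x

/-- `g` is (the continuous function representing) the Littlewood–Paley piece
`ℱ^{-1}(Φ_j ℱu)` of the tempered distribution `u`:  for every Schwartz `φ`, writing
`ψ = ℱ^{-1}φ` and `χ = ℱ(Φ_j ψ)` (as Schwartz functions), one has `⟨u, χ⟩ = ∫ g φ`. -/
def IsLPpiece {m : ℕ} (Φj : SchwartzMap (Eu m) ℂ) (u : TD m) (g : Eu m → ℂ) : Prop :=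
  Continuous g ∧
    ∀ φ ψ χ : SchwartzMap (Eu m) ℂ,
      (∀ x, ψ x = pFinv (fun y => φ y) x) →
      (∀ ξ, χ ξ = pF (fun η => Φj η * ψ η) ξ) →
      u χ = ∫ x, g x * φ x

open Classical in
/-- The Littlewood–Paley piece `ℱ^{-1}(Φ_j ℱu)` of a tempered distribution, as a
function (via choice of the continuous representative). -/
def LPfun {m : ℕ} (Φj : SchwartzMap (Eu m) ℂ) (u : TD m) : Eu m → ℂ :=
  if h : ∃ g, IsLPpiece Φj u g then h.choose else 0

/-- Besov quasi-norm of a sequence of (Littlewood–Paley) functions. -/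
def besovNormSeq {m : ℕ} (s : ℝ) (p q : ℝ≥0∞) (g : ℕ → Eu m → ℂ) : ℝ≥0∞ :=
  ellqNorm q fun j => tw s j * eLpNorm (g j) p volume

/-- Triebel–Lizorkin quasi-norm of a sequence of (Littlewood–Paley) functions. -/
def tlNormSeq {m : ℕ} (s : ℝ) (p q : ℝ≥0∞) (g : ℕ → Eu m → ℂ) : ℝ≥0∞ :=
  (∫⁻ x, (ellqNorm q fun j => tw s j * (‖g j x‖₊ : ℝ≥0∞)) ^ p.toReal ∂volume) ^ (1 / p.toReal)

/-- Besov quasi-norm `‖u‖_{B^s_{p,q}}` of a tempered distribution. -/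
def besovNormD {m : ℕ} (Φs : ℕ → SchwartzMap (Eu m) ℂ) (s : ℝ) (p q : ℝ≥0∞) (u : TD m) :
    ℝ≥0∞ :=
  besovNormSeq s p q fun j => LPfun (Φs j) u

/-- Triebel–Lizorkin quasi-norm `‖u‖_{F^s_{p,q}}` of a tempered distribution. -/
def tlNormD {m : ℕ} (Φs : ℕ → SchwartzMap (Eu m) ℂ) (s : ℝ) (p q : ℝ≥0∞) (u : TD m) :
    ℝ≥0∞ :=
  tlNormSeq s p q fun j => LPfun (Φs j) u

/-- The open upper half-space `ℝ^{m+1}_+ = {x : x_n > 0}`. -/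
def upperH (m : ℕ) : Set (Eu (m + 1)) := {x | 0 < x (Fin.last m)}

/-- `w ∈ 𝒮'(ℝ^{m+1})` agrees with the function `f` on the open half-space `ℝ^{m+1}_+`. -/
def RestrictsTo {m : ℕ} (w : TD (m + 1)) (f : Eu (m + 1) → ℂ) : Prop :=
  ∀ φ : SchwartzMap (Eu (m + 1)) ℂ, HasCompactSupport (φ : Eu (m + 1) → ℂ) →
    tsupport (φ : Eu (m + 1) → ℂ) ⊆ upperH m → w φ = ∫ x, f x * φ x

/-- Two tempered distributions agree on the open upper half-space. -/
def AgreeOnUpper {m : ℕ} (w v : TD (m + 1)) : Prop :=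
  ∀ φ : SchwartzMap (Eu (m + 1)) ℂ, HasCompactSupport (φ : Eu (m + 1) → ℂ) →
    tsupport (φ : Eu (m + 1) → ℂ) ⊆ upperH m → w φ = v φ

/-- `‖f‖_{B^s_{p,q}(ℝ̄^{m+1}_+)}`: infimum of the Besov norms of all distributional
extensions of (the restriction to the half-space of) the function `f`. -/
def bHalfNormF {m : ℕ} (Φs : ℕ → SchwartzMap (Eu (m + 1)) ℂ) (s : ℝ) (p q : ℝ≥0∞)
    (f : Eu (m + 1) → ℂ) : ℝ≥0∞ :=
  ⨅ (w : TD (m + 1)) (_ : RestrictsTo w f), besovNormD Φs s p q w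

/-- `‖f‖_{F^s_{p,q}(ℝ̄^{m+1}_+)}`. -/
def tlHalfNormF {m : ℕ} (Φs : ℕ → SchwartzMap (Eu (m + 1)) ℂ) (s : ℝ) (p q : ℝ≥0∞)
    (f : Eu (m + 1) → ℂ) : ℝ≥0∞ :=
  ⨅ (w : TD (m + 1)) (_ : RestrictsTo w f), tlNormD Φs s p q w

/-- `‖v‖_{B^s_{p,q}(ℝ̄^{m+1}_+)}` for a tempered distribution `v`. -/
def bHalfNormD {m : ℕ} (Φs : ℕ → SchwartzMap (Eu (m + 1)) ℂ) (s : ℝ) (p q : ℝ≥0∞)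
    (v : TD (m + 1)) : ℝ≥0∞ :=
  ⨅ (w : TD (m + 1)) (_ : AgreeOnUpper w v), besovNormD Φs s p q w

/-- `‖v‖_{F^s_{p,q}(ℝ̄^{m+1}_+)}` for a tempered distribution `v`. -/
def tlHalfNormD {m : ℕ} (Φs : ℕ → SchwartzMap (Eu (m + 1)) ℂ) (s : ℝ) (p q : ℝ≥0∞)
    (v : TD (m + 1)) : ℝ≥0∞ :=
  ⨅ (w : TD (m + 1)) (_ : AgreeOnUpper w v), tlNormD Φs s p q w

/-- Partial derivative in the `i`-th coordinate. -/
def cDeriv {k : ℕ} (i : Fin k) (f : Eu k → ℂ) : Eu k → ℂ :=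
  fun x => deriv (fun t => f (Function.update x i t)) (x i)

/-- Iterated partial derivative `∂^α` for a multi-index `α`. -/
def mDeriv {k : ℕ} (α : Fin k → ℕ) (f : Eu k → ℂ) : Eu k → ℂ :=
  (List.finRange k).foldr (fun i g => (cDeriv i)^[α i] g) f

/-- Length `|α| = ∑ αᵢ` of a multi-index. -/
def degS {k : ℕ} (α : Fin k → ℕ) : ℕ := ∑ i, α i

/-- `D^α = (-i)^{|α|} ∂^α`. -/
def mD {k : ℕ} (α : Fin k → ℕ) (f : Eu k → ℂ) : Eu k → ℂ :=
  fun x => (-Complex.I) ^ degS α * mDeriv α f x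

/-- Monomial `x^α`. -/
def monom {k : ℕ} (α : Fin k → ℕ) (x : Eu k) : ℂ := ∏ i, (x i : ℂ) ^ α i

/-- `D^β_x D^α_ξ a(x, ξ)` for a symbol `a`. -/
def symD {k : ℕ} (α β : Fin k → ℕ) (a : Eu k → Eu k → ℂ) (x ξ : Eu k) : ℂ :=
  mD β (fun y => mD α (a y) ξ) x

/-- The Hörmander class `S^d_{1,0}(ℝ^k × ℝ^k)` of uniformly estimated symbols. -/
def IsSymbol {k : ℕ} (d : ℝ) (a : Eu k → Eu k → ℂ) : Prop :=
  ContDiff ℝ (⊤ : ℕ∞) (fun z : Eu k × Eu k => a z.1 z.2) ∧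
    ∀ α β : Fin k → ℕ, ∃ C : ℝ, ∀ x ξ, ‖symD α β a x ξ‖ ≤ C * jap ξ ^ (d - (degS α : ℝ))

/-- `k` is the inverse Fourier transform in `ξ_n` of `ξ_n ↦ D^α_ξ D^β_x a(x',0,ξ',ξ_n)`
away from `z_n = 0`, smooth there. -/
def TCkernel {m : ℕ} (a : Eu (m + 1) → Eu (m + 1) → ℂ) (α β : Fin (m + 1) → ℕ)
    (k : Eu m → ℝ → Eu m → ℂ) : Prop :=
  (∀ x' ξ', ContDiffOn ℝ (⊤ : ℕ∞) (fun t => k x' t ξ') {t : ℝ | t ≠ 0}) ∧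
    ∀ (x' ξ' : Eu m) (φ : ℝ → ℂ), ContDiff ℝ (⊤ : ℕ∞) φ → HasCompactSupport φ →
      tsupport φ ⊆ {t : ℝ | t ≠ 0} →
      (∫ τ : ℝ, symD α β a (Fin.snoc x' 0) (Fin.snoc ξ' τ) * pFinv1 φ τ) =
        ∫ t : ℝ, k x' t ξ' * φ t

/-- The uniform two-sided transmission condition at `x_n = 0`. -/
def HasUTTC {m : ℕ} (a : Eu (m + 1) → Eu (m + 1) → ℂ) : Prop :=
  ∀ α β : Fin (m + 1) → ℕ, ∃ k : Eu m → ℝ → Eu m → ℂ, TCkernel a α β k ∧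
    ∀ (l mm : ℕ) (ξ' : Eu m), ∃ C : ℝ, ∀ (x' : Eu m) (t : ℝ), t ≠ 0 →
      ‖(t : ℂ) ^ l * iteratedDeriv mm (fun u => k x' u ξ') t‖ ≤ C

/-- `t^l D^m_t D^{α'}_{ξ'} D^{β'}_{x'} k̃(x', t, ξ')`, the `t`-derivatives being taken
within `[0,∞)`. -/
def pkDeriv {m : ℕ} (α' β' : Fin m → ℕ) (l mm : ℕ) (k : Eu m → ℝ → Eu m → ℂ)
    (x' : Eu m) (t : ℝ) (ξ' : Eu m) : ℂ :=
  (t : ℂ) ^ l *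
    iteratedDerivWithin mm
      (fun u => mDeriv β' (fun y => mDeriv α' (fun η => k y u η) ξ') x') (Set.Ici 0) t

/-- The seminorm `sup ⟨ξ'⟩^{-(μ+1-|α'|-l+m)} |t^l D^m_t D^{α'}_{ξ'} D^{β'}_{x'} k̃|` of a
Poisson/trace symbol-kernel. -/
def pkSemiE {m : ℕ} (μ : ℝ) (α' β' : Fin m → ℕ) (l mm : ℕ) (k : Eu m → ℝ → Eu m → ℂ) :
    ℝ≥0∞ :=
  ⨆ (x' : Eu m) (ξ' : Eu m) (t : Set.Ici (0 : ℝ)),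
    ENNReal.ofReal
      (jap ξ' ^ (-(μ + 1 - (degS α' : ℝ) - (l : ℝ) + (mm : ℝ))) *
        ‖pkDeriv α' β' l mm k x' t ξ'‖)

/-- Membership in the symbol-kernel class `S^μ_{1,0}(ℝ^m × ℝ^m, 𝒮(ℝ̄₊))`. -/
def InPK {m : ℕ} (μ : ℝ) (k : Eu m → ℝ → Eu m → ℂ) : Prop :=
  ContDiffOn ℝ (⊤ : ℕ∞) (fun z : (Eu m × ℝ) × Eu m => k z.1.1 z.1.2 z.2) {z | 0 ≤ z.1.2} ∧
    ∀ (α' β' : Fin m → ℕ) (l mm : ℕ), pkSemiE μ α' β' l mm k ≠ ∞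

/-- `‖k̃‖_{(N)}`: maximum of the symbol-kernel seminorms over all indices `≤ N`. -/
def pkNormN {m : ℕ} (μ : ℝ) (N : ℕ) (k : Eu m → ℝ → Eu m → ℂ) : ℝ≥0∞ :=
  ⨆ (α' : Fin m → ℕ) (_ : degS α' ≤ N) (β' : Fin m → ℕ) (_ : degS β' ≤ N)
    (l : ℕ) (_ : l ≤ N) (mm : ℕ) (_ : mm ≤ N), pkSemiE μ α' β' l mm k

/-- `x_n^l D^m_{x_n} y_n^{l'} D^{m'}_{y_n} D^{α'}_{ξ'} D^{β'}_{x'} g̃`, the normal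
derivatives being taken within `[0,∞)`. -/
def sgDeriv {m : ℕ} (α' β' : Fin m → ℕ) (l mm l' mm' : ℕ)
    (g : Eu m → ℝ → ℝ → Eu m → ℂ) (x' : Eu m) (s t : ℝ) (ξ' : Eu m) : ℂ :=
  (s : ℂ) ^ l * (t : ℂ) ^ l' *
    iteratedDerivWithin mm
      (fun u =>
        iteratedDerivWithin mm'
          (fun v => mDeriv β' (fun y => mDeriv α' (fun η => g y u v η) ξ') x')
          (Set.Ici 0) t)
      (Set.Ici 0) s

/-- Singular Green symbol-kernel seminorm. -/
def sgSemiE {m : ℕ} (d : ℝ) (α' β' : Fin m → ℕ) (l mm l' mm' : ℕ)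
    (g : Eu m → ℝ → ℝ → Eu m → ℂ) : ℝ≥0∞ :=
  ⨆ (x' : Eu m) (ξ' : Eu m) (s : Set.Ici (0 : ℝ)) (t : Set.Ici (0 : ℝ)),
    ENNReal.ofReal
      (jap ξ' ^
          (-(d + 1 - (degS α' : ℝ) - (l : ℝ) + (mm : ℝ) - (l' : ℝ) + (mm' : ℝ))) *
        ‖sgDeriv α' β' l mm l' mm' g x' s t ξ'‖)

/-- Membership in the singular Green symbol-kernel class
`S^{d-1}_{1,0}(ℝ^m × ℝ^m, 𝒮(ℝ̄²₊₊))` (for operators of order `d`). -/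
def InSG {m : ℕ} (d : ℝ) (g : Eu m → ℝ → ℝ → Eu m → ℂ) : Prop :=
  ContDiffOn ℝ (⊤ : ℕ∞) (fun z : ((Eu m × ℝ) × ℝ) × Eu m => g z.1.1.1 z.1.1.2 z.1.2 z.2)
      {z | 0 ≤ z.1.1.2 ∧ 0 ≤ z.1.2} ∧
    ∀ (α' β' : Fin m → ℕ) (l mm l' mm' : ℕ), sgSemiE d α' β' l mm l' mm' g ≠ ∞

/-- `‖g̃‖_{(N)}`. -/
def sgNormN {m : ℕ} (d : ℝ) (N : ℕ) (g : Eu m → ℝ → ℝ → Eu m → ℂ) : ℝ≥0∞ :=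
  ⨆ (α' : Fin m → ℕ) (_ : degS α' ≤ N) (β' : Fin m → ℕ) (_ : degS β' ≤ N)
    (l : ℕ) (_ : l ≤ N) (mm : ℕ) (_ : mm ≤ N) (l' : ℕ) (_ : l' ≤ N) (mm' : ℕ)
    (_ : mm' ≤ N), sgSemiE d α' β' l mm l' mm' g

/-- The Poisson operator `OPK(k̃)v(x', x_n) = (2π)^{1-n} ∫ e^{i x'·ξ'} k̃(x',x_n,ξ') ℱv(ξ') dξ'`. -/
def OPK {m : ℕ} (k : Eu m → ℝ → Eu m → ℂ) (v : Eu m → ℂ) : Eu (m + 1) → ℂ :=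
  fun x =>
    (((2 * Real.pi) ^ m : ℝ)⁻¹) •
      ∫ ξ' : Eu m,
        Complex.exp (Complex.I * (dotp (Fin.init x) ξ' : ℂ)) *
          (k (Fin.init x) (x (Fin.last m)) ξ' * pF v ξ')

/-- The partial Fourier transform `ú(ξ', y_n)` of `u(y', y_n)` in `y'`. -/
def hatu {m : ℕ} (u : Eu (m + 1) → ℂ) (ξ' : Eu m) (t : ℝ) : ℂ :=
  ∫ y' : Eu m, Complex.exp (-(Complex.I * (dotp y' ξ' : ℂ))) * u (Fin.snoc y' t)

/-- The class-0 trace operator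
`OPT(t̃)u(x') = (2π)^{1-n} ∫∫ e^{i x'·ξ'} t̃(x',y_n,ξ') ú(ξ',y_n) dy_n dξ'`. -/
def OPT {m : ℕ} (tk : Eu m → ℝ → Eu m → ℂ) (u : Eu (m + 1) → ℂ) : Eu m → ℂ :=
  fun x' =>
    (((2 * Real.pi) ^ m : ℝ)⁻¹) •
      ∫ ξ' : Eu m, ∫ t in Set.Ioi (0 : ℝ),
        Complex.exp (Complex.I * (dotp x' ξ' : ℂ)) * (tk x' t ξ' * hatu u ξ' t)

/-- The class-0 singular Green operator
`OPG(g̃)u(x',x_n) = (2π)^{1-n} ∫∫ e^{i x'·ξ'} g̃(x',x_n,y_n,ξ') ú(ξ',y_n) dy_n dξ'`. -/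
def OPG {m : ℕ} (g : Eu m → ℝ → ℝ → Eu m → ℂ) (u : Eu (m + 1) → ℂ) : Eu (m + 1) → ℂ :=
  fun x =>
    (((2 * Real.pi) ^ m : ℝ)⁻¹) •
      ∫ ξ' : Eu m, ∫ t in Set.Ioi (0 : ℝ),
        Complex.exp (Complex.I * (dotp (Fin.init x) ξ' : ℂ)) *
          (g (Fin.init x) (x (Fin.last m)) t ξ' * hatu u ξ' t)

/-- Half-space multi-index derivative: the `x_n`-derivatives are taken within `[0,∞)`,
the tangential ones in the full space. -/
def hDeriv {m : ℕ} (β : Fin (m + 1) → ℕ) (f : Eu (m + 1) → ℂ) (x : Eu (m + 1)) : ℂ :=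
  iteratedDerivWithin (β (Fin.last m))
    (fun t =>
      mDeriv (fun i : Fin m => β i.castSucc) (fun y : Eu m => f (Fin.snoc y t))
        (Fin.init x))
    (Set.Ici 0) (x (Fin.last m))

/-- The Schwartz seminorm `‖u‖_{𝒮,N} = max_{|γ|,|δ| ≤ N} sup |y^γ D^δ u|`. -/
def swSemi {k : ℕ} (N : ℕ) (u : Eu k → ℂ) : ℝ≥0∞ :=
  ⨆ (γ : Fin k → ℕ) (_ : degS γ ≤ N) (δ : Fin k → ℕ) (_ : degS δ ≤ N) (y : Eu k),
    ENNReal.ofReal ‖monom γ y * mDeriv δ u y‖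

/-- `supp ℱf ⊆ S` for a (polynomially bounded, continuous) function `f`:  the pairing
`⟨ℱf, φ⟩ = ∫ f ℱφ` vanishes for every Schwartz `φ` with support disjoint from `S`. -/
def FsuppIn {m : ℕ} (f : Eu m → ℂ) (S : Set (Eu m)) : Prop :=
  ∀ φ : SchwartzMap (Eu m) ℂ, Disjoint (tsupport (φ : Eu m → ℂ)) S →
    (∫ x, f x * pF (fun y => φ y) x) = 0

/-- The one-sided trace `γ_j v (x') = ((-i ∂_{x_n})^j v)(x', 0)`. -/
def traceJ {m : ℕ} (j : ℕ) (v : Eu (m + 1) → ℂ) (x' : Eu m) : ℂ :=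
  (-Complex.I) ^ j * iteratedDeriv j (fun t => v (Fin.snoc x' t)) 0

/-! ### The Hardy–Littlewood maximal inequality over dyadic radii -/

/-- The average of `f` over the cube `closedBall x (2^i)`, up to the constant factor `2^n`. -/
def hlAvg {n : ℕ} (i : ℤ) (f : Eu n → ℝ≥0∞) (x : Eu n) : ℝ≥0∞ :=
  (ENNReal.ofReal (((2 : ℝ) ^ i) ^ n))⁻¹ * ∫⁻ y in Metric.closedBall x ((2 : ℝ) ^ i), f y

/-- The centred Hardy–Littlewood maximal function, with dyadic radii. -/
def hlM {n : ℕ} (f : Eu n → ℝ≥0∞) (x : Eu n) : ℝ≥0∞ := ⨆ i : ℤ, hlAvg i f x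

lemma vol_closedBall {n : ℕ} (x : Eu n) {r : ℝ} (hr : 0 ≤ r) :
    volume (Metric.closedBall x r) = ENNReal.ofReal ((2 * r) ^ n) := by
  rw [Real.volume_pi_closedBall x hr]; simp

/-- Weak type `(1,1)` by the Vitali covering lemma, for radii bounded by `2^I`. -/
lemma hl_weak_aux {n : ℕ} (f : Eu n → ℝ≥0∞) (lam : ℝ≥0∞) (I : ℤ) :
    lam * volume {x | ∃ i : ℤ, i ≤ I ∧ lam < hlAvg i f x} ≤ 8 ^ n * ∫⁻ x, f x := by
  set E := {x : Eu n | ∃ i : ℤ, i ≤ I ∧ lam < hlAvg i f x} with hE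
  have hch : ∀ x : Eu n, ∃ i : ℤ, x ∈ E → i ≤ I ∧ lam < hlAvg i f x := by
    intro x
    by_cases hx : x ∈ E
    · obtain ⟨i, hi⟩ := hx
      exact ⟨i, fun _ => hi⟩
    · exact ⟨0, fun h => absurd h hx⟩
  choose i hi using hch
  have hpos : ∀ x, (0 : ℝ) < 2 ^ i x := fun x => by positivity
  -- Enlarging the radii by `4` suffices for the covering: with side length `2` per unit radius this
  -- gives the constant `8 ^ n`.
  obtain ⟨u, huE, hdisj, hcov⟩ :=
    Vitali.exists_disjoint_subfamily_covering_enlargement_closedBall E (fun x => x)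
      (fun x => (2 : ℝ) ^ i x) ((2 : ℝ) ^ I)
      (fun a ha => zpow_le_zpow_right₀ (by norm_num) (hi a ha).1) 4 (by norm_num)
  have huc : u.Countable := by
    refine hdisj.countable_of_nonempty_interior fun x _ => ?_
    refine ⟨x, ?_⟩
    exact Metric.ball_subset_interior_closedBall (Metric.mem_ball_self (hpos x))
  have h1 : volume E ≤ ∑' b : u, volume (Metric.closedBall (b : Eu n) (4 * 2 ^ i b)) := by
    have : E ⊆ ⋃ b ∈ u, Metric.closedBall (b : Eu n) (4 * 2 ^ i b) := by
      intro x hx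
      obtain ⟨b, hb, hsub⟩ := hcov x hx
      exact Set.mem_biUnion hb (hsub (Metric.mem_closedBall_self (hpos x).le))
    exact (measure_mono this).trans (measure_biUnion_le volume huc _)
  have h2 : ∀ b ∈ u, lam * volume (Metric.closedBall (b : Eu n) (4 * 2 ^ i b)) ≤
      8 ^ n * ∫⁻ y in Metric.closedBall b ((2 : ℝ) ^ i b), f y := by
    intro b hb
    have hb' := (hi b (huE hb)).2.le
    have hne : ENNReal.ofReal (((2 : ℝ) ^ i b) ^ n) ≠ 0 := by
      simpa using pow_pos (hpos b) n
    rw [hlAvg, ← ENNReal.div_eq_inv_mul,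
      ENNReal.le_div_iff_mul_le (Or.inl hne) (Or.inl ENNReal.ofReal_ne_top)] at hb'
    rw [vol_closedBall _ (by have := hpos b; positivity)]
    have e : ENNReal.ofReal ((2 * (4 * (2 : ℝ) ^ i b)) ^ n) =
        8 ^ n * ENNReal.ofReal (((2 : ℝ) ^ i b) ^ n) := by
      rw [show (2 * (4 * (2 : ℝ) ^ i b)) ^ n = 8 ^ n * (((2 : ℝ) ^ i b) ^ n) by
        rw [← mul_pow]; ring_nf, ENNReal.ofReal_mul (by positivity)]
      congr 1
      rw [ENNReal.ofReal_pow (by norm_num)]; norm_num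
    rw [e, mul_left_comm]
    gcongr
  calc lam * volume E ≤ lam * ∑' b : u, volume (Metric.closedBall (b : Eu n) (4 * 2 ^ i b)) := by
        gcongr
    _ = ∑' b : u, lam * volume (Metric.closedBall (b : Eu n) (4 * 2 ^ i b)) := by
        rw [ENNReal.tsum_mul_left]
    _ ≤ ∑' b : u, 8 ^ n * ∫⁻ y in Metric.closedBall (b : Eu n) ((2 : ℝ) ^ i b), f y :=
        ENNReal.tsum_le_tsum fun b => h2 b b.2
    _ = 8 ^ n * ∑' b : u, ∫⁻ y in Metric.closedBall (b : Eu n) ((2 : ℝ) ^ i b), f y := by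
        rw [ENNReal.tsum_mul_left]
    _ = 8 ^ n * ∫⁻ y in ⋃ b ∈ u, Metric.closedBall (b : Eu n) ((2 : ℝ) ^ i b), f y := by
        rw [lintegral_biUnion huc (fun b _ => Metric.isClosed_closedBall.measurableSet) hdisj]
    _ ≤ 8 ^ n * ∫⁻ x, f x := by
        gcongr
        exact Measure.restrict_le_self

/-- Weak type `(1,1)` for all radii, by monotone convergence in the bound on the radii. -/
lemma hl_weak {n : ℕ} (f : Eu n → ℝ≥0∞) (lam : ℝ≥0∞) :
    lam * volume {x | lam < hlM f x} ≤ 8 ^ n * ∫⁻ x, f x := by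
  have hU : {x : Eu n | lam < hlM f x} =
      ⋃ I : ℕ, {x | ∃ i : ℤ, i ≤ (I : ℤ) ∧ lam < hlAvg i f x} := by
    ext x
    simp only [Set.mem_ofPred_eq, Set.mem_iUnion, hlM, lt_iSup_iff]
    constructor
    · rintro ⟨i, hi⟩
      exact ⟨i.toNat, i, Int.self_le_toNat i, hi⟩
    · rintro ⟨I, i, -, hi⟩
      exact ⟨i, hi⟩
  have hmono : Monotone fun I : ℕ => {x : Eu n | ∃ i : ℤ, i ≤ (I : ℤ) ∧ lam < hlAvg i f x} := by
    intro I J hIJ x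
    rintro ⟨i, hi, h⟩
    exact ⟨i, hi.trans (by exact_mod_cast hIJ), h⟩
  rw [hU, hmono.directed_le.measure_iUnion, ENNReal.mul_iSup]
  exact iSup_le fun I => hl_weak_aux f lam I

lemma hlAvg_const_le {n : ℕ} (i : ℤ) (f : Eu n → ℝ≥0∞) (a : ℝ≥0∞) (h : ∀ x, f x ≤ a) (x : Eu n) :
    hlAvg i f x ≤ 2 ^ n * a := by
  have hpos : (0 : ℝ) < 2 ^ i := by positivity
  have hne : ENNReal.ofReal (((2 : ℝ) ^ i) ^ n) ≠ 0 := by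
    simpa using pow_pos hpos n
  calc hlAvg i f x ≤ (ENNReal.ofReal (((2 : ℝ) ^ i) ^ n))⁻¹ *
        ∫⁻ y in Metric.closedBall x ((2 : ℝ) ^ i), a := by
        unfold hlAvg; gcongr with y; exact h y
    _ = 2 ^ n * a := by
        rw [setLIntegral_const, vol_closedBall _ hpos.le, mul_pow,
          ENNReal.ofReal_mul (by positivity), ENNReal.ofReal_pow (p := 2) (by norm_num)]
        rw [mul_comm a, mul_assoc, mul_left_comm, ← mul_assoc _ _ a,
          ENNReal.inv_mul_cancel hne ENNReal.ofReal_ne_top]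
        norm_num

/-- The weak type estimate localised to the set where `f` is large. -/
lemma hl_weak_trunc {n : ℕ} (f : Eu n → ℝ≥0∞) (hf : Measurable f) (a : ℝ≥0∞) :
    a * volume {x | 2 ^ (n + 1) * a < hlM f x} ≤ 8 ^ n * ∫⁻ x in {x | a < f x}, f x := by
  have hm : MeasurableSet {x | a < f x} := measurableSet_lt measurable_const hf
  rw [← lintegral_indicator hm]
  refine le_trans ?_ (hl_weak _ a)
  refine mul_le_mul_right (measure_mono fun x hx => ?_) _
  simp only [hlM, lt_iSup_iff, Set.mem_ofPred_eq] at hx ⊢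
  obtain ⟨i, hi⟩ := hx
  refine ⟨i, ?_⟩
  -- The part of `f` below the level `a` contributes at most `2 ^ n * a` to the average.
  have hfle : hlAvg i f x ≤ hlAvg i ({x | a < f x}.indicator f) x +
      hlAvg i ({x | a < f x}ᶜ.indicator f) x := by
    unfold hlAvg
    rw [← mul_add, ← lintegral_add_left (hf.indicator hm)]
    gcongr with y
    exact le_of_eq (congrFun (Set.indicator_self_add_compl {x | a < f x} f) y).symm
  have hb : hlAvg i ({x | a < f x}ᶜ.indicator f) x ≤ 2 ^ n * a := by
    refine hlAvg_const_le i _ a (fun y => ?_) x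
    refine Set.indicator_le' (fun y hy => not_lt.mp hy) (fun _ _ => zero_le) y
  by_contra hcon
  push Not at hcon
  have h3 : hlAvg i f x ≤ a + 2 ^ n * a := hfle.trans (add_le_add hcon hb)
  have h4 : a + 2 ^ n * a ≤ 2 ^ (n + 1) * a := by
    rw [pow_succ, mul_two, add_mul]
    gcongr
    exact le_mul_of_one_le_left (zero_le) (one_le_pow₀ (by norm_num))
  exact absurd (hi.trans_le (h3.trans h4)) (lt_irrefl _)

lemma hlM_measurable {n : ℕ} (f : Eu n → ℝ≥0∞) (hf : Measurable f) : Measurable (hlM f) := by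
  refine Measurable.iSup fun i => Measurable.const_mul ?_ _
  have : ∀ x : Eu n, ∫⁻ y in Metric.closedBall x ((2 : ℝ) ^ i), f y =
      ∫⁻ y, {z : Eu n × Eu n | dist z.2 z.1 ≤ (2 : ℝ) ^ i}.indicator (fun z => f z.2) (x, y) := by
    intro x
    rw [← lintegral_indicator Metric.isClosed_closedBall.measurableSet]
    rfl
  simp_rw [this]
  refine Measurable.lintegral_prod_right' (f := {z : Eu n × Eu n |
    dist z.2 z.1 ≤ (2 : ℝ) ^ i}.indicator (fun z => f z.2)) ?_
  refine (hf.comp measurable_snd).indicator ?_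
  exact measurableSet_le (measurable_snd.dist measurable_fst) measurable_const

/-- Upper half of the dyadic layer-cake decomposition of `z ^ a`, by a geometric series. -/
lemma zpow_tsum_le (z : ℝ≥0∞) (a : ℝ) (ha : 0 < a) :
    ∑' m : ℤ, (if (2 : ℝ≥0∞) ^ m < z then ((2 : ℝ≥0∞) ^ m) ^ a else 0) ≤
      (1 - 2 ^ (-a))⁻¹ * z ^ a := by
  have hone : (1 - (2 : ℝ≥0∞) ^ (-a))⁻¹ ≠ 0 := by
    refine ENNReal.inv_ne_zero.2 (ne_top_of_le_ne_top ENNReal.one_ne_top tsub_le_self)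
  rcases eq_or_ne z 0 with rfl | h0
  · simp
  rcases eq_or_ne z ∞ with rfl | htop
  · rw [ENNReal.top_rpow_of_pos ha, ENNReal.mul_top hone]; exact le_top
  obtain ⟨M, hM, hM'⟩ := ENNReal.exists_mem_Ioc_zpow h0 htop (y := 2) (by norm_num) (by norm_num)
  have hinj : Function.Injective (fun l : ℕ => M - (l : ℤ)) := by
    intro a b h; simpa using h
  have hsupp : Function.support (fun m : ℤ => (if (2 : ℝ≥0∞) ^ m < z then ((2 : ℝ≥0∞) ^ m) ^ a else 0))
      ⊆ Set.range (fun l : ℕ => M - (l : ℤ)) := by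
    intro m hm
    have hlt : (2 : ℝ≥0∞) ^ m < z := by
      by_contra hc
      simp [hc] at hm
    have : m < M + 1 := by
      by_contra hc
      push Not at hc
      exact absurd (hlt.trans_le hM') (not_lt.2 (ENNReal.zpow_le_of_le (by norm_num) hc))
    exact ⟨(M - m).toNat, by simp only; omega⟩
  rw [← hinj.tsum_eq hsupp]
  calc ∑' l : ℕ, (if (2 : ℝ≥0∞) ^ (M - (l : ℤ)) < z then ((2 : ℝ≥0∞) ^ (M - (l : ℤ))) ^ a else 0)
      ≤ ∑' l : ℕ, ((2 : ℝ≥0∞) ^ (-a)) ^ l * z ^ a := by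
        refine ENNReal.tsum_le_tsum fun l => ?_
        split_ifs
        · have : (2 : ℝ≥0∞) ^ (M - (l : ℤ)) = 2 ^ (-(l : ℝ)) * 2 ^ M := by
            rw [ENNReal.zpow_sub (by norm_num) (by norm_num), mul_comm, ENNReal.rpow_neg]
            simp
          rw [this, ENNReal.mul_rpow_of_nonneg _ _ ha.le, ← ENNReal.rpow_mul,
            ← ENNReal.rpow_natCast, ← ENNReal.rpow_mul]
          rw [show -(l : ℝ) * a = -a * l by ring]
          exact mul_le_mul_right (ENNReal.rpow_le_rpow hM.le ha.le) _
        · exact zero_le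
    _ = (1 - 2 ^ (-a))⁻¹ * z ^ a := by
        rw [ENNReal.tsum_mul_right, ENNReal.tsum_geometric]

/-- Lower half of the dyadic layer-cake decomposition: the largest power of `2` below `z` already
suffices. -/
lemma rpow_le_zpow_tsum (z : ℝ≥0∞) (a : ℝ) (ha : 0 < a) :
    z ^ a ≤ 2 ^ a * ∑' m : ℤ, (if (2 : ℝ≥0∞) ^ m < z then ((2 : ℝ≥0∞) ^ m) ^ a else 0) := by
  rcases eq_or_ne z 0 with rfl | h0
  · simp [ha]
  rcases eq_or_ne z ∞ with rfl | htop
  · have : ∀ l : ℕ, (l : ℝ≥0∞) ≤ ∑' m : ℤ,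
        (if (2 : ℝ≥0∞) ^ m < ∞ then ((2 : ℝ≥0∞) ^ m) ^ a else 0) := by
      intro l
      calc (l : ℝ≥0∞) = ∑ k ∈ Finset.range l, 1 := by simp
        _ ≤ ∑ k ∈ Finset.range l, (if (2 : ℝ≥0∞) ^ (k : ℤ) < ∞ then ((2 : ℝ≥0∞) ^ (k : ℤ)) ^ a
              else 0) := by
            refine Finset.sum_le_sum fun k _ => ?_
            rw [if_pos (by simp)]
            refine ENNReal.one_le_rpow ?_ ha
            simpa using one_le_pow₀ (M₀ := ℝ≥0∞) (by norm_num) 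
        _ = ∑ m ∈ (Finset.range l).map ⟨fun k : ℕ => (k : ℤ), Nat.cast_injective⟩,
              (if (2 : ℝ≥0∞) ^ m < ∞ then ((2 : ℝ≥0∞) ^ m) ^ a else 0) := by
            rw [Finset.sum_map]; rfl
        _ ≤ _ := ENNReal.sum_le_tsum _
    rw [ENNReal.eq_top_of_forall_nnreal_le (fun r => ((by exact_mod_cast Nat.le_ceil r : (r : ℝ≥0∞) ≤ (⌈r⌉₊ : ℝ≥0∞))).trans (this _)), ENNReal.mul_top (by simp)]
    exact le_top
  obtain ⟨M, hM, hM'⟩ := ENNReal.exists_mem_Ioc_zpow h0 htop (y := 2) (by norm_num) (by norm_num)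
  calc z ^ a ≤ (2 ^ (M + 1)) ^ a := by gcongr
    _ = 2 ^ a * (2 ^ M) ^ a := by
      rw [ENNReal.zpow_add (by norm_num) (by norm_num), ENNReal.mul_rpow_of_nonneg _ _ ha.le,
        mul_comm, zpow_one]
    _ ≤ _ := by
      gcongr
      refine le_trans ?_ (ENNReal.le_tsum M)
      simp [hM]

/-- The Hardy–Littlewood maximal theorem in `L_t`, `t > 1`. -/
lemma hl_strong (n : ℕ) (t : ℝ) (ht : 1 < t) : ∃ C : ℝ≥0∞, C ≠ ∞ ∧
    ∀ f : Eu n → ℝ≥0∞, Measurable f → ∫⁻ x, hlM f x ^ t ≤ C * ∫⁻ x, f x ^ t := by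
  have ht0 : 0 < t := by linarith
  refine ⟨(2 ^ (n + 1)) ^ t * (2 ^ t * (8 ^ n * (1 - 2 ^ (-(t - 1)))⁻¹)), ?_, fun f hf => ?_⟩
  · refine ENNReal.mul_ne_top (ENNReal.rpow_ne_top_of_nonneg ht0.le (by simp))
      (ENNReal.mul_ne_top (by simp) (ENNReal.mul_ne_top (by simp) ?_))
    refine ENNReal.inv_ne_top.2 (tsub_pos_of_lt ?_).ne'
    refine ENNReal.rpow_lt_one_of_one_lt_of_neg (by norm_num) (by linarith)
  have hM := hlM_measurable f hf
  have hset : ∀ m : ℤ, MeasurableSet {x | (2 : ℝ≥0∞) ^ (n + 1) * 2 ^ m < hlM f x} := fun m =>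
    measurableSet_lt measurable_const hM
  have hset' : ∀ m : ℤ, MeasurableSet {x | (2 : ℝ≥0∞) ^ m < f x} := fun m =>
    measurableSet_lt measurable_const hf
  -- The factor `2 ^ (n + 1)` matches the levels to those of `hl_weak_trunc`.
  have hpt : ∀ x, hlM f x ^ t ≤ (2 ^ (n + 1)) ^ t * (2 ^ t * ∑' m : ℤ,
      {x | (2 : ℝ≥0∞) ^ (n + 1) * 2 ^ m < hlM f x}.indicator (fun _ => ((2 : ℝ≥0∞) ^ m) ^ t) x) := by
    intro x
    have h1 := rpow_le_zpow_tsum (hlM f x / 2 ^ (n + 1)) t ht0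
    rw [ENNReal.div_rpow_of_nonneg _ _ ht0.le, ENNReal.div_le_iff_le_mul (by simp) (by simp)] at h1
    rw [mul_comm]
    refine h1.trans_eq ?_
    congr 2
    refine tsum_congr fun m => ?_
    simp only [Set.indicator, Set.mem_ofPred_eq]
    congr 1
    rw [ENNReal.lt_div_iff_mul_lt (by simp) (by simp), mul_comm]
  have hz : ∀ m : ℤ, (2 : ℝ≥0∞) ^ m ≠ ∞ := fun m => (ENNReal.zpow_lt_top (by norm_num) (by norm_num) m).ne
  have hz0 : ∀ m : ℤ, (2 : ℝ≥0∞) ^ m ≠ 0 := fun m => (ENNReal.zpow_pos (by norm_num) (by norm_num) m).ne'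
  have hterm : ∀ m : ℤ, ((2 : ℝ≥0∞) ^ m) ^ t * volume {x | (2 : ℝ≥0∞) ^ (n + 1) * 2 ^ m < hlM f x} ≤
      8 ^ n * ∫⁻ x, {x | (2 : ℝ≥0∞) ^ m < f x}.indicator
        (fun x => ((2 : ℝ≥0∞) ^ m) ^ (t - 1) * f x) x := by
    intro m
    rw [lintegral_indicator (hset' m), lintegral_const_mul _ hf, mul_left_comm]
    have e : ((2 : ℝ≥0∞) ^ m) ^ t = ((2 : ℝ≥0∞) ^ m) ^ (t - 1) * 2 ^ m := by
      conv_rhs => rw [← ENNReal.rpow_one ((2 : ℝ≥0∞) ^ m), ← ENNReal.rpow_mul,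
        ← ENNReal.rpow_add _ _ (hz0 m) (hz m)]
      congr 1; ring
    rw [e, mul_assoc]
    refine mul_le_mul_right ?_ _
    exact hl_weak_trunc f hf _
  calc ∫⁻ x, hlM f x ^ t ≤ ∫⁻ x, (2 ^ (n + 1)) ^ t * (2 ^ t * ∑' m : ℤ,
      {x | (2 : ℝ≥0∞) ^ (n + 1) * 2 ^ m < hlM f x}.indicator (fun _ => ((2 : ℝ≥0∞) ^ m) ^ t) x) :=
        lintegral_mono hpt
    _ = (2 ^ (n + 1)) ^ t * (2 ^ t * ∑' m : ℤ, ((2 : ℝ≥0∞) ^ m) ^ t *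
          volume {x | (2 : ℝ≥0∞) ^ (n + 1) * 2 ^ m < hlM f x}) := by
        have hmi : ∀ m : ℤ, Measurable ({x | (2 : ℝ≥0∞) ^ (n + 1) * 2 ^ m < hlM f x}.indicator
          (fun _ => ((2 : ℝ≥0∞) ^ m) ^ t)) := fun m => measurable_const.indicator (hset m)
        rw [lintegral_const_mul _ ((Measurable.tsum hmi).const_mul _),
          lintegral_const_mul _ (Measurable.tsum hmi),
          lintegral_tsum fun m => (hmi m).aemeasurable]
        congr 3
        funext m
        rw [lintegral_indicator (hset m), setLIntegral_const]
    _ ≤ (2 ^ (n + 1)) ^ t * (2 ^ t * ∑' m : ℤ, 8 ^ n *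
          ∫⁻ x, {x | (2 : ℝ≥0∞) ^ m < f x}.indicator
            (fun x => ((2 : ℝ≥0∞) ^ m) ^ (t - 1) * f x) x) := by
        refine mul_le_mul_right (mul_le_mul_right (ENNReal.tsum_le_tsum hterm) _) _
    _ = (2 ^ (n + 1)) ^ t * (2 ^ t * (8 ^ n *
          ∫⁻ x, ∑' m : ℤ, {x | (2 : ℝ≥0∞) ^ m < f x}.indicator
            (fun x => ((2 : ℝ≥0∞) ^ m) ^ (t - 1) * f x) x)) := by
        rw [ENNReal.tsum_mul_left, lintegral_tsum]
        exact fun m => ((hf.const_mul _).indicator (hset' m)).aemeasurable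
    _ ≤ (2 ^ (n + 1)) ^ t * (2 ^ t * (8 ^ n *
          ∫⁻ x, (1 - 2 ^ (-(t - 1)))⁻¹ * f x ^ t)) := by
        gcongr with x
        have : ∀ m : ℤ, {x | (2 : ℝ≥0∞) ^ m < f x}.indicator
            (fun x => ((2 : ℝ≥0∞) ^ m) ^ (t - 1) * f x) x =
            (if (2 : ℝ≥0∞) ^ m < f x then ((2 : ℝ≥0∞) ^ m) ^ (t - 1) else 0) * f x := by
          intro m
          simp only [Set.indicator, Set.mem_ofPred_eq]
          split_ifs <;> simp
        simp_rw [this]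
        rw [ENNReal.tsum_mul_right]
        calc _ ≤ (1 - 2 ^ (-(t - 1)))⁻¹ * f x ^ (t - 1) * f x := by
              gcongr
              exact zpow_tsum_le _ _ (by linarith)
          _ = (1 - 2 ^ (-(t - 1)))⁻¹ * f x ^ t := by
              rw [mul_assoc]
              congr 1
              conv_lhs => rw [← ENNReal.rpow_one (f x), ← ENNReal.rpow_mul,
                ← ENNReal.rpow_add_of_nonneg _ _ (by linarith) (by norm_num)]
              congr 1; ring
    _ = _ := by
        rw [lintegral_const_mul _ (hf.pow_const _)]
        ring

/-! ### Rescaled polynomially decaying kernels -/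

/-- The kernel `2^{kn} (1 + 2^k |z|)^{-a}` at scale `2^{-k}`. -/
def peK {n : ℕ} (a : ℝ) (k : ℕ) (z : Eu n) : ℝ≥0∞ :=
  ENNReal.ofReal (((2 : ℝ) ^ k) ^ n * (1 + 2 ^ k * ‖z‖) ^ (-a))

/-- Convolution of a nonnegative function with `peK a k`. -/
def kc {n : ℕ} (a : ℝ) (k : ℕ) (f : Eu n → ℝ≥0∞) (x : Eu n) : ℝ≥0∞ :=
  ∫⁻ y, peK a k (x - y) * f y

lemma peK_measurable {n : ℕ} (a : ℝ) (k : ℕ) : Measurable (peK (n := n) a k) := by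
  unfold peK; fun_prop

lemma peK_neg {n : ℕ} (a : ℝ) (k : ℕ) (z : Eu n) : peK a k (-z) = peK a k z := by
  simp [peK]

lemma peK_sub_comm {n : ℕ} (a : ℝ) (k : ℕ) (x y : Eu n) : peK a k (x - y) = peK a k (y - x) := by
  rw [← peK_neg, neg_sub]

lemma kc_measurable {n : ℕ} (a : ℝ) (k : ℕ) (f : Eu n → ℝ≥0∞) (hf : Measurable f) :
    Measurable (kc a k f) := by
  refine Measurable.lintegral_prod_right' (f := fun z : Eu n × Eu n => peK a k (z.1 - z.2) * f z.2) ?_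
  exact ((peK_measurable a k).comp (measurable_fst.sub measurable_snd)).mul
    (hf.comp measurable_snd)

lemma kc_mono {n : ℕ} (a : ℝ) (k : ℕ) {f g : Eu n → ℝ≥0∞} (h : ∀ x, f x ≤ g x) (x : Eu n) :
    kc a k f x ≤ kc a k g x := by
  unfold kc; gcongr with y; exact h y

lemma kc_const_mul {n : ℕ} (a : ℝ) (k : ℕ) (c : ℝ≥0∞) (f : Eu n → ℝ≥0∞) (hf : Measurable f)
    (x : Eu n) : kc a k (fun y => c * f y) x = c * kc a k f x := by
  unfold kc
  rw [← lintegral_const_mul]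
  · congr 1; funext y; ring
  · exact ((peK_measurable a k).comp (measurable_const.sub measurable_id)).mul hf

/-- The kernel is a superposition of normalised indicator functions of dyadic cubes. -/
lemma peK_le_tsum {n : ℕ} (a : ℝ) (ha : 0 < a) (k : ℕ) (z : Eu n) :
    peK a k z ≤ ∑' l : ℕ, ENNReal.ofReal (((2 : ℝ) ^ k) ^ n * (2 ^ a * (2 ^ (-a)) ^ l)) *
      (if ‖z‖ ≤ (2 : ℝ) ^ ((l : ℤ) - (k : ℤ)) then 1 else 0) := by
  have hex : ∃ l : ℕ, 2 ^ k * ‖z‖ ≤ (2 : ℝ) ^ l := by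
    obtain ⟨l, hl⟩ := pow_unbounded_of_one_lt (2 ^ k * ‖z‖) (by norm_num : (1 : ℝ) < 2)
    exact ⟨l, hl.le⟩
  classical
  set l := Nat.find hex with hl
  have h1 : 2 ^ k * ‖z‖ ≤ (2 : ℝ) ^ l := Nat.find_spec hex
  have h2 : (2 : ℝ) ^ l / 2 ≤ 1 + 2 ^ k * ‖z‖ := by
    rcases Nat.eq_zero_or_pos l with h0 | h0
    · rw [h0]; have : 0 ≤ 2 ^ k * ‖z‖ := by positivity
      norm_num; linarith
    · have := Nat.find_min hex (m := l - 1) (by omega)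
      push Not at this
      have e : (2 : ℝ) ^ l = 2 ^ (l - 1) * 2 := by
        rw [← pow_succ]; congr 1; omega
      rw [e]; linarith
  refine le_trans ?_ (ENNReal.le_tsum l)
  have h3 : ‖z‖ ≤ (2 : ℝ) ^ ((l : ℤ) - (k : ℤ)) := by
    rw [zpow_sub₀ (by norm_num), zpow_natCast, zpow_natCast, le_div_iff₀ (by positivity)]
    linarith
  rw [if_pos h3, mul_one]
  refine ENNReal.ofReal_le_ofReal ?_
  refine mul_le_mul_of_nonneg_left ?_ (by positivity)
  calc (1 + 2 ^ k * ‖z‖) ^ (-a) ≤ ((2 : ℝ) ^ l / 2) ^ (-a) :=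
        Real.rpow_le_rpow_of_nonpos (by positivity) h2 (by linarith)
    _ = 2 ^ a * (2 ^ (-a)) ^ l := by
        rw [Real.div_rpow (by positivity) (by norm_num), ← Real.rpow_natCast 2 l,
          ← Real.rpow_mul (by norm_num), ← Real.rpow_natCast, ← Real.rpow_mul (by norm_num),
          ← Real.rpow_sub (by norm_num), ← Real.rpow_add (by norm_num)]
        congr 1; ring

/-- For `a > n` the kernels have uniformly bounded mass, and all of the averages `kc a k f` are
dominated by the maximal function; the dyadic cubes contribute a geometric series of ratio `2^{n-a}`. -/
lemma kc_le_hlM (n : ℕ) (a : ℝ) (ha : (n : ℝ) < a) : ∃ C : ℝ≥0∞, C ≠ ∞ ∧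
    (∀ (k : ℕ) (f : Eu n → ℝ≥0∞), Measurable f → ∀ x, kc a k f x ≤ C * hlM f x) ∧
    ∀ k : ℕ, ∫⁻ z, peK (n := n) a k z ≤ C := by
  have ha0 : 0 < a := (Nat.cast_nonneg n).trans_lt ha
  set C0 : ℝ≥0∞ := ENNReal.ofReal (2 ^ a) * (1 - ENNReal.ofReal (2 ^ ((n : ℝ) - a)))⁻¹ with hC0
  have hC0t : C0 ≠ ∞ := by
    refine ENNReal.mul_ne_top ENNReal.ofReal_ne_top (ENNReal.inv_ne_top.2 (tsub_pos_of_lt ?_).ne')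
    rw [ENNReal.ofReal_lt_one]
    exact Real.rpow_lt_one_of_one_lt_of_neg (by norm_num) (by linarith)
  have key : ∀ (k : ℕ) (f : Eu n → ℝ≥0∞), Measurable f → ∀ x, kc a k f x ≤ C0 * hlM f x := by
    intro k f hf x
    have hm : ∀ l : ℕ, Measurable fun y : Eu n =>
        ENNReal.ofReal (((2 : ℝ) ^ k) ^ n * (2 ^ a * (2 ^ (-a)) ^ l)) *
          (Metric.closedBall x ((2 : ℝ) ^ ((l : ℤ) - (k : ℤ)))).indicator f y := fun l =>
      (hf.indicator Metric.isClosed_closedBall.measurableSet).const_mul _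
    calc kc a k f x ≤ ∫⁻ y, ∑' l : ℕ, ENNReal.ofReal (((2 : ℝ) ^ k) ^ n * (2 ^ a * (2 ^ (-a)) ^ l)) *
          (Metric.closedBall x ((2 : ℝ) ^ ((l : ℤ) - (k : ℤ)))).indicator f y := by
          refine lintegral_mono fun y => ?_
          refine (mul_le_mul_left (peK_le_tsum a ha0 k (x - y)) (f y)).trans ?_
          rw [← ENNReal.tsum_mul_right]
          refine ENNReal.tsum_le_tsum fun l => ?_
          rw [mul_assoc]
          refine mul_le_mul_right ?_ _
          simp only [Set.indicator, Metric.mem_closedBall, dist_eq_norm, norm_sub_rev y x]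
          split_ifs <;> simp
      _ = ∑' l : ℕ, ENNReal.ofReal (((2 : ℝ) ^ k) ^ n * (2 ^ a * (2 ^ (-a)) ^ l)) *
          ∫⁻ y in Metric.closedBall x ((2 : ℝ) ^ ((l : ℤ) - (k : ℤ))), f y := by
          rw [lintegral_tsum fun l => (hm l).aemeasurable]
          refine tsum_congr fun l => ?_
          rw [lintegral_const_mul _ (hf.indicator Metric.isClosed_closedBall.measurableSet),
            lintegral_indicator Metric.isClosed_closedBall.measurableSet]
      _ ≤ ∑' l : ℕ, ENNReal.ofReal (2 ^ a) * ENNReal.ofReal (2 ^ ((n : ℝ) - a)) ^ l * hlM f x := by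
          refine ENNReal.tsum_le_tsum fun l => ?_
          have hp : (0 : ℝ) < ((2 : ℝ) ^ ((l : ℤ) - (k : ℤ))) ^ n := by positivity
          have h1 : ∫⁻ y in Metric.closedBall x ((2 : ℝ) ^ ((l : ℤ) - (k : ℤ))), f y ≤
              ENNReal.ofReal (((2 : ℝ) ^ ((l : ℤ) - (k : ℤ))) ^ n) * hlM f x := by
            rw [← ENNReal.div_le_iff' (by simpa using hp) ENNReal.ofReal_ne_top,
              ENNReal.div_eq_inv_mul]
            exact le_iSup (fun i => hlAvg i f x) _
          refine (mul_le_mul_right h1 _).trans ?_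
          rw [← mul_assoc, ← ENNReal.ofReal_mul (by positivity), ← ENNReal.ofReal_pow (by positivity),
            ← ENNReal.ofReal_mul (by positivity)]
          refine mul_le_mul_left (ENNReal.ofReal_le_ofReal (le_of_eq ?_)) _
          have e1 : ((2 : ℝ) ^ k) ^ n * ((2 : ℝ) ^ ((l : ℤ) - (k : ℤ))) ^ n = (2 ^ (n : ℝ)) ^ l := by
            rw [← mul_pow, zpow_sub₀ (by norm_num), zpow_natCast, zpow_natCast,
              mul_div_cancel₀ _ (by positivity), ← pow_mul, Real.rpow_natCast, ← pow_mul, mul_comm]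
          have e2 : ((2 : ℝ) ^ ((n : ℝ) - a)) = 2 ^ (n : ℝ) * 2 ^ (-a) := by
            rw [← Real.rpow_add (by norm_num)]; rfl
          rw [e2, mul_pow, ← e1]; ring
      _ = C0 * hlM f x := by
          rw [ENNReal.tsum_mul_right, ENNReal.tsum_mul_left, ENNReal.tsum_geometric]
  have hge : C0 ≤ C0 * 2 ^ n := le_mul_of_one_le_right zero_le (one_le_pow₀ (by norm_num))
  refine ⟨C0 * 2 ^ n, ENNReal.mul_ne_top hC0t (by simp), fun k f hf x => ?_, fun k => ?_⟩
  · exact (key k f hf x).trans (mul_le_mul_left hge _)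
  · have h1 := key k (fun _ => 1) measurable_const 0
    have h2 : kc a k (fun _ => 1) (0 : Eu n) = ∫⁻ z, peK (n := n) a k z := by
      simp [kc, peK_neg]
    rw [h2] at h1
    refine h1.trans (mul_le_mul_right ?_ _)
    refine iSup_le fun i => ?_
    simpa using hlAvg_const_le (n := n) i (fun _ => 1) 1 (fun _ => le_rfl) 0

lemma kc_eq_withDensity {n : ℕ} (a : ℝ) (k : ℕ) (f : Eu n → ℝ≥0∞) (hf : Measurable f) (x : Eu n) :
    kc a k f x = ∫⁻ y, f y ∂(volume.withDensity fun y => peK a k (x - y)) := by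
  have hm : Measurable fun y => peK a k (x - y) :=
    (peK_measurable a k).comp (measurable_const.sub measurable_id)
  rw [lintegral_withDensity_eq_lintegral_mul _ hm hf]
  rfl

/-- Hölder's inequality for the measure `K(x - y) dy`. -/
lemma kc_holder {n : ℕ} (a : ℝ) (k : ℕ) {P P' : ℝ} (hP : P.HolderConjugate P')
    (f g : Eu n → ℝ≥0∞) (hf : Measurable f) (hg : Measurable g) (x : Eu n) :
    kc a k (fun y => f y * g y) x ≤
      (kc a k (fun y => f y ^ P) x) ^ (1 / P) * (kc a k (fun y => g y ^ P') x) ^ (1 / P') := by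
  rw [kc_eq_withDensity a k (fun y => f y * g y) (hf.mul hg), kc_eq_withDensity a k _ (hf.pow_const _),
    kc_eq_withDensity a k _ (hg.pow_const _)]
  exact ENNReal.lintegral_mul_le_Lp_mul_Lq _ hP hf.aemeasurable hg.aemeasurable

lemma kc_one {n : ℕ} (a : ℝ) (k : ℕ) (x : Eu n) : kc a k (fun _ => 1) x = ∫⁻ z, peK (n := n) a k z := by
  unfold kc
  simp only [mul_one]
  exact lintegral_sub_left_eq_self (fun y => peK a k y) x

/-- Jensen's inequality for the measure `K(x - y) dy`, whose mass is at most `C`. -/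
lemma kc_rpow_le {n : ℕ} (a : ℝ) (k : ℕ) {P : ℝ} (hP : 1 ≤ P) (C : ℝ≥0∞)
    (hC : ∫⁻ z, peK (n := n) a k z ≤ C)
    (f : Eu n → ℝ≥0∞) (hf : Measurable f) (x : Eu n) :
    (kc a k f x) ^ P ≤ C ^ (P - 1) * kc a k (fun y => f y ^ P) x := by
  rcases hP.eq_or_lt with rfl | hP1
  · simp
  have hc := Real.HolderConjugate.conjExponent hP1
  have h := kc_holder a k hc f (fun _ => 1) hf measurable_const x
  simp only [mul_one, ENNReal.one_rpow, kc_one] at h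
  have hP0 : 0 < P := by linarith
  calc (kc a k f x) ^ P ≤ ((kc a k (fun y => f y ^ P) x) ^ (1 / P) *
        C ^ (1 / P.conjExponent)) ^ P := by
        have : 0 ≤ 1 / P.conjExponent := one_div_nonneg.2 hc.symm.nonneg
        gcongr
        exact h.trans (by gcongr)
    _ = C ^ (P - 1) * kc a k (fun y => f y ^ P) x := by
        rw [ENNReal.mul_rpow_of_nonneg _ _ hP0.le, ← ENNReal.rpow_mul, ← ENNReal.rpow_mul,
          one_div_mul_cancel hP0.ne', ENNReal.rpow_one, mul_comm]
        congr 2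
        rw [Real.conjExponent]
        field_simp

/-- The kernel is even, so the averaging operator is symmetric. -/
lemma kc_symm {n : ℕ} (a : ℝ) (k : ℕ) (f g : Eu n → ℝ≥0∞) (hf : Measurable f) (hg : Measurable g) :
    ∫⁻ x, kc a k f x * g x = ∫⁻ x, f x * kc a k g x := by
  have hm : Measurable fun z : Eu n × Eu n => peK a k (z.1 - z.2) :=
    (peK_measurable a k).comp (measurable_fst.sub measurable_snd)
  have h1 : ∀ x, kc a k f x * g x = ∫⁻ y, peK a k (x - y) * f y * g x := fun x => by
    rw [lintegral_mul_const]
    · rfl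
    · exact ((peK_measurable a k).comp (measurable_const.sub measurable_id)).mul hf
  have h2 : ∀ y, f y * kc a k g y = ∫⁻ x, peK a k (x - y) * f y * g x := fun y => by
    unfold kc
    rw [← lintegral_const_mul]
    · refine lintegral_congr fun x => ?_
      rw [peK_sub_comm]; ring
    · exact ((peK_measurable a k).comp (measurable_const.sub measurable_id)).mul hg
  simp_rw [h1, h2]
  rw [lintegral_lintegral_swap]
  exact ((hm.mul (hf.comp measurable_snd)).mul (hg.comp measurable_fst)).aemeasurable

lemma lintegral_kc {n : ℕ} (a : ℝ) (k : ℕ) (f : Eu n → ℝ≥0∞) (hf : Measurable f) :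
    ∫⁻ x, kc a k f x = (∫⁻ z, peK (n := n) a k z) * ∫⁻ x, f x := by
  have h := kc_symm a k f (fun _ => 1) hf measurable_const
  simp only [mul_one, kc_one] at h
  rw [h, lintegral_mul_const _ hf, mul_comm]

/-! ### The vector-valued maximal inequality for the rescaled kernels -/

/-- Converse Hölder inequality for nonnegative functions: no a priori finiteness of
`∫ H ^ R` is needed, since bounded truncations of `H` on balls can be tested. -/
lemma lintegral_rpow_le_of_dual {n : ℕ} {R R' : ℝ} (hR : R.HolderConjugate R')
    (H : Eu n → ℝ≥0∞) (hH : Measurable H) (K : ℝ≥0∞)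
    (h : ∀ g : Eu n → ℝ≥0∞, Measurable g →
      ∫⁻ x, H x * g x ≤ K * (∫⁻ x, g x ^ R') ^ (1 / R')) :
    ∫⁻ x, H x ^ R ≤ K ^ R := by
  have hR0 : 0 < R := hR.pos
  have hR'0 : 0 < R' := hR.symm.pos
  have hR1 : 1 < R := hR.lt
  set hN : ℕ → Eu n → ℝ≥0∞ := fun N =>
    (Metric.closedBall (0 : Eu n) N).indicator fun x => min (H x) N with hNdef
  have hmeas : ∀ N, Measurable (hN N) := fun N =>
    (hH.min measurable_const).indicator Metric.isClosed_closedBall.measurableSet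
  have hle : ∀ N x, hN N x ≤ H x := fun N x =>
    (Set.indicator_le' (fun _ _ => min_le_left _ _) (fun _ _ => zero_le)) x
  have hsup : ∀ x, H x ^ R = ⨆ N, hN N x ^ R := by
    intro x
    apply le_antisymm
    · have hi : (⨆ N, hN N x) ^ R = ⨆ N, hN N x ^ R :=
        (ENNReal.orderIsoRpow R hR0).map_iSup fun N => hN N x
      rw [← hi]
      refine ENNReal.rpow_le_rpow ?_ hR0.le
      refine le_of_forall_lt fun c hc => ?_
      obtain ⟨N1, hN1⟩ := ENNReal.exists_nat_gt (hc.ne_top)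
      obtain ⟨N2, hN2⟩ := exists_nat_ge ‖x‖
      refine lt_of_lt_of_le ?_ (le_iSup (fun N => hN N x) (max N1 N2))
      have hx : x ∈ Metric.closedBall (0 : Eu n) (max N1 N2 : ℕ) := by
        rw [mem_closedBall_zero_iff]
        exact hN2.trans (by exact_mod_cast le_max_right _ _)
      simp only [hNdef]
      rw [Set.indicator_of_mem hx]
      exact lt_min hc (hN1.trans_le (by exact_mod_cast le_max_left _ _))
    · exact iSup_le fun N => by gcongr; exact hle N x
  have hmono : Monotone fun N x => hN N x ^ R := by
    intro N M hNM x
    simp only [hNdef]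
    gcongr
    refine (Set.indicator_le_indicator_of_subset
      (Metric.closedBall_subset_closedBall (Nat.cast_le.2 hNM)) (fun _ => zero_le) x).trans ?_
    refine Set.indicator_le_indicator ?_
    gcongr
  simp_rw [hsup]
  rw [lintegral_iSup (fun N => (hmeas N).pow_const _) hmono]
  refine iSup_le fun N => ?_
  set X := ∫⁻ x, hN N x ^ R with hX
  have hXfin : X ≠ ∞ := by
    have : X ≤ ∫⁻ x, (Metric.closedBall (0 : Eu n) N).indicator (fun _ => (N : ℝ≥0∞) ^ R) x := by
      refine lintegral_mono fun x => ?_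
      simp only [hNdef, Set.indicator]
      split_ifs
      · gcongr; exact min_le_right _ _
      · simp [hR0]
    refine ne_top_of_le_ne_top ?_ this
    rw [lintegral_indicator Metric.isClosed_closedBall.measurableSet, setLIntegral_const]
    refine ENNReal.mul_ne_top (ENNReal.rpow_ne_top_of_nonneg hR0.le (by simp)) ?_
    exact (measure_closedBall_lt_top).ne
  have h1 : X ≤ K * X ^ (1 / R') := by
    -- The extremal test function in Hölder's inequality, for the truncation of `H`.
    have := h (fun x => hN N x ^ (R - 1)) ((hmeas N).pow_const _)
    have e : ∀ x, (hN N x ^ (R - 1)) ^ R' = hN N x ^ R := fun x => by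
      rw [← ENNReal.rpow_mul, hR.sub_one_mul_conj]
    simp_rw [e] at this
    refine le_trans ?_ this
    refine lintegral_mono fun x => ?_
    calc hN N x ^ R = hN N x * hN N x ^ (R - 1) := by
          conv_rhs => rw [← ENNReal.rpow_one (hN N x), ← ENNReal.rpow_mul,
            ← ENNReal.rpow_add_of_nonneg _ _ (by norm_num) (by linarith)]
          congr 1; ring
      _ ≤ _ := by gcongr; exact hle N x
  rcases eq_or_ne X 0 with h0 | h0
  · rw [h0]; exact zero_le
  have h2 : X ^ (1 / R) ≤ K := by
    have e : X = X ^ (1 / R) * X ^ (1 / R') := by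
      rw [← ENNReal.rpow_add _ _ h0 hXfin, one_div, one_div, hR.inv_add_inv_eq_one,
        ENNReal.rpow_one]
    conv_lhs at h1 => rw [e]
    refine (ENNReal.mul_le_mul_iff_left ?_ ?_).1 h1
    · simp [h0, hXfin]
    · exact ENNReal.rpow_ne_top_of_nonneg (one_div_nonneg.2 hR'0.le) hXfin
  calc X = (X ^ (1 / R)) ^ R := by
        rw [← ENNReal.rpow_mul, one_div_mul_cancel hR0.ne', ENNReal.rpow_one]
    _ ≤ K ^ R := by gcongr

section

variable {n : ℕ} {a : ℝ}

lemma vec_sum_measurable (Q : ℝ) (f : ℕ → Eu n → ℝ≥0∞) (hf : ∀ k, Measurable (f k)) :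
    Measurable fun x => ∑' k, f k x ^ Q :=
  Measurable.tsum fun k => (hf k).pow_const _

/-- The case `P > Q`: by duality the kernels are moved onto the test function, where the scalar
maximal theorem applies. -/
lemma vec_gt (ha : (n : ℝ) < a) (P Q : ℝ) (hQ : 1 ≤ Q) (hPQ : Q < P) : ∃ C : ℝ≥0∞, C ≠ ∞ ∧
    ∀ f : ℕ → Eu n → ℝ≥0∞, (∀ k, Measurable (f k)) →
      ∫⁻ x, (∑' k, kc a k (f k) x ^ Q) ^ (P / Q) ≤ C * ∫⁻ x, (∑' k, f k x ^ Q) ^ (P / Q) := by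
  have hQ0 : 0 < Q := by linarith
  have hR1 : 1 < P / Q := by rw [lt_div_iff₀ hQ0]; linarith
  have hc := Real.HolderConjugate.conjExponent hR1
  set R := P / Q
  set R' := R.conjExponent
  have hR0 : 0 < R := hc.pos
  have hR'0 : 0 < R' := hc.symm.pos
  obtain ⟨C1, hC1, hk, hkint⟩ := kc_le_hlM n a ha
  obtain ⟨C2, hC2, hM⟩ := hl_strong n R' hc.symm.lt
  set K0 : ℝ≥0∞ := C1 ^ (Q - 1) * (C1 * C2 ^ (1 / R')) with hK0
  have hi' : 0 ≤ 1 / R' := one_div_nonneg.2 hR'0.le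
  have hK0t : K0 ≠ ∞ :=
    ENNReal.mul_ne_top (ENNReal.rpow_ne_top_of_nonneg (by linarith) hC1)
      (ENNReal.mul_ne_top hC1 (ENNReal.rpow_ne_top_of_nonneg hi' hC2))
  refine ⟨K0 ^ R, ENNReal.rpow_ne_top_of_nonneg hR0.le hK0t, fun f hf => ?_⟩
  have hkm : ∀ k, Measurable (kc a k (f k)) := fun k => kc_measurable a k _ (hf k)
  have hfQ : ∀ k, Measurable fun x => f k x ^ Q := fun k => (hf k).pow_const _
  set Φ : Eu n → ℝ≥0∞ := fun x => ∑' k, f k x ^ Q with hΦ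
  have hΦm : Measurable Φ := vec_sum_measurable Q f hf
  have := lintegral_rpow_le_of_dual hc (fun x => ∑' k, kc a k (f k) x ^ Q)
    (vec_sum_measurable Q _ hkm) (K0 * (∫⁻ x, Φ x ^ R) ^ (1 / R)) ?_
  · refine this.trans_eq ?_
    rw [ENNReal.mul_rpow_of_nonneg _ _ hR0.le, ← ENNReal.rpow_mul, one_div_mul_cancel hR0.ne',
      ENNReal.rpow_one]
  intro g hg
  have hgm := hlM_measurable g hg
  calc ∫⁻ x, (∑' k, kc a k (f k) x ^ Q) * g x
      ≤ ∫⁻ x, ∑' k, C1 ^ (Q - 1) * (kc a k (fun y => f k y ^ Q) x * g x) := by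
        refine lintegral_mono fun x => ?_
        rw [← ENNReal.tsum_mul_right]
        refine ENNReal.tsum_le_tsum fun k => ?_
        rw [← mul_assoc]
        exact mul_le_mul_left (kc_rpow_le a k hQ C1 (hkint k) _ (hf k) x) _
    _ = C1 ^ (Q - 1) * ∑' k, ∫⁻ x, f k x ^ Q * kc a k g x := by
        have hm : ∀ k, Measurable fun x => kc a k (fun y => f k y ^ Q) x * g x := fun k =>
          (kc_measurable a k _ (hfQ k)).mul hg
        rw [lintegral_tsum fun k => ((hm k).const_mul _).aemeasurable, ← ENNReal.tsum_mul_left]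
        refine tsum_congr fun k => ?_
        rw [lintegral_const_mul _ (hm k), kc_symm a k _ _ (hfQ k) hg]
    _ ≤ C1 ^ (Q - 1) * ∑' k, ∫⁻ x, f k x ^ Q * (C1 * hlM g x) := by
        refine mul_le_mul_right (ENNReal.tsum_le_tsum fun k => lintegral_mono fun x => ?_) _
        exact mul_le_mul_right (hk k g hg x) _
    _ = C1 ^ (Q - 1) * (C1 * ∫⁻ x, Φ x * hlM g x) := by
        have hm : ∀ k, Measurable fun x => f k x ^ Q * (C1 * hlM g x) := fun k =>
          (hfQ k).mul (hgm.const_mul _)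
        rw [← lintegral_tsum fun k => (hm k).aemeasurable,
          ← lintegral_const_mul _ (show Measurable fun x => Φ x * hlM g x from hΦm.mul hgm)]
        congr 1
        refine lintegral_congr fun x => ?_
        rw [ENNReal.tsum_mul_right]; ring
    _ ≤ C1 ^ (Q - 1) * (C1 * ((∫⁻ x, Φ x ^ R) ^ (1 / R) * (∫⁻ x, hlM g x ^ R') ^ (1 / R'))) := by
        refine mul_le_mul_right (mul_le_mul_right ?_ _) _
        exact ENNReal.lintegral_mul_le_Lp_mul_Lq _ hc hΦm.aemeasurable hgm.aemeasurable
    _ ≤ C1 ^ (Q - 1) * (C1 * ((∫⁻ x, Φ x ^ R) ^ (1 / R) *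
          (C2 * ∫⁻ x, g x ^ R') ^ (1 / R'))) := by
        refine mul_le_mul_right (mul_le_mul_right (mul_le_mul_right ?_ _) _) _
        exact ENNReal.rpow_le_rpow (hM g hg) hi'
    _ = _ := by
        rw [ENNReal.mul_rpow_of_nonneg _ _ hi', hK0]; ring

/-- The case `P = Q`: Jensen's inequality and Fubini's theorem decouple the indices. -/
lemma vec_eq (ha : (n : ℝ) < a) (Q : ℝ) (hQ : 1 ≤ Q) : ∃ C : ℝ≥0∞, C ≠ ∞ ∧
    ∀ f : ℕ → Eu n → ℝ≥0∞, (∀ k, Measurable (f k)) →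
      ∫⁻ x, (∑' k, kc a k (f k) x ^ Q) ≤ C * ∫⁻ x, (∑' k, f k x ^ Q) := by
  obtain ⟨C1, hC1, hk, hkint⟩ := kc_le_hlM n a ha
  refine ⟨C1 ^ (Q - 1) * C1, ENNReal.mul_ne_top (ENNReal.rpow_ne_top_of_nonneg (by linarith) hC1)
    hC1, fun f hf => ?_⟩
  have hfQ : ∀ k, Measurable fun x => f k x ^ Q := fun k => (hf k).pow_const _
  rw [lintegral_tsum fun k => ((kc_measurable a k _ (hf k)).pow_const _).aemeasurable,
    lintegral_tsum fun k => (hfQ k).aemeasurable, ← ENNReal.tsum_mul_left]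
  refine ENNReal.tsum_le_tsum fun k => ?_
  calc ∫⁻ x, kc a k (f k) x ^ Q ≤ ∫⁻ x, C1 ^ (Q - 1) * kc a k (fun y => f k y ^ Q) x :=
        lintegral_mono fun x => kc_rpow_le a k hQ C1 (hkint k) _ (hf k) x
    _ = C1 ^ (Q - 1) * ((∫⁻ z, peK (n := n) a k z) * ∫⁻ x, f k x ^ Q) := by
        rw [lintegral_const_mul _ (kc_measurable a k _ (hfQ k)), lintegral_kc a k _ (hfQ k)]
    _ ≤ _ := by
        rw [mul_assoc]
        gcongr
        exact hkint k

/-- The case `P < Q`. Writing `f_k = (f_k F^{-b}) F^b` with `F = (∑ f_k^Q)^{1/Q}` and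
`b = 1 - P / Q`, Hölder's inequality under the kernels interpolates between the trivial bound for
`P = Q` and the scalar maximal theorem applied to a power of `F`. -/
lemma vec_lt (ha : (n : ℝ) < a) (P Q : ℝ) (hP : 1 < P) (hPQ : P < Q) : ∃ C : ℝ≥0∞, C ≠ ∞ ∧
    ∀ f : ℕ → Eu n → ℝ≥0∞, (∀ k, Measurable (f k)) →
      ∫⁻ x, (∑' k, kc a k (f k) x ^ Q) ^ (P / Q) ≤ C * ∫⁻ x, (∑' k, f k x ^ Q) ^ (P / Q) := by
  have hQ1 : 1 < Q := hP.trans hPQ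
  have hQ0 : 0 < Q := by linarith
  have hP0 : 0 < P := by linarith
  have hd : 0 < Q - P := by linarith
  have hQ10 : 0 < Q - 1 := by linarith
  have hPQ0 : 0 < P / Q := by positivity
  obtain ⟨C1, hC1, hk, hkint⟩ := kc_le_hlM n a ha
  -- With `b = 1 - P / Q` and `Q'` conjugate to `Q`, this is the exponent for which
  -- `(F ^ (b * Q')) ^ t = F ^ P`; it exceeds `1` precisely because `P > 1`.
  set t := (Q - 1) * P / (Q - P) with ht
  have ht1 : 1 < t := by rw [ht, lt_div_iff₀ hd]; nlinarith
  have ht0 : 0 < t := by linarith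
  obtain ⟨C2, hC2, hM⟩ := hl_strong n t ht1
  have hcQ := Real.HolderConjugate.conjExponent hQ1
  set Q' := Q.conjExponent with hQ'
  have hQ'e : Q' = Q / (Q - 1) := rfl
  set b := 1 - P / Q with hb
  have hb0 : 0 < b := by rw [hb, sub_pos, div_lt_one hQ0]; exact hPQ
  -- the Hölder pair `Q / P`, `Q / (Q - P)`
  have hR1 : 1 < Q / P := by rw [lt_div_iff₀ hP0]; linarith
  have hcR := Real.HolderConjugate.conjExponent hR1
  set R' := (Q / P).conjExponent with hR'
  have hR'e : R' = Q / (Q - P) := by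
    rw [hR', Real.conjExponent]; field_simp
  have hR'0 : 0 < R' := by rw [hR'e]; positivity
  set C : ℝ≥0∞ := C1 ^ (P / Q) * (C1 ^ t * C2) ^ (1 / R') with hC
  have hCt : C ≠ ∞ := by
    refine ENNReal.mul_ne_top (ENNReal.rpow_ne_top_of_nonneg hPQ0.le hC1)
      (ENNReal.rpow_ne_top_of_nonneg (one_div_nonneg.2 hR'0.le)
        (ENNReal.mul_ne_top (ENNReal.rpow_ne_top_of_nonneg ht0.le hC1) hC2))
  refine ⟨C + 1, by simp [hCt], fun f hf => ?_⟩
  set Φ : Eu n → ℝ≥0∞ := fun x => ∑' k, f k x ^ Q with hΦ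
  have hΦm : Measurable Φ := vec_sum_measurable Q f hf
  by_cases hfin : ∫⁻ x, Φ x ^ (P / Q) = ∞
  · rw [hfin, ENNReal.mul_top (by simp)]; exact le_top
  set F : Eu n → ℝ≥0∞ := fun x => Φ x ^ (1 / Q) with hF
  have hFm : Measurable F := hΦm.pow_const _
  have hFP : ∀ x, F x ^ P = Φ x ^ (P / Q) := fun x => by
    rw [hF]; simp only; rw [← ENNReal.rpow_mul]; congr 1; ring
  have hFQ : ∀ x, F x ^ Q = Φ x := fun x => by
    rw [hF]; simp only; rw [← ENNReal.rpow_mul, one_div_mul_cancel hQ0.ne', ENNReal.rpow_one]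
  -- The factorization below uses negative powers of `F`, hence needs `F` finite almost everywhere.
  have hFfin : ∀ᵐ x, F x < ∞ := by
    have h1 : ∀ᵐ x, F x ^ P < ∞ := by
      refine ae_lt_top (hFm.pow_const _) ?_
      simpa only [hFP] using hfin
    filter_upwards [h1] with x hx
    exact lt_top_iff_ne_top.2 fun h => by simp [h, hP0] at hx
  have hfF : ∀ k x, f k x ≤ F x := fun k x => by
    have : f k x ^ Q ≤ F x ^ Q := by rw [hFQ]; exact ENNReal.le_tsum k
    exact (ENNReal.rpow_le_rpow_iff hQ0).1 this
  set G : ℕ → Eu n → ℝ≥0∞ := fun k x => f k x * F x ^ (-b) with hG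
  have hGm : ∀ k, Measurable (G k) := fun k => (hf k).mul (hFm.pow_const _)
  set S : Eu n → ℝ≥0∞ := fun x => C1 * hlM (fun y => (F y ^ b) ^ Q') x with hS
  have hFbm : Measurable fun y => (F y ^ b) ^ Q' := (hFm.pow_const _).pow_const _
  have hSm : Measurable S := (hlM_measurable _ hFbm).const_mul _
  have hsplit : ∀ k, ∀ᵐ x, f k x = G k x * F x ^ b := fun k => by
    filter_upwards [hFfin] with x hx
    rcases eq_or_ne (F x) 0 with h0 | h0
    · have : f k x = 0 := le_antisymm (h0 ▸ hfF k x) zero_le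
      simp [hG, this]
    · simp only [hG]
      rw [mul_assoc, ← ENNReal.rpow_add _ _ h0 hx.ne]; simp
  have hstep : ∀ k x, kc a k (f k) x ^ Q ≤ kc a k (fun y => G k y ^ Q) x * S x ^ (Q - 1) := by
    intro k x
    have e : kc a k (f k) x = kc a k (fun y => G k y * F y ^ b) x := by
      refine lintegral_congr_ae ?_
      filter_upwards [hsplit k] with y hy
      rw [hy]
    have h1 := kc_holder a k hcQ (G k) (fun y => F y ^ b) (hGm k) (hFm.pow_const _) x
    rw [← e] at h1
    have hi : 0 ≤ 1 / Q' := one_div_nonneg.2 hcQ.symm.nonneg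
    calc kc a k (f k) x ^ Q ≤ (kc a k (fun y => G k y ^ Q) x ^ (1 / Q) * S x ^ (1 / Q')) ^ Q := by
          gcongr
          refine h1.trans (mul_le_mul_right (ENNReal.rpow_le_rpow ?_ hi) _)
          exact hk k _ hFbm x
      _ = _ := by
          rw [ENNReal.mul_rpow_of_nonneg _ _ hQ0.le, ← ENNReal.rpow_mul, ← ENNReal.rpow_mul,
            one_div_mul_cancel hQ0.ne', ENNReal.rpow_one]
          congr 2
          rw [hQ'e]; field_simp
  have hGQm : ∀ k, Measurable fun y => G k y ^ Q := fun k => (hGm k).pow_const _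
  have hsumG : ∀ x, ∑' k, G k x ^ Q ≤ F x ^ P := by
    intro x
    have : ∑' k, G k x ^ Q = F x ^ Q * (F x ^ (-b)) ^ Q := by
      rw [hFQ, hΦ]; simp only
      rw [← ENNReal.tsum_mul_right]
      refine tsum_congr fun k => ?_
      simp only [hG]; rw [ENNReal.mul_rpow_of_nonneg _ _ hQ0.le]
    rw [this]
    generalize F x = z
    rw [← ENNReal.rpow_mul]
    rcases eq_or_ne z 0 with h0 | h0
    · simp [h0, hQ0]
    rcases eq_or_ne z ∞ with h1 | h1
    · simp [h1, hP0]
    rw [← ENNReal.rpow_add _ _ h0 h1]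
    refine le_of_eq (congrArg _ ?_)
    rw [hb]; field_simp; ring
  have hintG : ∫⁻ x, ∑' k, kc a k (fun y => G k y ^ Q) x ≤ C1 * ∫⁻ x, F x ^ P := by
    rw [lintegral_tsum fun k => (kc_measurable a k _ (hGQm k)).aemeasurable]
    calc ∑' k, ∫⁻ x, kc a k (fun y => G k y ^ Q) x ≤ ∑' k, C1 * ∫⁻ x, G k x ^ Q := by
          refine ENNReal.tsum_le_tsum fun k => ?_
          rw [lintegral_kc a k _ (hGQm k)]
          exact mul_le_mul_left (hkint k) _
      _ = C1 * ∫⁻ x, ∑' k, G k x ^ Q := by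
          rw [ENNReal.tsum_mul_left, lintegral_tsum fun k => (hGQm k).aemeasurable]
      _ ≤ _ := mul_le_mul_right (lintegral_mono hsumG) _
  have hintS : ∫⁻ x, S x ^ t ≤ C1 ^ t * C2 * ∫⁻ x, F x ^ P := by
    calc ∫⁻ x, S x ^ t = C1 ^ t * ∫⁻ x, hlM (fun y => (F y ^ b) ^ Q') x ^ t := by
          rw [← lintegral_const_mul _ ((hlM_measurable _ hFbm).pow_const _)]
          refine lintegral_congr fun x => ?_
          rw [hS]; simp only; rw [ENNReal.mul_rpow_of_nonneg _ _ ht0.le]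
      _ ≤ C1 ^ t * (C2 * ∫⁻ x, ((F x ^ b) ^ Q') ^ t) := mul_le_mul_right (hM _ hFbm) _
      _ = _ := by
          rw [mul_assoc]
          congr 3
          funext x
          rw [← ENNReal.rpow_mul, ← ENNReal.rpow_mul]
          congr 1
          rw [hQ'e, ht, hb]; field_simp
  set X := ∫⁻ x, F x ^ P with hX
  have hXe : X = ∫⁻ x, Φ x ^ (P / Q) := by simp_rw [hX, hFP]
  rw [← hXe]
  have hkGm : Measurable fun x => ∑' k, kc a k (fun y => G k y ^ Q) x :=
    Measurable.tsum fun k => kc_measurable a k _ (hGQm k)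
  have hi : 0 ≤ 1 / R' := one_div_nonneg.2 hR'0.le
  calc ∫⁻ x, (∑' k, kc a k (f k) x ^ Q) ^ (P / Q)
      ≤ ∫⁻ x, (∑' k, kc a k (fun y => G k y ^ Q) x) ^ (P / Q) * (S x ^ (Q - 1)) ^ (P / Q) := by
        refine lintegral_mono fun x => ?_
        rw [← ENNReal.mul_rpow_of_nonneg _ _ hPQ0.le, ← ENNReal.tsum_mul_right]
        exact ENNReal.rpow_le_rpow (ENNReal.tsum_le_tsum fun k => hstep k x) hPQ0.le
    _ ≤ (∫⁻ x, ((∑' k, kc a k (fun y => G k y ^ Q) x) ^ (P / Q)) ^ (Q / P)) ^ (1 / (Q / P)) *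
          (∫⁻ x, ((S x ^ (Q - 1)) ^ (P / Q)) ^ R') ^ (1 / R') :=
        ENNReal.lintegral_mul_le_Lp_mul_Lq _ hcR (hkGm.pow_const _).aemeasurable
          ((hSm.pow_const _).pow_const _).aemeasurable
    _ = (∫⁻ x, ∑' k, kc a k (fun y => G k y ^ Q) x) ^ (P / Q) *
          (∫⁻ x, S x ^ t) ^ (1 / R') := by
        congr 2
        · refine lintegral_congr fun x => ?_
          rw [← ENNReal.rpow_mul, show P / Q * (Q / P) = 1 by field_simp, ENNReal.rpow_one]
        · rw [one_div_div]
        · refine lintegral_congr fun x => ?_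
          rw [← ENNReal.rpow_mul, ← ENNReal.rpow_mul]
          congr 1
          rw [hR'e, ht]; field_simp
    _ ≤ (C1 * X) ^ (P / Q) * (C1 ^ t * C2 * X) ^ (1 / R') := by
        gcongr
    _ = C * X := by
        rw [ENNReal.mul_rpow_of_nonneg _ _ hPQ0.le, ENNReal.mul_rpow_of_nonneg _ X hi, hC]
        have : X ^ (P / Q) * X ^ (1 / R') = X := by
          rw [← ENNReal.rpow_add_of_nonneg _ _ hPQ0.le hi, hR'e,
            show P / Q + 1 / (Q / (Q - P)) = 1 by field_simp; ring, ENNReal.rpow_one]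
        conv_rhs => rw [← this]
        ring
    _ ≤ (C + 1) * X := by gcongr; exact le_self_add

lemma ellqNorm_mono (q : ℝ≥0∞) {b c : ℕ → ℝ≥0∞} (h : ∀ j, b j ≤ c j) :
    ellqNorm q b ≤ ellqNorm q c := by
  unfold ellqNorm
  split_ifs
  · exact iSup_mono h
  · have : 0 ≤ 1 / q.toReal := by positivity
    gcongr with j
    exact h j

lemma ellqNorm_measurable (q : ℝ≥0∞) (f : ℕ → Eu n → ℝ≥0∞) (hf : ∀ k, Measurable (f k)) :
    Measurable fun x => ellqNorm q fun k => f k x := by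
  unfold ellqNorm
  split_ifs
  · exact Measurable.iSup hf
  · exact (vec_sum_measurable _ f hf).pow_const _

/-- The vector-valued inequality in `L_P(ℓ_Q)`, `1 < P < ∞`, `1 < Q ≤ ∞`. -/
lemma vec_all (ha : (n : ℝ) < a) (P : ℝ) (Q : ℝ≥0∞) (hP : 1 < P) (hQ : 1 < Q) :
    ∃ C : ℝ≥0∞, C ≠ ∞ ∧ ∀ f : ℕ → Eu n → ℝ≥0∞, (∀ k, Measurable (f k)) →
      ∫⁻ x, (ellqNorm Q fun k => kc a k (f k) x) ^ P ≤
        C * ∫⁻ x, (ellqNorm Q fun k => f k x) ^ P := by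
  by_cases hQt : Q = ∞
  · subst hQt
    obtain ⟨C1, hC1, hk, hkint⟩ := kc_le_hlM n a ha
    obtain ⟨C2, hC2, hM⟩ := hl_strong n P hP
    have hP0 : 0 ≤ P := by linarith
    refine ⟨C1 ^ P * C2, ENNReal.mul_ne_top (ENNReal.rpow_ne_top_of_nonneg hP0 hC1) hC2,
      fun f hf => ?_⟩
    have hsm : Measurable fun x => ⨆ k, f k x := Measurable.iSup hf
    simp only [ellqNorm, if_pos]
    calc ∫⁻ x, (⨆ k, kc a k (f k) x) ^ P ≤ ∫⁻ x, (C1 * hlM (fun x => ⨆ k, f k x) x) ^ P := by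
          gcongr with x
          refine iSup_le fun k => ?_
          exact (kc_mono a k (fun y => le_iSup (fun k => f k y) k) x).trans (hk k _ hsm x)
      _ = C1 ^ P * ∫⁻ x, hlM (fun x => ⨆ k, f k x) x ^ P := by
          rw [← lintegral_const_mul _ ((hlM_measurable _ hsm).pow_const _)]
          refine lintegral_congr fun x => ?_
          rw [ENNReal.mul_rpow_of_nonneg _ _ hP0]
      _ ≤ _ := by
          rw [mul_assoc]; exact mul_le_mul_right (hM _ hsm) _
  · have hq1 : 1 < Q.toReal := by
      rw [← ENNReal.toReal_one]; exact (ENNReal.toReal_lt_toReal (by simp) hQt).2 hQ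
    have e : ∀ b : ℕ → ℝ≥0∞, ellqNorm Q b ^ P = (∑' k, b k ^ Q.toReal) ^ (P / Q.toReal) := by
      intro b
      rw [ellqNorm, if_neg hQt, ← ENNReal.rpow_mul]; congr 1; ring
    simp_rw [e]
    rcases lt_trichotomy P Q.toReal with h | h | h
    · exact vec_lt ha P _ hP h
    · obtain ⟨C, hC, h'⟩ := vec_eq ha Q.toReal hq1.le
      refine ⟨C, hC, fun f hf => ?_⟩
      have hone : P / Q.toReal = 1 := by rw [h, div_self (by linarith)]
      simpa only [hone, ENNReal.rpow_one] using h' f hf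
    · exact vec_gt ha P _ hq1.le h

end

/-! ### Peetre's maximal function without a priori integrability -/

/-- The weight `1 + 2^k ‖z‖` as an extended nonnegative number. -/
def pw {n : ℕ} (k : ℕ) (z : Eu n) : ℝ≥0∞ := ENNReal.ofReal (1 + 2 ^ k * ‖z‖)

section

variable {n : ℕ} (k : ℕ)

lemma pw_base (z : Eu n) : (0 : ℝ) < 1 + 2 ^ k * ‖z‖ := by positivity

lemma pw_ne_zero (z : Eu n) : pw k z ≠ 0 := by
  simp only [pw, ne_eq, ENNReal.ofReal_eq_zero, not_le]; exact pw_base k z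

lemma pw_ne_top (z : Eu n) : pw k z ≠ ∞ := ENNReal.ofReal_ne_top

lemma peK_eq (a : ℝ) (z : Eu n) :
    peK a k z = ENNReal.ofReal (((2 : ℝ) ^ k) ^ n) * pw k z ^ (-a) := by
  rw [peK, ENNReal.ofReal_mul (by positivity), pw, ENNReal.ofReal_rpow_of_pos (pw_base k z)]

lemma one_le_pw (z : Eu n) : 1 ≤ pw k z := by
  rw [pw, ← ENNReal.ofReal_one]
  exact ENNReal.ofReal_le_ofReal (by simp)

lemma pw_mul (x y z : Eu n) : pw k (x - z) ≤ pw k (x - y) * pw k (y - z) := by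
  rw [pw, pw, pw, ← ENNReal.ofReal_mul (pw_base k _).le]
  refine ENNReal.ofReal_le_ofReal ?_
  have h : ‖x - z‖ ≤ ‖x - y‖ + ‖y - z‖ := norm_sub_le_norm_sub_add_norm_sub x y z
  have h2 : (0 : ℝ) ≤ 2 ^ k := by positivity
  have h3 : (0 : ℝ) ≤ (2 ^ k * ‖x - y‖) * (2 ^ k * ‖y - z‖) := by positivity
  nlinarith [mul_le_mul_of_nonneg_left h h2]

lemma pw_neg_mul {a : ℝ} (ha : 0 ≤ a) (x y z : Eu n) :
    pw k (x - y) ^ (-a) * pw k (y - z) ^ (-a) ≤ pw k (x - z) ^ (-a) := by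
  rw [← ENNReal.mul_rpow_of_ne_zero (pw_ne_zero k _) (pw_ne_zero k _), ENNReal.rpow_neg,
    ENNReal.rpow_neg]
  exact ENNReal.inv_le_inv.2 (ENNReal.rpow_le_rpow (pw_mul k x y z) ha)

/-- The averages `kc a k f` vary slowly at scale `2^{-k}`. -/
lemma pw_neg_mul_kc {a : ℝ} (ha : 0 ≤ a) (f : Eu n → ℝ≥0∞) (x y : Eu n) :
    pw k (x - y) ^ (-a) * kc a k f y ≤ kc a k f x := by
  unfold kc
  rw [← lintegral_const_mul' _ _ (ENNReal.rpow_ne_top_of_ne_zero (pw_ne_zero k _) (pw_ne_top k _))]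
  refine lintegral_mono fun z => ?_
  rw [peK_eq, peK_eq]
  calc _ = ENNReal.ofReal (((2 : ℝ) ^ k) ^ n) * (pw k (x - y) ^ (-a) * pw k (y - z) ^ (-a)) * f z := by
        ring
    _ ≤ _ := by gcongr; exact pw_neg_mul k ha x y z

lemma kc_anti {a b : ℝ} (h : a ≤ b) (f : Eu n → ℝ≥0∞) (x : Eu n) : kc b k f x ≤ kc a k f x := by
  unfold kc
  refine lintegral_mono fun z => mul_le_mul_left ?_ _
  rw [peK_eq, peK_eq]
  exact mul_le_mul_right (ENNReal.rpow_le_rpow_of_exponent_le (one_le_pw k _) (by linarith)) _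

/-- Peetre's maximal function of `f` with decay exponent `a` at scale `2^{-k}`. -/
def pee (a : ℝ) (f : Eu n → ℝ≥0∞) (x : Eu n) : ℝ≥0∞ := ⨆ y, f y * pw k (x - y) ^ (-a)

lemma le_pee (a : ℝ) (f : Eu n → ℝ≥0∞) (x : Eu n) : f x ≤ pee k a f x := by
  refine le_trans ?_ (le_iSup (fun y => f y * pw k (x - y) ^ (-a)) x)
  simp [pw]

/-- Splitting `f = f^{1-r} f^r` and estimating the first factor by Peetre's maximal function. -/
lemma kc_le_pee {r : ℝ} (hr : 0 < r) (hr1 : r ≤ 1) (a : ℝ) (f : Eu n → ℝ≥0∞) (x : Eu n)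
    (hf : Measurable f) :
    kc a k f x ≤ pee k a f x ^ (1 - r) * kc (a * r) k (fun y => f y ^ r) x := by
  have h1 : 0 ≤ 1 - r := by linarith
  have hm : Measurable fun y => peK (a * r) k (x - y) * f y ^ r :=
    ((peK_measurable (a * r) k).comp (measurable_const.sub measurable_id)).mul (hf.pow_const _)
  unfold kc
  rw [← lintegral_const_mul _ hm]
  refine lintegral_mono fun y => ?_
  rw [peK_eq, peK_eq]
  have e1 : f y = f y ^ r * f y ^ (1 - r) := by
    rw [← ENNReal.rpow_add_of_nonneg _ _ hr.le h1]; simp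
  have e2 : pw k (x - y) ^ (-a) = pw k (x - y) ^ (-(a * r)) * (pw k (x - y) ^ (-a)) ^ (1 - r) := by
    rw [← ENNReal.rpow_mul, ← ENNReal.rpow_add _ _ (pw_ne_zero k _) (pw_ne_top k _)]
    congr 1; ring
  calc ENNReal.ofReal (((2 : ℝ) ^ k) ^ n) * pw k (x - y) ^ (-a) * f y
      = (f y * pw k (x - y) ^ (-a)) ^ (1 - r) * (ENNReal.ofReal (((2 : ℝ) ^ k) ^ n) *
          pw k (x - y) ^ (-(a * r)) * f y ^ r) := by
        rw [ENNReal.mul_rpow_of_nonneg _ _ h1]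
        conv_lhs => rw [e1, e2]
        ring
    _ ≤ _ := by
        refine mul_le_mul_left (ENNReal.rpow_le_rpow ?_ h1) _
        exact le_iSup (fun y => f y * pw k (x - y) ^ (-a)) y

/-- Bounds by polynomially decaying averages pass to the maximal function, since the kernel changes
by at most the weight under translation. -/
lemma pee_le_kc {a : ℝ} (ha : 0 ≤ a) (f : Eu n → ℝ≥0∞) (C : ℝ≥0∞)
    (hC : ∀ x, f x ≤ C * kc a k f x) (x : Eu n) : pee k a f x ≤ C * kc a k f x := by
  refine iSup_le fun y => ?_
  calc f y * pw k (x - y) ^ (-a) ≤ C * kc a k f y * pw k (x - y) ^ (-a) :=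
        mul_le_mul_left (hC y) _
    _ = C * (pw k (x - y) ^ (-a) * kc a k f y) := by ring
    _ ≤ _ := mul_le_mul_right (pw_neg_mul_kc k ha f x y) _

/-- With `S` the maximal function, the two preceding bounds read `S ≤ C S^{1-r} T`; the finiteness of
`S` is needed in order to divide by `S^{1-r}`. -/
lemma pee_rpow_le {r : ℝ} (hr : 0 < r) (hr1 : r ≤ 1) {a : ℝ} (ha : 0 ≤ a) (f : Eu n → ℝ≥0∞)
    (hf : Measurable f) (C : ℝ≥0∞) (hC : ∀ x, f x ≤ C * kc a k f x) (x : Eu n)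
    (hfin : pee k a f x ≠ ∞) :
    pee k a f x ^ r ≤ C * kc (a * r) k (fun y => f y ^ r) x := by
  have h := (pee_le_kc k ha f C hC x).trans (mul_le_mul_right (kc_le_pee k hr hr1 a f x hf) C)
  generalize pee k a f x = S at *
  rcases eq_or_ne S 0 with h0 | h0
  · simp [h0, hr]
  have h1 : 0 ≤ 1 - r := by linarith
  have e1 : S = S ^ r * S ^ (1 - r) := by
    rw [← ENNReal.rpow_add_of_nonneg _ _ hr.le h1]; simp
  have h2 : S ^ r * S ^ (1 - r) ≤ (C * kc (a * r) k (fun y => f y ^ r) x) * S ^ (1 - r) := by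
    rw [← e1]; refine h.trans_eq ?_; ring
  refine (ENNReal.mul_le_mul_iff_left ?_ ?_).1 h2
  · simp [h0, hfin]
  · exact ENNReal.rpow_ne_top_of_nonneg h1 hfin

/-- A polynomially bounded function reproduced up to constants by rapidly decreasing averages is
controlled by averages of its `r`-th power, for every `0 < r ≤ 1`. -/
lemma kc_le_kc_rpow {r : ℝ} (hr : 0 < r) (hr1 : r ≤ 1) {a : ℝ} (ha : 0 ≤ a) (f : Eu n → ℝ≥0∞)
    (hf : Measurable f) (c : ℝ) (N : ℕ) (hgr : ∀ x, f x ≤ ENNReal.ofReal (c * (1 + ‖x‖) ^ N))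
    (hD : ∀ D : ℕ, ∃ C : ℝ≥0∞, C ≠ ∞ ∧ ∀ x, f x ≤ C * kc D k f x)
    (C : ℝ≥0∞) (hC1 : 1 ≤ C) (hC : ∀ x, f x ≤ C * kc a k f x) (x : Eu n) :
    kc a k f x ≤ C ^ ((1 - r) / r) * (kc (a * r) k (fun y => f y ^ r) x) ^ (1 / r) := by
  have hr' : 0 ≤ (1 - r) / r := div_nonneg (by linarith) hr.le
  by_cases hT : kc (a * r) k (fun y => f y ^ r) x = ∞
  · rw [hT, ENNReal.top_rpow_of_pos (by positivity), ENNReal.mul_top]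
    · exact le_top
    · exact (zero_lt_one.trans_le
        (by simpa using ENNReal.rpow_le_rpow hC1 hr' : (1 : ℝ≥0∞) ≤ C ^ ((1 - r) / r))).ne'
  -- a decay exponent beating the growth of `f`, for which the maximal function is finite
  obtain ⟨D, hDa⟩ := exists_nat_ge (max a N)
  obtain ⟨C', hC't, hC'⟩ := hD D
  have hfinD : ∀ x, pee k D f x ≠ ∞ := by
    intro x
    refine ne_top_of_le_ne_top (b := ENNReal.ofReal (|c| * (1 + ‖x‖) ^ N)) ENNReal.ofReal_ne_top ?_
    refine iSup_le fun y => ?_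
    have hb : ‖y‖ ≤ ‖x‖ + ‖x - y‖ := by
      have := norm_sub_le x (x - y); simpa using this
    have h2k : (1 : ℝ) ≤ 2 ^ k := one_le_pow₀ (by norm_num)
    have hxy : ‖x - y‖ ≤ 2 ^ k * ‖x - y‖ := le_mul_of_one_le_left (norm_nonneg _) h2k
    have h1 : 1 + ‖y‖ ≤ (1 + ‖x‖) * (1 + 2 ^ k * ‖x - y‖) := by
      have : 0 ≤ ‖x‖ * (2 ^ k * ‖x - y‖) := by positivity
      nlinarith
    have hw1 : (1 : ℝ) ≤ 1 + 2 ^ k * ‖x - y‖ := by simp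
    calc f y * pw k (x - y) ^ (-(D : ℝ))
        ≤ ENNReal.ofReal (|c| * (1 + ‖x‖) ^ N) * pw k (x - y) ^ (N : ℝ) * pw k (x - y) ^ (-(D : ℝ)) := by
          refine mul_le_mul_left ((hgr y).trans ?_) _
          rw [pw, ENNReal.ofReal_rpow_of_pos (pw_base k _), ← ENNReal.ofReal_mul (by positivity),
            Real.rpow_natCast]
          refine ENNReal.ofReal_le_ofReal ?_
          rw [mul_assoc, ← mul_pow]
          gcongr
          exact le_abs_self c
      _ = ENNReal.ofReal (|c| * (1 + ‖x‖) ^ N) * pw k (x - y) ^ ((N : ℝ) + -(D : ℝ)) := by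
          rw [ENNReal.rpow_add _ _ (pw_ne_zero k _) (pw_ne_top k _), mul_assoc]
      _ ≤ ENNReal.ofReal (|c| * (1 + ‖x‖) ^ N) * pw k (x - y) ^ (0 : ℝ) := by
          refine mul_le_mul_right ?_ _
          refine ENNReal.rpow_le_rpow_of_exponent_le (one_le_pw k _) ?_
          have := (le_max_right a (N : ℝ)).trans hDa
          linarith
      _ = _ := by simp
  -- For the exponent `D` the division by the maximal function is legitimate. The bound obtained then
  -- shows that the maximal function with the original exponent `a` is finite too.
  have hfr : ∀ y, f y ^ r ≤ C' * kc (a * r) k (fun y => f y ^ r) y := fun y => by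
    calc f y ^ r ≤ pee k D f y ^ r := ENNReal.rpow_le_rpow (le_pee k D f y) hr.le
      _ ≤ C' * kc (D * r) k (fun y => f y ^ r) y :=
          pee_rpow_le k hr hr1 (Nat.cast_nonneg D) f hf C' hC' y (hfinD y)
      _ ≤ _ := mul_le_mul_right (kc_anti k
          (mul_le_mul_of_nonneg_right ((le_max_left _ _).trans hDa) hr.le) _ _) _
  have hfin : pee k a f x ≠ ∞ := by
    have h1 : pee k a f x ≤ (C' * kc (a * r) k (fun y => f y ^ r) x) ^ (1 / r) := by
      refine iSup_le fun y => ?_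
      have : (f y * pw k (x - y) ^ (-a)) ^ r ≤ C' * kc (a * r) k (fun y => f y ^ r) x := by
        rw [ENNReal.mul_rpow_of_nonneg _ _ hr.le, ← ENNReal.rpow_mul,
          show -a * r = -(a * r) by ring]
        calc _ ≤ C' * kc (a * r) k (fun y => f y ^ r) y * pw k (x - y) ^ (-(a * r)) :=
              mul_le_mul_left (hfr y) _
          _ = C' * (pw k (x - y) ^ (-(a * r)) * kc (a * r) k (fun y => f y ^ r) y) := by ring
          _ ≤ _ := mul_le_mul_right (pw_neg_mul_kc k (by positivity) _ x y) _
      calc f y * pw k (x - y) ^ (-a) = ((f y * pw k (x - y) ^ (-a)) ^ r) ^ (1 / r) := by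
            rw [← ENNReal.rpow_mul, mul_one_div_cancel hr.ne', ENNReal.rpow_one]
        _ ≤ _ := ENNReal.rpow_le_rpow this (by positivity)
    exact ne_top_of_le_ne_top (ENNReal.rpow_ne_top_of_nonneg (by positivity)
      (ENNReal.mul_ne_top hC't hT)) h1
  have hmain := pee_rpow_le k hr hr1 ha f hf C hC x hfin
  refine (kc_le_pee k hr hr1 a f x hf).trans ?_
  generalize pee k a f x = S at *
  generalize kc (a * r) k (fun y => f y ^ r) x = T at *
  have h1 : 0 ≤ 1 - r := by linarith
  calc S ^ (1 - r) * T = (S ^ r) ^ ((1 - r) / r) * T := by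
        rw [← ENNReal.rpow_mul]; congr 2; field_simp
    _ ≤ (C * T) ^ ((1 - r) / r) * T := mul_le_mul_left (ENNReal.rpow_le_rpow hmain hr') _
    _ = C ^ ((1 - r) / r) * (T ^ ((1 - r) / r) * T ^ (1 : ℝ)) := by
        rw [ENNReal.mul_rpow_of_nonneg _ _ hr', ENNReal.rpow_one, mul_assoc]
    _ = _ := by
        rw [← ENNReal.rpow_add_of_nonneg _ _ hr' zero_le_one]; congr 2; field_simp; ring

end

/-! ### The Fourier transform on Schwartz functions in the `e^{-ix·ξ}` normalization -/

section

variable {n : ℕ}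

/-- The identity, from the Euclidean space to the coordinate space. -/
def eE (n : ℕ) : EuclideanSpace ℝ (Fin n) ≃L[ℝ] Eu n := EuclideanSpace.equiv (Fin n) ℝ

/-- Multiplication by `2π`, from the Euclidean space to the coordinate space. -/
def gE (n : ℕ) : EuclideanSpace ℝ (Fin n) ≃L[ℝ] Eu n :=
  (ContinuousLinearEquiv.smulLeft (Units.mk0 (2 * π) (by positivity))).trans (eE n)

lemma gE_apply (x : EuclideanSpace ℝ (Fin n)) : gE n x = (2 * π) • eE n x := by
  simp only [gE, ContinuousLinearEquiv.trans_apply]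
  exact (eE n).map_smul (2 * π) x

/-- `ℱ` on Schwartz functions. -/
def FT (n : ℕ) : SchwartzMap (Eu n) ℂ →L[ℂ] SchwartzMap (Eu n) ℂ :=
  (SchwartzMap.compCLMOfContinuousLinearEquiv ℂ (gE n).symm) ∘L
    (FourierTransform.fourierCLM ℂ (SchwartzMap (EuclideanSpace ℝ (Fin n)) ℂ)) ∘L
      (SchwartzMap.compCLMOfContinuousLinearEquiv ℂ (eE n))

/-- `ℱ⁻¹` on Schwartz functions. -/
def FTi (n : ℕ) : SchwartzMap (Eu n) ℂ →L[ℂ] SchwartzMap (Eu n) ℂ :=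
  (SchwartzMap.compCLMOfContinuousLinearEquiv ℂ (eE n).symm) ∘L
    (FourierTransform.fourierInvCLM ℂ (SchwartzMap (EuclideanSpace ℝ (Fin n)) ℂ)) ∘L
      (SchwartzMap.compCLMOfContinuousLinearEquiv ℂ (gE n))

lemma comp_symm_comp {V W : Type*} [NormedAddCommGroup V] [NormedSpace ℝ V]
    [NormedAddCommGroup W] [NormedSpace ℝ W] (e : V ≃L[ℝ] W) (φ : SchwartzMap V ℂ) :
    SchwartzMap.compCLMOfContinuousLinearEquiv ℂ e
      (SchwartzMap.compCLMOfContinuousLinearEquiv ℂ e.symm φ) = φ := by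
  ext x; simp

lemma comp_comp_symm {V W : Type*} [NormedAddCommGroup V] [NormedSpace ℝ V]
    [NormedAddCommGroup W] [NormedSpace ℝ W] (e : V ≃L[ℝ] W) (φ : SchwartzMap W ℂ) :
    SchwartzMap.compCLMOfContinuousLinearEquiv ℂ e.symm
      (SchwartzMap.compCLMOfContinuousLinearEquiv ℂ e φ) = φ := by
  ext x; simp

lemma FT_FTi (φ : SchwartzMap (Eu n) ℂ) : FT n (FTi n φ) = φ := by
  simp [FT, FTi, comp_symm_comp, comp_comp_symm]

lemma FTi_FT (φ : SchwartzMap (Eu n) ℂ) : FTi n (FT n φ) = φ := by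
  simp [FT, FTi, comp_symm_comp, comp_comp_symm]

lemma eE_inner (x y : EuclideanSpace ℝ (Fin n)) : inner ℝ x y = dotp (eE n x) (eE n y) := by
  simp [dotp, eE, PiLp.inner_apply, mul_comm]

lemma eE_mp : MeasurePreserving (eE n) volume volume :=
  EuclideanSpace.volume_preserving_symm_measurableEquiv_toLp (Fin n) |>.symm.symm

lemma integral_eE (f : Eu n → ℂ) : ∫ x, f (eE n x) = ∫ x, f x :=
  eE_mp.integral_comp (eE n).toHomeomorph.measurableEmbedding f

lemma integral_gE (f : Eu n → ℂ) : ∫ x, f (gE n x) = (((2 * π) ^ n : ℝ)⁻¹) • ∫ x, f x := by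
  simp_rw [gE_apply]
  rw [integral_eE (fun y => f ((2 * π) • y)), Measure.integral_comp_smul]
  simp [abs_of_pos Real.pi_pos]

lemma dotp_smul_right (c : ℝ) (x y : Eu n) : dotp x (c • y) = c * dotp x y := by
  simp only [dotp, Pi.smul_apply, smul_eq_mul, Finset.mul_sum]
  exact Finset.sum_congr rfl fun i _ => by ring

lemma dotp_comm (x y : Eu n) : dotp x y = dotp y x := by
  simp only [dotp]
  exact Finset.sum_congr rfl fun i _ => by ring

lemma FT_apply (φ : SchwartzMap (Eu n) ℂ) (ξ : Eu n) : FT n φ ξ = pF (fun x => φ x) ξ := by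
  obtain ⟨η, rfl⟩ := (gE n).surjective ξ
  rw [pF, ← integral_eE]
  have : FT n φ (gE n η) = FourierTransform.fourier (fun x => φ (eE n x)) η := by
    simp [FT, SchwartzMap.fourier_coe]
    rfl
  rw [this, Real.fourier_eq']
  refine integral_congr_ae (Eventually.of_forall fun x => ?_)
  simp only [smul_eq_mul]
  congr 2
  rw [gE_apply, dotp_smul_right, eE_inner]
  push_cast; ring

lemma FTi_apply (φ : SchwartzMap (Eu n) ℂ) (x : Eu n) : FTi n φ x = pFinv (fun x => φ x) x := by
  obtain ⟨η, rfl⟩ := (eE n).surjective x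
  rw [pFinv, ← integral_gE]
  have : FTi n φ (eE n η) = FourierTransformInv.fourierInv (fun x => φ (gE n x)) η := by
    simp [FTi, SchwartzMap.fourierInv_coe]
    rfl
  rw [this, Real.fourierInv_eq']
  refine integral_congr_ae (Eventually.of_forall fun x => ?_)
  simp only [smul_eq_mul]
  congr 2
  rw [gE_apply, dotp_smul_right, eE_inner, dotp_comm]
  push_cast; ring

end

/-! ### Fourier multipliers and their kernels -/

section

variable {n : ℕ}

/-- Polynomial boundedness with respect to the norm of `Fin n → ℝ`. -/
def PB (v : Eu n → ℂ) : Prop := ∃ (c : ℝ) (N : ℕ), 0 ≤ c ∧ ∀ x, ‖v x‖ ≤ c * (1 + ‖x‖) ^ N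

/-- The operator `φ ↦ ℱ(m ℱ⁻¹φ)` on Schwartz functions. -/
def MT (m : Eu n → ℂ) : SchwartzMap (Eu n) ℂ →L[ℂ] SchwartzMap (Eu n) ℂ :=
  FT n ∘L SchwartzMap.smulLeftCLM ℂ m ∘L FTi n

/-- The kernel `ℱm / (2π)^n` of `φ ↦ ℱ(m ℱ⁻¹φ)`. -/
def Kr (m : SchwartzMap (Eu n) ℂ) : SchwartzMap (Eu n) ℂ := (((2 * π) ^ n : ℝ)⁻¹ : ℂ) • FT n m

/-- The function `ℱ⁻¹(m ℱv)` for polynomially bounded `v`, written as an integral. -/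
def cv (m : SchwartzMap (Eu n) ℂ) (v : Eu n → ℂ) (y : Eu n) : ℂ := ∫ x, v x * Kr m (x - y)

lemma sdecay (φ : SchwartzMap (Eu n) ℂ) (D : ℕ) :
    ∃ C : ℝ, 0 ≤ C ∧ ∀ x, (1 + ‖x‖) ^ D * ‖φ x‖ ≤ C := by
  refine ⟨2 ^ D * (Finset.Iic (D, 0)).sup (fun m => SchwartzMap.seminorm ℂ m.1 m.2) φ,
    by positivity, fun x => ?_⟩
  have := SchwartzMap.one_add_le_sup_seminorm_apply (𝕜 := ℂ) (m := (D, 0)) (k := D) (n := 0)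
    le_rfl le_rfl φ x
  simpa using this

lemma sint (φ : SchwartzMap (Eu n) ℂ) (N : ℕ) : Integrable fun x => (1 + ‖x‖) ^ N * ‖φ x‖ := by
  obtain ⟨C, hC0, hC⟩ := sdecay φ (N + (n + 1))
  have h1 : Integrable fun x : Eu n => C * (1 + ‖x‖) ^ (-((n : ℝ) + 1)) := by
    refine (integrable_one_add_norm ?_).const_mul C
    simp
  refine h1.mono' ?_ (Eventually.of_forall fun x => ?_)
  · have := φ.continuous
    exact Continuous.aestronglyMeasurable (by fun_prop)
  · have hp : 0 < 1 + ‖x‖ := by positivity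
    rw [Real.norm_of_nonneg (by positivity), Real.rpow_neg hp.le, ← div_eq_mul_inv, le_div_iff₀
      (by positivity)]
    have e : (1 + ‖x‖) ^ ((n : ℝ) + 1) = (1 + ‖x‖) ^ (n + 1) := by
      rw [← Real.rpow_natCast]; push_cast; rfl
    rw [e]
    refine le_trans (le_of_eq ?_) (hC x)
    rw [pow_add]; ring

lemma one_add_norm_le (x y : Eu n) : 1 + ‖x‖ ≤ (1 + ‖x - y‖) * (1 + ‖y‖) := by
  have h : ‖x‖ ≤ ‖x - y‖ + ‖y‖ := by simpa using norm_add_le (x - y) y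
  nlinarith [mul_nonneg (norm_nonneg (x - y)) (norm_nonneg y)]

lemma exp_norm_one (t : ℝ) : ‖Complex.exp (Complex.I * (t : ℂ))‖ = 1 := by
  rw [mul_comm]; exact Complex.norm_exp_ofReal_mul_I t

lemma dotp_sub_right (x y z : Eu n) : dotp x (y - z) = dotp x y - dotp x z := by
  simp [dotp, mul_sub]

lemma dotp_continuous {X : Type*} [TopologicalSpace X] {f g : X → Eu n} (hf : Continuous f)
    (hg : Continuous g) : Continuous fun x => dotp (f x) (g x) := by
  unfold dotp; fun_prop

/-- `φ ↦ ℱ(m ℱ⁻¹φ)` is convolution with the Schwartz function `Kr m`. -/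
lemma MT_apply_ker (m φ : SchwartzMap (Eu n) ℂ) (x : Eu n) :
    MT m φ x = ∫ y, Kr m (x - y) * φ y := by
  have h1 : MT m φ x = pF (fun η => m η * pFinv (fun y => φ y) η) x := by
    simp only [MT, ContinuousLinearMap.comp_apply, FT_apply]
    congr 1; funext η
    rw [SchwartzMap.smulLeftCLM_apply_apply m.hasTemperateGrowth, FTi_apply, smul_eq_mul]
  rw [h1]
  simp only [Kr, smul_apply, FT_apply, pF, pFinv, smul_eq_mul]
  set c : ℝ := ((2 * π) ^ n : ℝ)⁻¹
  have hkint : Integrable (fun z : Eu n × Eu n =>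
      Complex.exp (-(Complex.I * (dotp z.1 (x - z.2) : ℂ))) * (m z.1 * φ z.2))
      (volume.prod volume) := by
    refine (m.integrable.mul_prod φ.integrable).bdd_mul (c := 1) ?_ ?_
    · refine Continuous.aestronglyMeasurable ?_
      have := dotp_continuous (n := n) (f := fun z : Eu n × Eu n => z.1)
        (g := fun z : Eu n × Eu n => x - z.2) (by fun_prop) (by fun_prop)
      fun_prop
    · refine Eventually.of_forall fun z => ?_
      have := exp_norm_one (-(dotp z.1 (x - z.2)))
      push_cast at this
      rw [mul_neg] at this
      exact this.le
  calc ∫ η, Complex.exp (-(Complex.I * (dotp η x : ℂ))) * (m η *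
        (c • ∫ y, Complex.exp (Complex.I * (dotp η y : ℂ)) * φ y))
      = ∫ η, (c : ℂ) * ∫ y, Complex.exp (-(Complex.I * (dotp η (x - y) : ℂ))) * (m η * φ y) := by
        refine integral_congr_ae (Eventually.of_forall fun η => ?_)
        simp only [Complex.real_smul]
        rw [mul_left_comm (m η), mul_left_comm _ (c : ℂ), ← integral_const_mul, ← integral_const_mul]
        congr 1
        refine integral_congr_ae (Eventually.of_forall fun y => ?_)
        simp only
        rw [dotp_sub_right]
        have : Complex.exp (-(Complex.I * ((dotp η x - dotp η y : ℝ) : ℂ))) =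
            Complex.exp (-(Complex.I * (dotp η x : ℂ))) * Complex.exp (Complex.I * (dotp η y : ℂ)) := by
          rw [← Complex.exp_add]; congr 1; push_cast; ring
        rw [this]; ring
    _ = (c : ℂ) * ∫ y, ∫ η, Complex.exp (-(Complex.I * (dotp η (x - y) : ℂ))) * (m η * φ y) := by
        rw [integral_const_mul, integral_integral_swap hkint]
    _ = _ := by
        rw [← integral_const_mul]
        refine integral_congr_ae (Eventually.of_forall fun y => ?_)
        simp only [c]
        push_cast
        rw [mul_assoc, ← integral_mul_const]
        congr 1
        refine integral_congr_ae (Eventually.of_forall fun y => ?_)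
        simp only; ring

lemma pair_integrable (K φ : SchwartzMap (Eu n) ℂ) (v : Eu n → ℂ) (hv : Continuous v)
    (hb : PB v) :
    Integrable (fun z : Eu n × Eu n => v z.1 * (K (z.1 - z.2) * φ z.2)) (volume.prod volume) := by
  obtain ⟨c, N, hc, hvb⟩ := hb
  have h1 := (Integrable.convolution_integrand (ContinuousLinearMap.mul ℝ ℝ)
    (sint φ N) (sint K N) : Integrable _ (volume.prod volume))
  refine (h1.const_mul c).mono' ?_ (Eventually.of_forall fun z => ?_)
  · have := K.continuous
    have := φ.continuous
    exact Continuous.aestronglyMeasurable (by fun_prop)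
  · simp only [ContinuousLinearMap.mul_apply', norm_mul]
    calc ‖v z.1‖ * (‖K (z.1 - z.2)‖ * ‖φ z.2‖)
        ≤ (c * ((1 + ‖z.1 - z.2‖) * (1 + ‖z.2‖)) ^ N) * (‖K (z.1 - z.2)‖ * ‖φ z.2‖) := by
          gcongr
          refine (hvb _).trans ?_
          gcongr
          exact one_add_norm_le _ _
      _ = _ := by rw [mul_pow]; ring

/-- The transpose of `φ ↦ ℱ(m ℱ⁻¹φ)` acts on polynomially bounded functions as `cv m`. -/
lemma cv_pair (m φ : SchwartzMap (Eu n) ℂ) (v : Eu n → ℂ) (hv : Continuous v) (hb : PB v) :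
    ∫ x, v x * MT m φ x = ∫ y, cv m v y * φ y := by
  simp_rw [MT_apply_ker, cv, ← integral_const_mul, ← integral_mul_const]
  rw [integral_integral_swap (pair_integrable (Kr m) φ v hv hb)]
  simp_rw [mul_assoc]

lemma cv_continuous (m : SchwartzMap (Eu n) ℂ) (v : Eu n → ℂ) (hv : Continuous v) (hb : PB v) :
    Continuous (cv m v) := by
  obtain ⟨c, N, hc, hvb⟩ := hb
  have e : cv m v = fun y => ∫ x, v (x + y) * Kr m x := by
    funext y
    rw [cv, ← integral_add_right_eq_self _ y]
    simp
  rw [e, continuous_iff_continuousAt]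
  intro y0
  refine continuousAt_of_dominated
    (bound := fun x => c * (2 + ‖y0‖) ^ N * ((1 + ‖x‖) ^ N * ‖Kr m x‖)) ?_ ?_ ?_ ?_
  · refine Eventually.of_forall fun y => ?_
    have := (Kr m).continuous
    exact Continuous.aestronglyMeasurable (by fun_prop)
  · filter_upwards [Metric.ball_mem_nhds y0 zero_lt_one] with y hy
    refine Eventually.of_forall fun x => ?_
    rw [norm_mul, ← mul_assoc]
    gcongr
    refine (hvb _).trans ?_
    rw [mul_assoc, ← mul_pow]
    gcongr
    have h1 := norm_add_le x y
    have h2 : ‖y‖ ≤ ‖y0‖ + 1 := by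
      have := norm_add_le y0 (y - y0)
      have h3 : ‖y - y0‖ < 1 := by simpa [dist_eq_norm] using hy
      simp at this; linarith
    nlinarith [norm_nonneg x, norm_nonneg y0, mul_nonneg (norm_nonneg x) (norm_nonneg y0)]
  · exact (sint (Kr m) N).const_mul _
  · refine Eventually.of_forall fun x => ?_
    exact ((hv.comp (continuous_const.add continuous_id)).mul continuous_const).continuousAt

/-- Continuous functions are determined by their pairings with Schwartz functions. -/
lemma cont_eq_of_pair (g h : Eu n → ℂ) (hg : Continuous g) (hh : Continuous h)
    (H : ∀ φ : SchwartzMap (Eu n) ℂ, ∫ x, g x * φ x = ∫ x, h x * φ x) : g = h := by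
  refine (Continuous.ae_eq_iff_eq (volume : Measure (Eu n)) hg hh).1 ?_
  refine ae_eq_of_integral_contDiff_smul_eq hg.locallyIntegrable hh.locallyIntegrable ?_
  intro ψ hψ hs
  have hs' : HasCompactSupport fun x => (ψ x : ℂ) := hs.comp_left (g := Complex.ofReal) rfl
  have : ∫ x, g x * (ψ x : ℂ) = ∫ x, h x * (ψ x : ℂ) :=
    H (hs'.toSchwartzMap (Complex.ofRealCLM.contDiff.comp hψ))
  simpa [mul_comm] using this

end

section

variable {n : ℕ}

/-! ### Functions with prescribed Fourier support -/

lemma PB_integrable (v : Eu n → ℂ) (hv : Continuous v) (hb : PB v) (φ : SchwartzMap (Eu n) ℂ) :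
    Integrable fun x => v x * φ x := by
  obtain ⟨c, N, hc, hvb⟩ := hb
  refine ((sint φ N).const_mul c).mono' ?_ (Eventually.of_forall fun x => ?_)
  · exact (hv.mul φ.continuous).aestronglyMeasurable
  · rw [norm_mul, ← mul_assoc]
    gcongr
    exact hvb x

lemma MT_one (φ : SchwartzMap (Eu n) ℂ) : MT (fun _ => 1) φ = φ := by
  simp [MT, SchwartzMap.smulLeftCLM_const, FT_FTi]

lemma MT_zero (φ : SchwartzMap (Eu n) ℂ) : MT (fun _ => 0) φ = 0 := by
  simp [MT, SchwartzMap.smulLeftCLM_const]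

/-- Multipliers agreeing near the Fourier support of `v` act on `v` in the same way. -/
lemma supp_swap (v : Eu n → ℂ) (hv : Continuous v) (hb : PB v) (S : Set (Eu n))
    (hS : FsuppIn v S) (m1 m2 : Eu n → ℂ) (h1 : m1.HasTemperateGrowth)
    (h2 : m2.HasTemperateGrowth) (hd : Disjoint (tsupport (m1 - m2)) S)
    (φ : SchwartzMap (Eu n) ℂ) :
    ∫ x, v x * MT m1 φ x = ∫ x, v x * MT m2 φ x := by
  have h := hS (SchwartzMap.smulLeftCLM ℂ (m1 - m2) (FTi n φ)) ?_
  · rw [← sub_eq_zero, ← integral_sub (PB_integrable v hv hb _) (PB_integrable v hv hb _), ← h]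
    refine integral_congr_ae (Eventually.of_forall fun x => ?_)
    simp only
    rw [← FT_apply, ← mul_sub, SchwartzMap.smulLeftCLM_sub h1 h2]
    simp [MT]
  · refine hd.mono_left ?_
    have : (⇑(SchwartzMap.smulLeftCLM ℂ (m1 - m2) (FTi n φ)) : Eu n → ℂ) =
        fun x => (m1 - m2) x * FTi n φ x := by
      funext x
      rw [SchwartzMap.smulLeftCLM_apply_apply (h1.sub h2), smul_eq_mul]
    rw [this]
    exact tsupport_mul_subset_left

/-- A function is reproduced by a multiplier equal to `1` near its Fourier support. -/
lemma cv_reproduce (v : Eu n → ℂ) (hv : Continuous v) (hb : PB v) (S : Set (Eu n))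
    (hS : FsuppIn v S) (m : SchwartzMap (Eu n) ℂ)
    (hd : Disjoint (tsupport ((fun _ => (1 : ℂ)) - (m : Eu n → ℂ))) S) : cv m v = v := by
  refine cont_eq_of_pair _ _ (cv_continuous m v hv hb) hv fun φ => ?_
  rw [← cv_pair m φ v hv hb, ← supp_swap v hv hb S hS (fun _ => 1) m
    (Function.HasTemperateGrowth.const 1) m.hasTemperateGrowth hd, MT_one]

/-- The dilation `ξ ↦ b (2^{-k} ξ)`. -/
def dil (k : ℕ) (b : SchwartzMap (Eu n) ℂ) : SchwartzMap (Eu n) ℂ :=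
  SchwartzMap.compCLMOfContinuousLinearEquiv ℂ
    (ContinuousLinearEquiv.smulLeft (Units.mk0 (((2 : ℝ) ^ k)⁻¹) (by positivity))) b

lemma dil_apply (k : ℕ) (b : SchwartzMap (Eu n) ℂ) (ξ : Eu n) :
    dil k b ξ = b (((2 : ℝ) ^ k)⁻¹ • ξ) := rfl

lemma dotp_smul_left (c : ℝ) (x y : Eu n) : dotp (c • x) y = c * dotp x y := by
  rw [dotp_comm, dotp_smul_right, dotp_comm]

lemma Kr_dil (k : ℕ) (b : SchwartzMap (Eu n) ℂ) (z : Eu n) :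
    Kr (dil k b) z = ((((2 : ℝ) ^ k) ^ n : ℝ) : ℂ) * Kr b ((2 : ℝ) ^ k • z) := by
  have hk : (0 : ℝ) < 2 ^ k := by positivity
  simp only [Kr, smul_apply, smul_eq_mul, FT_apply, pF, dil_apply]
  have h := Measure.integral_comp_smul (volume : Measure (Eu n))
    (fun y => Complex.exp (-(Complex.I * (dotp y ((2 : ℝ) ^ k • z) : ℂ))) * b y) (((2 : ℝ) ^ k)⁻¹)
  have e : ∀ x : Eu n, dotp (((2 : ℝ) ^ k)⁻¹ • x) ((2 : ℝ) ^ k • z) = dotp x z := fun x => by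
    rw [dotp_smul_left, dotp_smul_right, inv_mul_cancel_left₀ hk.ne']
  simp only [e] at h
  rw [h]
  have e2 : |((((2 : ℝ) ^ k)⁻¹) ^ Module.finrank ℝ (Eu n))⁻¹| = ((2 : ℝ) ^ k) ^ n := by
    rw [abs_of_pos (by positivity)]; simp
  rw [e2, Complex.real_smul]
  ring

/-- A family of multipliers whose kernels are, uniformly in `k`, rapidly decreasing at scale
`2^{-k}`. -/
def KB (M : ℕ → SchwartzMap (Eu n) ℂ) : Prop :=
  ∀ D : ℕ, ∃ C : ℝ≥0∞, C ≠ ∞ ∧ 1 ≤ C ∧ ∀ k z, ‖Kr (M k) z‖ₑ ≤ C * peK D k z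

/-- Dilates of a single Schwartz symbol have kernels `2^{kn} Kr b (2^k z)`. -/
lemma KB_dil (b : SchwartzMap (Eu n) ℂ) : KB fun k => dil k b := by
  intro D
  obtain ⟨C, hC0, hC⟩ := sdecay (Kr b) D
  refine ⟨ENNReal.ofReal C + 1, by simp, le_add_self, fun k z => ?_⟩
  refine le_trans ?_ (mul_le_mul_left le_self_add _)
  rw [Kr_dil, peK, ← ENNReal.ofReal_mul hC0, ← ofReal_norm]
  refine ENNReal.ofReal_le_ofReal ?_
  have h := hC ((2 : ℝ) ^ k • z)
  have hp : 0 < 1 + 2 ^ k * ‖z‖ := by positivity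
  rw [norm_smul, Real.norm_of_nonneg (by positivity : (0 : ℝ) ≤ 2 ^ k)] at h
  rw [norm_mul, Complex.norm_real, Real.norm_of_nonneg (by positivity), mul_left_comm,
    Real.rpow_neg hp.le, Real.rpow_natCast, ← div_eq_mul_inv]
  gcongr
  rw [le_div_iff₀ (by positivity), mul_comm]
  exact h

/-- Uniform kernel bounds survive choosing, for each index, between two families. -/
lemma KB_or {M M1 M2 : ℕ → SchwartzMap (Eu n) ℂ} (h1 : KB M1) (h2 : KB M2)
    (h : ∀ k, M k = M1 k ∨ M k = M2 k) : KB M := by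
  intro D
  obtain ⟨C1, hC1, hC1', h1⟩ := h1 D
  obtain ⟨C2, hC2, hC2', h2⟩ := h2 D
  refine ⟨C1 + C2, by simp [hC1, hC2], hC1'.trans le_self_add, fun k z => ?_⟩
  rcases h k with h | h <;> rw [h]
  · exact (h1 k z).trans (mul_le_mul_left le_self_add _)
  · exact (h2 k z).trans (mul_le_mul_left le_add_self _)

lemma cv_le {M : ℕ → SchwartzMap (Eu n) ℂ} {D : ℕ} {C : ℝ≥0∞} (hC : C ≠ ∞)
    (h : ∀ k z, ‖Kr (M k) z‖ₑ ≤ C * peK D k z) (k : ℕ) (v : Eu n → ℂ) (y : Eu n) :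
    ‖cv (M k) v y‖ₑ ≤ C * kc D k (fun x => ‖v x‖ₑ) y := by
  unfold cv kc
  refine (enorm_integral_le_lintegral_enorm _).trans ?_
  rw [← lintegral_const_mul' _ _ hC]
  refine lintegral_mono fun x => ?_
  rw [enorm_mul, ← mul_assoc, peK_sub_comm, mul_comm]
  exact mul_le_mul_left (h k _) _

/-! ### Cut-off functions adapted to balls and annuli -/

/-- `|ξ|²`. -/
def sqn (ξ : Eu n) : ℝ := ∑ i, ξ i ^ 2

lemma sqn_contDiff : ContDiff ℝ (⊤ : ℕ∞) (sqn : Eu n → ℝ) := by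
  unfold sqn; fun_prop

lemma sqn_smul (c : ℝ) (ξ : Eu n) : sqn (c • ξ) = c ^ 2 * sqn ξ := by
  simp [sqn, mul_pow, Finset.mul_sum]

lemma eun_eq (ξ : Eu n) : eun ξ = √(sqn ξ) := rfl

lemma sq_nonneg' (ξ : Eu n) : 0 ≤ sqn ξ := Finset.sum_nonneg fun _ _ => sq_nonneg _

lemma eun_sq (ξ : Eu n) : eun ξ ^ 2 = sqn ξ := Real.sq_sqrt (sq_nonneg' ξ)

lemma eun_nonneg (ξ : Eu n) : 0 ≤ eun ξ := Real.sqrt_nonneg _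

lemma eun_smul (c : ℝ) (hc : 0 ≤ c) (ξ : Eu n) : eun (c • ξ) = c * eun ξ := by
  rw [eun_eq, sqn_smul, Real.sqrt_mul (sq_nonneg c), Real.sqrt_sq hc, eun_eq]

lemma eun_continuous : Continuous (eun : Eu n → ℝ) := by
  unfold eun; fun_prop

lemma norm_le_eun (ξ : Eu n) : ‖ξ‖ ≤ eun ξ := by
  refine (pi_norm_le_iff_of_nonneg (eun_nonneg ξ)).2 fun i => ?_
  rw [Real.norm_eq_abs, ← Real.sqrt_sq_eq_abs]
  refine Real.sqrt_le_sqrt ?_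
  exact Finset.single_le_sum (f := fun i => ξ i ^ 2) (fun i _ => sq_nonneg _) (Finset.mem_univ i)

lemma eun_le_norm (ξ : Eu n) : eun ξ ≤ n * ‖ξ‖ := by
  have h1 : sqn ξ ≤ n * ‖ξ‖ ^ 2 := by
    unfold sqn
    calc ∑ i, ξ i ^ 2 ≤ ∑ _i : Fin n, ‖ξ‖ ^ 2 := by
          refine Finset.sum_le_sum fun i _ => ?_
          rw [← sq_abs, ← Real.norm_eq_abs]
          gcongr
          exact norm_le_pi_norm ξ i
      _ = _ := by simp
  rw [eun_eq]
  refine Real.sqrt_le_iff.2 ⟨by positivity, h1.trans ?_⟩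
  rw [mul_pow]
  gcongr
  have : n ≤ n ^ 2 := Nat.le_self_pow two_ne_zero n
  exact_mod_cast this

lemma PB_of_eun (v : Eu n → ℂ) (h : ∃ (c : ℝ) (k : ℕ), ∀ x, ‖v x‖ ≤ c * (1 + eun x) ^ k) :
    PB v := by
  obtain ⟨c, k, h⟩ := h
  refine ⟨|c| * (1 + n) ^ k, k, by positivity, fun x => (h x).trans ?_⟩
  rw [mul_assoc, ← mul_pow]
  have := eun_nonneg x
  gcongr
  · exact le_abs_self c
  · have := eun_le_norm x
    nlinarith [norm_nonneg x, (Nat.cast_nonneg n : (0 : ℝ) ≤ n)]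

/-- A radial cut-off equal to `1` near `{|ξ| ≤ A}`. -/
def lowFun (A : ℝ) (ξ : Eu n) : ℂ := (Real.smoothTransition (2 - sqn ξ / (2 * A ^ 2)) : ℝ)

lemma compact_of_eun {f : Eu n → ℂ} (R : ℝ) (h : ∀ ξ, R < eun ξ → f ξ = 0) :
    HasCompactSupport f := by
  refine HasCompactSupport.of_support_subset_isCompact (isCompact_closedBall (0 : Eu n) R) ?_
  intro ξ hξ
  rw [mem_closedBall_zero_iff]
  by_contra! hc
  exact hξ (h ξ (hc.trans_le (norm_le_eun ξ)))

lemma low_zero {A : ℝ} (hA : 0 < A) (ξ : Eu n) (h : 2 * A < eun ξ) :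
    Real.smoothTransition (2 - sqn ξ / (2 * A ^ 2)) = 0 := by
  refine Real.smoothTransition.zero_of_nonpos ?_
  rw [sub_nonpos, le_div_iff₀ (by positivity), ← eun_sq]
  nlinarith

lemma low_one {A : ℝ} (hA : 0 < A) (ξ : Eu n) (h : sqn ξ ≤ 2 * A ^ 2) :
    Real.smoothTransition (2 - sqn ξ / (2 * A ^ 2)) = 1 := by
  refine Real.smoothTransition.one_of_one_le ?_
  have : sqn ξ / (2 * A ^ 2) ≤ 1 := by rw [div_le_one (by positivity)]; exact h
  linarith

/-- A compactly supported smooth symbol equal to `1` near `{|ξ| ≤ A}`. -/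
lemma exists_low {A : ℝ} (hA : 0 < A) : ∃ b : SchwartzMap (Eu n) ℂ,
    ∀ ξ, sqn ξ ≤ 2 * A ^ 2 → b ξ = 1 := by
  have h1 : HasCompactSupport (lowFun A : Eu n → ℂ) :=
    compact_of_eun (2 * A) fun ξ h => by simp [lowFun, low_zero hA ξ h]
  have h2 : ContDiff ℝ (⊤ : ℕ∞) (lowFun A : Eu n → ℂ) := by
    refine Complex.ofRealCLM.contDiff.comp (Real.smoothTransition.contDiff.comp ?_)
    exact contDiff_const.sub (sqn_contDiff.div_const _)
  exact ⟨h1.toSchwartzMap h2, fun ξ h => by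
    change lowFun A ξ = 1
    simp [lowFun, low_one hA ξ h]⟩

/-- A compactly supported smooth `b` with `b(ξ) |ξ|^{2M} = 1` near `{A⁻¹ ≤ |ξ| ≤ A}`. -/
lemma exists_ann {A : ℝ} (hA : 0 < A) (M : ℕ) : ∃ b : SchwartzMap (Eu n) ℂ,
    ∀ ξ, sqn ξ ≤ 2 * A ^ 2 → (2 * A ^ 2)⁻¹ ≤ sqn ξ → b ξ * ((sqn ξ : ℝ) : ℂ) ^ M = 1 := by
  set χ : ℝ → ℝ := fun t => Real.smoothTransition (2 - t / (2 * A ^ 2)) *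
    (Real.smoothTransition (4 * A ^ 2 * t - 1) * (t ^ M)⁻¹) with hχ
  have hχs : ContDiff ℝ (⊤ : ℕ∞) χ := by
    refine ContDiff.mul ?_ ?_
    · exact Real.smoothTransition.contDiff.comp (contDiff_const.sub (contDiff_id.div_const _))
    · rw [contDiff_iff_contDiffAt]
      intro t
      by_cases ht : t = 0
      · have hz : (fun t => Real.smoothTransition (4 * A ^ 2 * t - 1) * (t ^ M)⁻¹) =ᶠ[𝓝 t]
            fun _ => 0 := by
          have : ∀ᶠ t' in 𝓝 t, t' < (4 * A ^ 2)⁻¹ :=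
            eventually_lt_nhds (by rw [ht]; positivity)
          filter_upwards [this] with t' h'
          rw [Real.smoothTransition.zero_of_nonpos, zero_mul]
          have := (lt_inv_mul_iff₀ (by positivity : 0 < 4 * A ^ 2)).1 (by simpa using h' :
            t' < (4 * A ^ 2)⁻¹ * 1)
          linarith
        exact contDiffAt_const.congr_of_eventuallyEq hz
      · refine ContDiffAt.mul ?_ ((contDiffAt_id.pow M).inv (pow_ne_zero M ht))
        exact (Real.smoothTransition.contDiff.comp
          ((contDiff_const.mul contDiff_id).sub contDiff_const)).contDiffAt
  have h1 : HasCompactSupport (fun ξ : Eu n => (χ (sqn ξ) : ℂ)) :=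
    compact_of_eun (2 * A) fun ξ h => by simp [χ, low_zero hA ξ h]
  have h2 : ContDiff ℝ (⊤ : ℕ∞) (fun ξ : Eu n => (χ (sqn ξ) : ℂ)) :=
    Complex.ofRealCLM.contDiff.comp (hχs.comp sqn_contDiff)
  refine ⟨h1.toSchwartzMap h2, fun ξ h h' => ?_⟩
  change (χ (sqn ξ) : ℂ) * _ = 1
  have hp : 0 < sqn ξ := lt_of_lt_of_le (by positivity) h'
  simp only [hχ]
  rw [low_one hA ξ h, Real.smoothTransition.one_of_one_le]
  · rw [one_mul, one_mul]
    push_cast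
    exact inv_mul_cancel₀ (pow_ne_zero M (by exact_mod_cast hp.ne'))
  · have := (inv_le_iff_one_le_mul₀ (by positivity)).1 h'
    linarith

end

/-! ### Pointwise estimates for spectrally supported sequences -/

section

variable {n : ℕ}

/-- The ball (for `j = 0`) or dyadic annulus which carries the Fourier transform of the
`j`-th function. -/
def specSet (n : ℕ) (A : ℝ) (j : ℕ) : Set (Eu n) :=
  {ξ : Eu n | (j ≠ 0 → A⁻¹ * 2 ^ j ≤ eun ξ) ∧ eun ξ ≤ A * 2 ^ j}

/-- Continuous, polynomially bounded functions with Fourier supports in `specSet n A j`. -/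
structure SF (A : ℝ) (u : ℕ → Eu n → ℂ) : Prop where
  cont : ∀ j, Continuous (u j)
  pb : ∀ j, PB (u j)
  supp : ∀ j, FsuppIn (u j) (specSet n A j)

lemma SF.meas {A : ℝ} {u : ℕ → Eu n → ℂ} (h : SF A u) (k : ℕ) : Measurable fun x => ‖u k x‖ₑ :=
  (h.cont k).enorm.measurable

lemma sqn_continuous : Continuous (sqn : Eu n → ℝ) := sqn_contDiff.continuous

lemma sqn_dil (k : ℕ) (ξ : Eu n) : sqn (((2 : ℝ) ^ k)⁻¹ • ξ) = ((2 ^ k)⁻¹ * eun ξ) ^ 2 := by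
  rw [sqn_smul, mul_pow, eun_sq]

/-- A function vanishing on the neighbourhood `{|2^{-k}ξ|² < 2A²}` of the ball of radius
`A 2^k` has support disjoint from `specSet n A k`. -/
lemma disj_low {A : ℝ} (hA : 0 < A) (k : ℕ) (f : Eu n → ℂ)
    (hf : ∀ ξ, sqn (((2 : ℝ) ^ k)⁻¹ • ξ) ≤ 2 * A ^ 2 → f ξ = 0) :
    Disjoint (tsupport f) (specSet n A k) := by
  have hcl : IsClosed {ξ : Eu n | 2 * A ^ 2 ≤ sqn (((2 : ℝ) ^ k)⁻¹ • ξ)} :=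
    isClosed_le continuous_const (sqn_continuous.comp (continuous_const_smul _))
  have hsub : tsupport f ⊆ {ξ : Eu n | 2 * A ^ 2 ≤ sqn (((2 : ℝ) ^ k)⁻¹ • ξ)} := by
    refine closure_minimal (fun ξ hξ => ?_) hcl
    by_contra hc
    exact hξ (hf ξ (not_le.1 hc).le)
  rw [Set.disjoint_left]
  intro ξ h1 h2
  have h3 : 2 * A ^ 2 ≤ sqn (((2 : ℝ) ^ k)⁻¹ • ξ) := hsub h1
  rw [sqn_dil] at h3
  have h4 : (2 ^ k : ℝ)⁻¹ * eun ξ ≤ A := by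
    rw [inv_mul_le_iff₀ (by positivity), mul_comm]; exact h2.2
  have h5 : 0 ≤ (2 ^ k : ℝ)⁻¹ * eun ξ := mul_nonneg (by positivity) (eun_nonneg ξ)
  have : ((2 ^ k : ℝ)⁻¹ * eun ξ) ^ 2 ≤ A ^ 2 := pow_le_pow_left₀ h5 h4 2
  nlinarith [pow_pos hA 2]

/-- For `k ≥ 1`, vanishing on the neighbourhood `{(2A²)⁻¹ < |2^{-k}ξ|² < 2A²}` of the annulus suffices. -/
lemma disj_ann {A : ℝ} (hA : 0 < A) (k : ℕ) (hk : k ≠ 0) (f : Eu n → ℂ)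
    (hf : ∀ ξ, sqn (((2 : ℝ) ^ k)⁻¹ • ξ) ≤ 2 * A ^ 2 →
      (2 * A ^ 2)⁻¹ ≤ sqn (((2 : ℝ) ^ k)⁻¹ • ξ) → f ξ = 0) :
    Disjoint (tsupport f) (specSet n A k) := by
  have hc0 : Continuous fun ξ : Eu n => sqn (((2 : ℝ) ^ k)⁻¹ • ξ) :=
    sqn_continuous.comp (continuous_const_smul _)
  have hcl : IsClosed ({ξ : Eu n | 2 * A ^ 2 ≤ sqn (((2 : ℝ) ^ k)⁻¹ • ξ)} ∪
      {ξ : Eu n | sqn (((2 : ℝ) ^ k)⁻¹ • ξ) ≤ (2 * A ^ 2)⁻¹}) :=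
    (isClosed_le continuous_const hc0).union (isClosed_le hc0 continuous_const)
  have hsub : tsupport f ⊆ {ξ : Eu n | 2 * A ^ 2 ≤ sqn (((2 : ℝ) ^ k)⁻¹ • ξ)} ∪
      {ξ : Eu n | sqn (((2 : ℝ) ^ k)⁻¹ • ξ) ≤ (2 * A ^ 2)⁻¹} := by
    refine closure_minimal (fun ξ hξ => ?_) hcl
    by_contra hc
    rw [Set.mem_union, not_or] at hc
    exact hξ (hf ξ (not_le.1 hc.1).le (not_le.1 hc.2).le)
  rw [Set.disjoint_left]
  intro ξ h1 h2
  have h5 : 0 ≤ (2 ^ k : ℝ)⁻¹ * eun ξ := mul_nonneg (by positivity) (eun_nonneg ξ)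
  rcases hsub h1 with h3 | h3
  · replace h3 : 2 * A ^ 2 ≤ sqn (((2 : ℝ) ^ k)⁻¹ • ξ) := h3
    rw [sqn_dil] at h3
    have h4 : (2 ^ k : ℝ)⁻¹ * eun ξ ≤ A := by
      rw [inv_mul_le_iff₀ (by positivity), mul_comm]; exact h2.2
    have : ((2 ^ k : ℝ)⁻¹ * eun ξ) ^ 2 ≤ A ^ 2 := pow_le_pow_left₀ h5 h4 2
    nlinarith [pow_pos hA 2]
  · replace h3 : sqn (((2 : ℝ) ^ k)⁻¹ • ξ) ≤ (2 * A ^ 2)⁻¹ := h3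
    rw [sqn_dil, mul_inv] at h3
    have h4 : A⁻¹ ≤ (2 ^ k : ℝ)⁻¹ * eun ξ := by
      rw [le_inv_mul_iff₀ (by positivity), mul_comm]; exact h2.1 hk
    have : A⁻¹ ^ 2 ≤ ((2 ^ k : ℝ)⁻¹ * eun ξ) ^ 2 := pow_le_pow_left₀ (by positivity) h4 2
    rw [inv_pow] at this
    have : 0 < (A ^ 2)⁻¹ := by positivity
    linarith

/-- Each term is reproduced by the dilated cutoff. -/
lemma SF.rep {A : ℝ} (hA : 0 < A) {u : ℕ → Eu n → ℂ} (h : SF A u) (b : SchwartzMap (Eu n) ℂ)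
    (hb : ∀ ξ, sqn ξ ≤ 2 * A ^ 2 → b ξ = 1) (k : ℕ) : cv (dil k b) (u k) = u k := by
  refine cv_reproduce _ (h.cont k) (h.pb k) _ (h.supp k) _ (disj_low hA k _ fun ξ hξ => ?_)
  simp [dil_apply, hb _ hξ]

/-- Peetre's inequality, uniformly over the sequence. -/
lemma peetre_SF {A : ℝ} (hA : 0 < A) {r : ℝ} (hr : 0 < r) (hr1 : r ≤ 1) (D : ℕ) :
    ∃ C : ℝ≥0∞, C ≠ ∞ ∧ ∀ u : ℕ → Eu n → ℂ, SF A u → ∀ k x,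
      kc D k (fun y => ‖u k y‖ₑ) x ≤
        C * (kc (D * r) k (fun y => ‖u k y‖ₑ ^ r) x) ^ (1 / r) := by
  obtain ⟨b, hb⟩ := exists_low (n := n) hA
  obtain ⟨C, hC, hC1, hCb⟩ := KB_dil b D
  have hr' : 0 ≤ (1 - r) / r := div_nonneg (by linarith) hr.le
  refine ⟨C ^ ((1 - r) / r), ENNReal.rpow_ne_top_of_nonneg hr' hC, fun u hu k x => ?_⟩
  obtain ⟨c, N, hc, hcN⟩ := hu.pb k
  refine kc_le_kc_rpow k hr hr1 (Nat.cast_nonneg D) _ (hu.meas k) c N (fun x => ?_)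
    (fun D' => ?_) C hC1 (fun x => ?_) x
  · rw [← ofReal_norm]
    exact ENNReal.ofReal_le_ofReal (hcN x)
  · obtain ⟨C', hC', _, hCb'⟩ := KB_dil b D'
    refine ⟨C', hC', fun x => ?_⟩
    have := cv_le hC' hCb' k (u k) x
    rwa [hu.rep hA b hb k] at this
  · have := cv_le hC hCb k (u k) x
    rwa [hu.rep hA b hb k] at this

/-- Changing the scale by at most `h` dyadic steps costs a constant factor. -/
lemma kc_scale (D h : ℕ) {j k : ℕ} (hj : j ≤ k + h) (hk : k ≤ j + h) (f : Eu n → ℝ≥0∞) (x : Eu n) :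
    kc D j f x ≤ ENNReal.ofReal ((2 ^ h) ^ n * (2 ^ h) ^ D) * kc D k f x := by
  unfold kc
  rw [← lintegral_const_mul' _ _ ENNReal.ofReal_ne_top]
  refine lintegral_mono fun y => ?_
  rw [← mul_assoc]
  refine mul_le_mul_left ?_ _
  rw [peK, peK, ← ENNReal.ofReal_mul (by positivity)]
  refine ENNReal.ofReal_le_ofReal ?_
  set t := ‖x - y‖
  have ht : 0 ≤ t := norm_nonneg _
  have e1 : (2 : ℝ) ^ j ≤ 2 ^ h * 2 ^ k := by
    rw [← pow_add, add_comm]; exact pow_le_pow_right₀ one_le_two hj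
  have e2 : (2 : ℝ) ^ k ≤ 2 ^ h * 2 ^ j := by
    rw [← pow_add, add_comm]; exact pow_le_pow_right₀ one_le_two hk
  have e3 : (1 : ℝ) ≤ 2 ^ h := one_le_pow₀ one_le_two
  have e4 : 1 + 2 ^ k * t ≤ 2 ^ h * (1 + 2 ^ j * t) := by nlinarith
  have p1 : 0 < 1 + 2 ^ j * t := by positivity
  have p2 : 0 < 1 + 2 ^ k * t := by positivity
  rw [Real.rpow_neg p1.le, Real.rpow_neg p2.le, Real.rpow_natCast, Real.rpow_natCast]
  have e5 : ((1 + 2 ^ j * t) ^ D)⁻¹ ≤ (2 ^ h) ^ D * ((1 + 2 ^ k * t) ^ D)⁻¹ := by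
    rw [inv_le_iff_one_le_mul₀ (by positivity), mul_right_comm, ← mul_pow, ← div_eq_mul_inv,
      one_le_div (by positivity)]
    gcongr
  calc ((2 : ℝ) ^ j) ^ n * ((1 + 2 ^ j * t) ^ D)⁻¹
      ≤ (2 ^ h * 2 ^ k) ^ n * ((2 ^ h) ^ D * ((1 + 2 ^ k * t) ^ D)⁻¹) := by gcongr
    _ = _ := by rw [mul_pow]; ring

/-- The basic pointwise estimate: for uniformly bounded kernels and `|j - k| ≤ h`, the function
`ℱ⁻¹(M_j ℱu_k)` is controlled by averages of `|u_k|^r` at scale `2^{-k}`. -/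
lemma cv_SF {A : ℝ} (hA : 0 < A) {r : ℝ} (hr : 0 < r) (hr1 : r ≤ 1) (D h : ℕ)
    {M : ℕ → SchwartzMap (Eu n) ℂ} (hM : KB M) :
    ∃ C : ℝ≥0∞, C ≠ ∞ ∧ ∀ u : ℕ → Eu n → ℂ, SF A u → ∀ j k, j ≤ k + h → k ≤ j + h → ∀ x,
      ‖cv (M j) (u k) x‖ₑ ≤ C * (kc (D * r) k (fun y => ‖u k y‖ₑ ^ r) x) ^ (1 / r) := by
  obtain ⟨C1, hC1, hC1'⟩ := peetre_SF (n := n) hA hr hr1 D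
  obtain ⟨C2, hC2, _, hC2'⟩ := hM D
  refine ⟨C2 * (ENNReal.ofReal ((2 ^ h) ^ n * (2 ^ h) ^ D) * C1),
    ENNReal.mul_ne_top hC2 (ENNReal.mul_ne_top ENNReal.ofReal_ne_top hC1),
    fun u hu j k hj hk x => ?_⟩
  refine (cv_le hC2 hC2' j (u k) x).trans ?_
  rw [mul_assoc, mul_assoc]
  refine mul_le_mul_right ((kc_scale D h hj hk _ x).trans ?_) _
  exact mul_le_mul_right (hC1' u hu k x) _

lemma peK_le_pow {a : ℝ} (ha : 0 ≤ a) (k : ℕ) (z : Eu n) :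
    peK a k z ≤ ENNReal.ofReal ((2 ^ k) ^ n) := by
  refine ENNReal.ofReal_le_ofReal (mul_le_of_le_one_right (by positivity) ?_)
  refine Real.rpow_le_one_of_one_le_of_nonpos ?_ (by linarith)
  have : 0 ≤ 2 ^ k * ‖z‖ := by positivity
  linarith

lemma enorm_le_eLpNorm_top (v : Eu n → ℂ) : ∀ᵐ x, ‖v x‖ₑ ≤ eLpNorm v ∞ volume := by
  rw [eLpNorm_exponent_top]
  exact ae_le_eLpNormEssSup

/-- Young's and Hölder's inequalities for `(kc a k (|v|^r))^{1/r}`. -/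
lemma kc_Lp {a r : ℝ} (ha : (n : ℝ) < a) (hr : 0 < r) (p : ℝ≥0∞) (hrp : ENNReal.ofReal r ≤ p) :
    ∃ C : ℝ≥0∞, C ≠ ∞ ∧ ∀ v : Eu n → ℂ, Continuous v → ∀ k,
      (∀ x, (kc a k (fun y => ‖v y‖ₑ ^ r) x) ^ (1 / r) ≤
        C * (ENNReal.ofReal ((2 ^ k) ^ n) ^ (1 / p.toReal) * eLpNorm v p volume)) ∧
      eLpNorm (fun x => (kc a k (fun y => ‖v y‖ₑ ^ r) x) ^ (1 / r)) p volume ≤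
        C * eLpNorm v p volume := by
  obtain ⟨C0, hC0, -, hC0'⟩ := kc_le_hlM n a ha
  have ha0 : 0 ≤ a := (Nat.cast_nonneg n).trans ha.le
  have hri : 0 ≤ 1 / r := by positivity
  rcases eq_or_ne p ∞ with rfl | hp
  · have key : ∀ v : Eu n → ℂ, ∀ k x, (kc a k (fun y => ‖v y‖ₑ ^ r) x) ^ (1 / r) ≤
        C0 ^ (1 / r) * eLpNorm v ∞ volume := fun v k x => by
      have h1 : kc a k (fun y => ‖v y‖ₑ ^ r) x ≤ C0 * eLpNorm v ∞ volume ^ r := by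
        calc kc a k (fun y => ‖v y‖ₑ ^ r) x
            ≤ ∫⁻ y, peK a k (x - y) * eLpNorm v ∞ volume ^ r := by
              refine lintegral_mono_ae ?_
              filter_upwards [enorm_le_eLpNorm_top v] with y hy
              exact mul_le_mul_right (ENNReal.rpow_le_rpow hy hr.le) _
          _ = (∫⁻ y, peK a k (x - y)) * eLpNorm v ∞ volume ^ r :=
              lintegral_mul_const _ ((peK_measurable a k).comp
                (measurable_const.sub measurable_id))
          _ ≤ _ := by
              refine mul_le_mul_left ?_ _
              have := kc_one (n := n) a k x
              simp only [kc, mul_one] at this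
              rw [this]; exact hC0' k
      refine (ENNReal.rpow_le_rpow h1 hri).trans_eq ?_
      rw [ENNReal.mul_rpow_of_nonneg _ _ hri, ← ENNReal.rpow_mul, mul_one_div_cancel hr.ne',
        ENNReal.rpow_one]
    refine ⟨C0 ^ (1 / r), ENNReal.rpow_ne_top_of_nonneg hri hC0, fun v hv k => ⟨fun x => ?_, ?_⟩⟩
    · simpa using key v k x
    · rw [eLpNorm_exponent_top]
      refine essSup_le_of_ae_le _ (Eventually.of_forall fun x => ?_)
      simpa using key v k x
  · have hp0 : p ≠ 0 := by
      rintro rfl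
      simp at hrp; linarith
    have hpt : r ≤ p.toReal := (ENNReal.ofReal_le_iff_le_toReal hp).1 hrp
    have hpp : 0 < p.toReal := hr.trans_le hpt
    set P := p.toReal / r with hP
    have hP1 : 1 ≤ P := by rw [hP, one_le_div hr]; exact hpt
    have hip : 0 ≤ 1 / p.toReal := by positivity
    have hrP : 1 / r = P * (1 / p.toReal) := by rw [hP]; field_simp
    have e1 : ∀ v : Eu n → ℂ, (∫⁻ x, (‖v x‖ₑ ^ r) ^ P) ^ (1 / p.toReal) = eLpNorm v p volume :=
      fun v => by
        rw [eLpNorm_eq_lintegral_rpow_enorm_toReal hp0 hp]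
        congr 2; funext x
        rw [← ENNReal.rpow_mul]; congr 1; rw [hP]; field_simp
    have hm : ∀ v : Eu n → ℂ, Continuous v → Measurable fun y => ‖v y‖ₑ ^ r :=
      fun v hv => hv.enorm.measurable.pow_const r
    have e2 : ∀ v : Eu n → ℂ, Continuous v → ∀ k x, kc a k (fun y => ‖v y‖ₑ ^ r) x ^ P ≤
        C0 ^ (P - 1) * kc a k (fun y => (‖v y‖ₑ ^ r) ^ P) x := fun v hv k x =>
      kc_rpow_le a k hP1 C0 (hC0' k) _ (hm v hv) x
    have hCt : C0 ^ (P - 1) ≠ ∞ := ENNReal.rpow_ne_top_of_nonneg (by linarith) hC0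
    refine ⟨(C0 ^ (P - 1) * (1 + C0)) ^ (1 / p.toReal), ENNReal.rpow_ne_top_of_nonneg hip
      (ENNReal.mul_ne_top hCt (by simp [hC0])), fun v hv k => ⟨fun x => ?_, ?_⟩⟩
    · rw [hrP, ENNReal.rpow_mul, ← e1, ← ENNReal.mul_rpow_of_nonneg _ _ hip,
        ← ENNReal.mul_rpow_of_nonneg _ _ hip]
      refine ENNReal.rpow_le_rpow ((e2 v hv k x).trans ?_) hip
      rw [mul_assoc]
      refine mul_le_mul_right ?_ _
      refine le_trans ?_ (mul_le_mul_left le_self_add _)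
      rw [one_mul, ← lintegral_const_mul' _ _ ENNReal.ofReal_ne_top]
      exact lintegral_mono fun y => mul_le_mul_left (peK_le_pow ha0 k _) _
    · rw [eLpNorm_eq_lintegral_rpow_enorm_toReal hp0 hp, ← e1, ← ENNReal.mul_rpow_of_nonneg _ _ hip]
      refine ENNReal.rpow_le_rpow ?_ hip
      calc ∫⁻ x, ‖kc a k (fun y => ‖v y‖ₑ ^ r) x ^ (1 / r)‖ₑ ^ p.toReal
          ≤ ∫⁻ x, C0 ^ (P - 1) * kc a k (fun y => (‖v y‖ₑ ^ r) ^ P) x := by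
            refine lintegral_mono fun x => ?_
            refine le_trans (le_of_eq ?_) (e2 v hv k x)
            rw [enorm_eq_self, ← ENNReal.rpow_mul]
            congr 1; rw [hP]; field_simp
        _ = C0 ^ (P - 1) * ((∫⁻ z, peK (n := n) a k z) * ∫⁻ x, (‖v x‖ₑ ^ r) ^ P) := by
            rw [lintegral_const_mul' _ _ hCt, lintegral_kc a k _ ((hm v hv).pow_const P)]
        _ ≤ _ := by
            rw [← mul_assoc]
            exact mul_le_mul_left (mul_le_mul_right ((hC0' k).trans le_add_self) _) _

end

/-! ### Convergence in the space of tempered distributions -/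

section

variable {n : ℕ}

lemma MT_mul {m1 m2 : Eu n → ℂ} (h1 : m1.HasTemperateGrowth) (h2 : m2.HasTemperateGrowth)
    (φ : SchwartzMap (Eu n) ℂ) : MT (m1 * m2) φ = MT m1 (MT m2 φ) := by
  simp only [MT, ContinuousLinearMap.comp_apply, FTi_FT]
  rw [SchwartzMap.smulLeftCLM_smulLeftCLM_apply h1 h2]

lemma MT_smul {m : Eu n → ℂ} (h : m.HasTemperateGrowth) (c : ℂ)
    (φ : SchwartzMap (Eu n) ℂ) : MT (c • m) φ = c • MT m φ := by
  simp [MT, SchwartzMap.smulLeftCLM_smul h]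

lemma sqn_pow_growth (M : ℕ) :
    (fun ξ : Eu n => ((sqn ξ : ℝ) : ℂ) ^ M).HasTemperateGrowth := by
  have : (fun ξ : Eu n => ((sqn ξ : ℝ) : ℂ)) = fun ξ => ∑ i, (Complex.ofRealCLM (ξ i)) ^ 2 := by
    funext ξ; simp [sqn]
  have h2 : (fun ξ : Eu n => ((sqn ξ : ℝ) : ℂ)).HasTemperateGrowth := by
    rw [this]
    refine Function.HasTemperateGrowth.sum fun i _ => ?_
    refine Function.HasTemperateGrowth.pow ?_ 2
    exact (Complex.ofRealCLM ∘L ContinuousLinearMap.proj (R := ℝ) (φ := fun _ : Fin n => ℝ)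
      i).hasTemperateGrowth
  exact h2.pow M

/-- The `L_1` norm of a Schwartz function. -/
def l1n (φ : SchwartzMap (Eu n) ℂ) : ℝ := ∫ x, ‖φ x‖

lemma l1n_continuous : Continuous (l1n : SchwartzMap (Eu n) ℂ → ℝ) := by
  have h : (l1n : SchwartzMap (Eu n) ℂ → ℝ) = fun φ =>
      ‖SchwartzMap.toLpCLM ℝ ℂ 1 (volume : Measure (Eu n)) φ‖ := by
    funext φ
    rw [SchwartzMap.toLpCLM_apply, SchwartzMap.norm_toLp_one]; rfl
  rw [h]
  exact (ContinuousLinearMap.continuous _).norm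

lemma pair_bound (v : Eu n → ℂ) (B : ℝ) (hv : ∀ x, ‖v x‖ ≤ B) (φ : SchwartzMap (Eu n) ℂ) :
    ‖∫ x, v x * φ x‖ ≤ B * l1n φ := by
  rw [l1n, ← integral_const_mul]
  refine norm_integral_le_of_norm_le (φ.integrable.norm.const_mul B)
    (Eventually.of_forall fun x => ?_)
  rw [norm_mul]
  exact mul_le_mul_of_nonneg_right (hv x) (norm_nonneg _)

/-- Factoring `|ξ|^{2M}` out of a function with Fourier support in the annulus of radius `2^k`. -/
lemma SF.pair_eq {A : ℝ} (hA : 0 < A) {u : ℕ → Eu n → ℂ} (h : SF A u) (M : ℕ)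
    (b : SchwartzMap (Eu n) ℂ)
    (hb : ∀ ξ, sqn ξ ≤ 2 * A ^ 2 → (2 * A ^ 2)⁻¹ ≤ sqn ξ → b ξ * ((sqn ξ : ℝ) : ℂ) ^ M = 1)
    (k : ℕ) (hk : k ≠ 0) (φ : SchwartzMap (Eu n) ℂ) :
    ∫ x, u k x * φ x = ((((2 ^ k)⁻¹ ^ 2) ^ M : ℝ) : ℂ) *
      ∫ x, cv (dil k b) (u k) x * MT (fun ξ => ((sqn ξ : ℝ) : ℂ) ^ M) φ x := by
  set c : ℂ := ((((2 ^ k)⁻¹ ^ 2) ^ M : ℝ) : ℂ) with hc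
  set S : Eu n → ℂ := fun ξ => ((sqn ξ : ℝ) : ℂ) ^ M with hS
  have hSg : S.HasTemperateGrowth := sqn_pow_growth M
  have hcS : (c • S).HasTemperateGrowth := (Function.HasTemperateGrowth.const c).mul hSg
  have hbg := (dil k b).hasTemperateGrowth
  have h1 := supp_swap (u k) (h.cont k) (h.pb k) _ (h.supp k) (fun _ => 1) ((dil k b) * (c • S))
    (Function.HasTemperateGrowth.const 1) (hbg.mul hcS) (disj_ann hA k hk _ fun ξ h1 h2 => ?_) φ
  · rw [MT_one] at h1
    rw [h1, MT_mul hbg hcS, cv_pair _ _ _ (h.cont k) (h.pb k), MT_smul hSg, ← integral_const_mul]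
    refine integral_congr_ae (Eventually.of_forall fun x => ?_)
    simp only [smul_apply, smul_eq_mul]
    ring
  · simp only [Pi.sub_apply, Pi.mul_apply, Pi.smul_apply, smul_eq_mul, dil_apply, sub_eq_zero]
    rw [← hb _ h1 h2]
    congr 1
    simp only [hS, hc, sqn_smul]
    push_cast
    ring

/-- Uniform exponential bounds on a spectrally supported sequence give convergence in `𝒮'`. -/
lemma SF.exists_sum {A : ℝ} (hA : 0 < A) {u : ℕ → Eu n → ℂ} (h : SF A u) (K : ℝ) (hK : 0 ≤ K)
    (L : ℕ) (hL : ∀ k x, ‖u k x‖ ≤ K * 2 ^ (k * L)) :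
    ∃ U : TD n, ∀ φ : SchwartzMap (Eu n) ℂ, HasSum (fun k => ∫ x, u k x * φ x) (U φ) := by
  obtain ⟨b, hb⟩ := exists_ann (n := n) hA (L + 1)
  obtain ⟨C1, hC1, -, hC1'⟩ := KB_dil b (n + 1)
  obtain ⟨C0, hC0, -, hC0'⟩ := kc_le_hlM n ((n + 1 : ℕ) : ℝ) (by push_cast; linarith)
  set C2 : ℝ := C1.toReal * C0.toReal with hC2
  have hC2' : 0 ≤ C2 := by positivity
  have hcv : ∀ k x, ‖cv (dil k b) (u k) x‖ ≤ C2 * (K * 2 ^ (k * L)) := fun k x => by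
    have hKk : 0 ≤ K * 2 ^ (k * L) := by positivity
    have h1 := cv_le hC1 hC1' k (u k) x
    have h2 : kc ((n + 1 : ℕ) : ℝ) k (fun y => ‖u k y‖ₑ) x ≤
        C0 * ENNReal.ofReal (K * 2 ^ (k * L)) := by
      refine (kc_mono _ k (g := fun _ => ENNReal.ofReal (K * 2 ^ (k * L)) * 1) (fun y => ?_) x).trans ?_
      · rw [mul_one, ← ofReal_norm]; exact ENNReal.ofReal_le_ofReal (hL k y)
      · rw [kc_const_mul _ _ _ (fun _ => (1 : ℝ≥0∞)) measurable_const, kc_one, mul_comm]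
        exact mul_le_mul_left (hC0' k) _
    have h3 : ‖cv (dil k b) (u k) x‖ₑ ≤ ENNReal.ofReal (C2 * (K * 2 ^ (k * L))) := by
      refine (h1.trans (mul_le_mul_right h2 C1)).trans_eq ?_
      rw [hC2, ENNReal.ofReal_mul hC2', ENNReal.ofReal_mul ENNReal.toReal_nonneg,
        ENNReal.ofReal_toReal hC1, ENNReal.ofReal_toReal hC0, mul_assoc]
    rw [← ofReal_norm] at h3
    exact (ENNReal.ofReal_le_ofReal_iff (by positivity)).1 h3
  set W : SchwartzMap (Eu n) ℂ →L[ℂ] SchwartzMap (Eu n) ℂ :=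
    MT (fun ξ => ((sqn ξ : ℝ) : ℂ) ^ (L + 1)) with hW
  have hl1 : ∀ φ : SchwartzMap (Eu n) ℂ, 0 ≤ l1n φ :=
    fun φ => integral_nonneg fun x => norm_nonneg _
  set g : SchwartzMap (Eu n) ℂ → ℝ := fun φ => K * l1n φ + C2 * K * l1n (W φ) with hg
  have hterm : ∀ φ k, ‖∫ x, u k x * φ x‖ ≤ g φ * (1 / 2) ^ k := fun φ k => by
    have n1 := hl1 φ
    have n2 := hl1 (W φ)
    rcases eq_or_ne k 0 with rfl | hk
    · refine (pair_bound _ K (fun x => by simpa using hL 0 x) φ).trans ?_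
      simp only [hg, pow_zero, mul_one]
      have : 0 ≤ C2 * K * l1n (W φ) := by positivity
      linarith
    · rw [h.pair_eq hA (L + 1) b hb k hk φ, norm_mul, Complex.norm_real,
        Real.norm_of_nonneg (by positivity)]
      have e : (((2 : ℝ) ^ k)⁻¹ ^ 2) ^ (L + 1) * 2 ^ (k * L) ≤ (1 / 2) ^ k := by
        have : (((2 : ℝ) ^ k)⁻¹ ^ 2) ^ (L + 1) * 2 ^ (k * L) =
            (1 / 2) ^ k * (1 / 2) ^ (k * (L + 1)) := by
          rw [one_div, inv_pow, inv_pow, inv_pow, inv_pow, ← mul_inv, inv_mul_eq_div,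
            div_eq_iff (by positivity), inv_mul_eq_div, eq_div_iff (by positivity)]
          ring
        rw [this]
        exact mul_le_of_le_one_right (by positivity) (pow_le_one₀ (by norm_num) (by norm_num))
      calc _ ≤ (((2 : ℝ) ^ k)⁻¹ ^ 2) ^ (L + 1) * (C2 * (K * 2 ^ (k * L)) * l1n (W φ)) := by
            gcongr
            exact pair_bound _ _ (hcv k) (W φ)
        _ = (C2 * K * l1n (W φ)) * ((((2 : ℝ) ^ k)⁻¹ ^ 2) ^ (L + 1) * 2 ^ (k * L)) := by ring
        _ ≤ (C2 * K * l1n (W φ)) * (1 / 2) ^ k := by gcongr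
        _ ≤ _ := by
            simp only [hg]
            gcongr
            have : 0 ≤ K * l1n φ := by positivity
            linarith
  have hgeo : Summable fun k : ℕ => ((1 : ℝ) / 2) ^ k := summable_geometric_two
  have hsum : ∀ φ : SchwartzMap (Eu n) ℂ, Summable fun k => ∫ x, u k x * φ x := fun φ =>
    Summable.of_norm_bounded (hgeo.mul_left (g φ)) (hterm φ)
  have hkint := fun k (φ : SchwartzMap (Eu n) ℂ) => PB_integrable (u k) (h.cont k) (h.pb k) φ
  set U0 : SchwartzMap (Eu n) ℂ →ₗ[ℂ] ℂ :=
    { toFun := fun φ => ∑' k, ∫ x, u k x * φ x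
      map_add' := fun φ ψ => by
        rw [← (hsum φ).tsum_add (hsum ψ)]
        refine tsum_congr fun k => ?_
        rw [← integral_add (hkint k φ) (hkint k ψ)]
        simp [mul_add]
      map_smul' := fun c φ => by
        simp only [RingHom.id_apply, smul_eq_mul]
        rw [← tsum_mul_left]
        refine tsum_congr fun k => ?_
        rw [← integral_const_mul]
        simp [mul_left_comm] } with hU0
  have hU0b : ∀ φ, ‖U0 φ‖ ≤ g φ * 2 := fun φ => by
    refine (tsum_of_norm_bounded (hgeo.hasSum.mul_left (g φ)) (hterm φ)).trans_eq ?_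
    rw [tsum_geometric_two]
  have hgc : Continuous g :=
    (continuous_const.mul l1n_continuous).add
      (continuous_const.mul (l1n_continuous.comp W.continuous))
  have hcont : Continuous U0 := by
    refine continuous_of_continuousAt_zero U0 ?_
    rw [ContinuousAt, map_zero]
    refine squeeze_zero_norm hU0b ?_
    have hg2 : Continuous fun φ => g φ * 2 := hgc.mul continuous_const
    have := hg2.tendsto 0
    simpa [hg, l1n] using this
  exact ⟨⟨U0, hcont⟩, fun φ => (hsum φ).hasSum⟩

end

/-! ### The Littlewood–Paley pieces of the sum -/

section

variable {n : ℕ}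

/-- The Littlewood–Paley piece is characterised by its pairing with Schwartz functions. -/
lemma LPfun_eq (Φj : SchwartzMap (Eu n) ℂ) (U : TD n) (g : Eu n → ℂ) (hg : Continuous g)
    (H : ∀ φ, U (MT Φj φ) = ∫ x, g x * φ x) : LPfun Φj U = g := by
  have hMT : ∀ φ ξ, MT Φj φ ξ = pF (fun η => Φj η * FTi n φ η) ξ := fun φ ξ => by
    simp only [MT, ContinuousLinearMap.comp_apply, FT_apply]
    congr 1; funext η
    rw [SchwartzMap.smulLeftCLM_apply_apply Φj.hasTemperateGrowth, smul_eq_mul]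
  have hex : ∃ g, IsLPpiece Φj U g := by
    refine ⟨g, hg, fun φ ψ χ hψ hχ => ?_⟩
    have e1 : ψ = FTi n φ := by
      ext x; rw [hψ, FTi_apply]
    have e2 : χ = MT Φj φ := by
      ext ξ; rw [hχ, hMT, e1]
    rw [e2, H]
  have hs := hex.choose_spec
  rw [LPfun, dif_pos hex]
  refine cont_eq_of_pair _ _ hs.1 hg fun φ => ?_
  rw [← H, hs.2 φ (FTi n φ) (MT Φj φ) (fun x => FTi_apply φ x) (hMT φ)]

lemma PB_cv (m : SchwartzMap (Eu n) ℂ) (v : Eu n → ℂ) (hb : PB v) : PB (cv m v) := by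
  obtain ⟨c, N, hc, hvb⟩ := hb
  set I : ℝ := ∫ x, (1 + ‖x‖) ^ N * ‖Kr m x‖ with hI
  have hI0 : 0 ≤ I := integral_nonneg fun x => by positivity
  refine ⟨c * I, N, by positivity, fun y => ?_⟩
  have e : (c * I) * (1 + ‖y‖) ^ N =
      ∫ x, c * (1 + ‖y‖) ^ N * ((1 + ‖x - y‖) ^ N * ‖Kr m (x - y)‖) := by
    rw [integral_const_mul, integral_sub_right_eq_self (fun x => (1 + ‖x‖) ^ N * ‖Kr m x‖) y]
    ring
  rw [e, cv]
  refine norm_integral_le_of_norm_le (((sint (Kr m) N).comp_sub_right y).const_mul _)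
    (Eventually.of_forall fun x => ?_)
  rw [norm_mul]
  calc ‖v x‖ * ‖Kr m (x - y)‖
      ≤ (c * ((1 + ‖x - y‖) * (1 + ‖y‖)) ^ N) * ‖Kr m (x - y)‖ := by
        gcongr
        refine (hvb _).trans ?_
        gcongr
        exact one_add_norm_le _ _
    _ = _ := by rw [mul_pow]; ring

variable {Ψ : ℝ → ℝ} {Φs : ℕ → SchwartzMap (Eu n) ℂ}

lemma LPsym_eq (j : ℕ) (ξ : Eu n) : LPsym Ψ j ξ =
    Ψ ((2 ^ j)⁻¹ * eun ξ) - (if j = 0 then 0 else Ψ (2 * ((2 ^ j)⁻¹ * eun ξ))) := by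
  rw [LPsym, Real.rpow_sub two_pos, Real.rpow_neg two_pos.le, Real.rpow_natCast, Real.rpow_one,
    div_eq_mul_inv, mul_assoc]

/-- For `j ≥ 1` the symbols `Φ_j` are dilates of one function, so their kernels are uniformly rapidly
decreasing at scale `2^{-j}`. -/
lemma LP_KB (hΦ : IsLP Ψ Φs) : KB Φs := by
  set b : SchwartzMap (Eu n) ℂ := SchwartzMap.compCLMOfContinuousLinearEquiv ℂ
    (ContinuousLinearEquiv.smulLeft (Units.mk0 (2 : ℝ) two_ne_zero)) (Φs 1) with hb
  have hb' : ∀ ξ, b ξ = Φs 1 ((2 : ℝ) • ξ) := fun ξ => rfl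
  refine KB_or (KB_dil (Φs 0)) (KB_dil b) fun j => ?_
  rcases Nat.eq_zero_or_pos j with rfl | hj
  · left
    ext ξ
    simp [dil_apply]
  · right
    ext ξ
    rw [dil_apply, hb', hΦ, hΦ, LPsym_eq, LPsym_eq, smul_smul, eun_smul _ (by positivity)]
    simp only [hj.ne', one_ne_zero, if_false, pow_one]
    congr 3 <;> ring_nf

/-- The condition `2 A < 2^h` makes the support of `Φ_j`, contained in `{|ξ| ≤ 13/10 · 2^j}` and for
`j ≥ 1` in `{|ξ| ≥ 11/20 · 2^j}`, disjoint from `specSet n A k` as soon as `|j - k| > h`. -/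
lemma LP_disj (hΨ : GoodPsi Ψ) (hΦ : IsLP Ψ Φs) {A : ℝ} (hA : 0 < A) {h : ℕ}
    (hh : 2 * A < 2 ^ h) (j k : ℕ) (hjk : j + h < k ∨ k + h < j) :
    Disjoint (tsupport (Φs j : Eu n → ℂ)) (specSet n A k) := by
  obtain ⟨-, hΨ1, hΨ0⟩ := hΨ
  have hup : tsupport (Φs j : Eu n → ℂ) ⊆ {ξ | (2 ^ j : ℝ)⁻¹ * eun ξ ≤ 13 / 10} := by
    refine closure_minimal (fun ξ hξ => ?_)
      (isClosed_le (continuous_const.mul eun_continuous) continuous_const)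
    by_contra hc
    replace hc : 13 / 10 < (2 ^ j : ℝ)⁻¹ * eun ξ := not_le.1 hc
    refine hξ ?_
    rw [hΦ, LPsym_eq, hΨ0 _ hc.le, hΨ0 _ (by linarith)]
    simp
  rw [Set.disjoint_left]
  intro ξ h1 h2
  obtain ⟨h3, h4⟩ := h2
  rcases hjk with hjk | hjk
  · have h5 : (2 ^ j : ℝ)⁻¹ * eun ξ ≤ 13 / 10 := hup h1
    rw [inv_mul_le_iff₀ (by positivity)] at h5
    have h6 := h3 (by omega)
    rw [inv_mul_le_iff₀ hA] at h6
    have h7 : (2 : ℝ) ^ (j + h + 1) ≤ 2 ^ k := pow_le_pow_right₀ one_le_two hjk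
    rw [pow_add, pow_add, pow_one] at h7
    have hj : (0 : ℝ) < 2 ^ j := by positivity
    nlinarith [mul_lt_mul_of_pos_left hh hj, mul_le_mul_of_nonneg_left h5 hA.le]
  · have hj0 : j ≠ 0 := by omega
    have hlow : tsupport (Φs j : Eu n → ℂ) ⊆ {ξ | 11 / 10 ≤ 2 * ((2 ^ j : ℝ)⁻¹ * eun ξ)} := by
      refine closure_minimal (fun ξ hξ => ?_)
        (isClosed_le continuous_const (continuous_const.mul (continuous_const.mul eun_continuous)))
      by_contra hc
      replace hc : 2 * ((2 ^ j : ℝ)⁻¹ * eun ξ) < 11 / 10 := not_le.1 hc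
      have h0 : 0 ≤ (2 ^ j : ℝ)⁻¹ * eun ξ := mul_nonneg (by positivity) (eun_nonneg ξ)
      refine hξ ?_
      rw [hΦ, LPsym_eq, hΨ1 _ (by linarith), if_neg hj0, hΨ1 _ hc.le]
      simp
    have h5 : 11 / 10 ≤ 2 * ((2 ^ j : ℝ)⁻¹ * eun ξ) := hlow h1
    have h6 : 11 / 20 * 2 ^ j ≤ eun ξ := by
      have : 11 / 20 ≤ (2 ^ j : ℝ)⁻¹ * eun ξ := by linarith
      rw [le_inv_mul_iff₀ (by positivity)] at this
      linarith
    have h7 : (2 : ℝ) ^ (k + h + 1) ≤ 2 ^ j := pow_le_pow_right₀ one_le_two hjk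
    rw [pow_add, pow_add, pow_one] at h7
    have hk : (0 : ℝ) < 2 ^ k := by positivity
    nlinarith [mul_lt_mul_of_pos_left hh hk, mul_pos hA hk]

/-- Only the terms with `|k - j| ≤ h` contribute to the `j`-th Littlewood–Paley piece. -/
lemma SF.LP_eq (hΨ : GoodPsi Ψ) (hΦ : IsLP Ψ Φs) {A : ℝ} (hA : 0 < A) {h : ℕ}
    (hh : 2 * A < 2 ^ h) {u : ℕ → Eu n → ℂ} (hu : SF A u) (U : TD n)
    (hU : ∀ φ : SchwartzMap (Eu n) ℂ, HasSum (fun k => ∫ x, u k x * φ x) (U φ)) (j : ℕ) :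
    LPfun (Φs j) U = fun x => ∑ k ∈ Finset.Icc (j - h) (j + h), cv (Φs j) (u k) x := by
  have hc : ∀ k, Continuous (cv (Φs j) (u k)) := fun k => cv_continuous _ _ (hu.cont k) (hu.pb k)
  have hpair : ∀ φ k, ∫ x, u k x * MT (Φs j) φ x = ∫ x, cv (Φs j) (u k) x * φ x :=
    fun φ k => cv_pair _ _ _ (hu.cont k) (hu.pb k)
  have hvan : ∀ φ k, k ∉ Finset.Icc (j - h) (j + h) → ∫ x, u k x * MT (Φs j) φ x = 0 := by
    intro φ k hk
    rw [Finset.mem_Icc] at hk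
    have hd := LP_disj hΨ hΦ hA hh j k (by omega)
    rw [supp_swap (u k) (hu.cont k) (hu.pb k) _ (hu.supp k) (Φs j) (fun _ => 0)
      (Φs j).hasTemperateGrowth (Function.HasTemperateGrowth.const 0), MT_zero]
    · simp
    · have e : (Φs j : Eu n → ℂ) - (fun _ : Eu n => (0 : ℂ)) = ⇑(Φs j) := by funext; simp
      rwa [e]
  refine LPfun_eq _ U _ (continuous_finsetSum _ fun k _ => hc k) fun φ => ?_
  have h1 := (hU (MT (Φs j) φ)).unique (hasSum_sum_of_ne_finset_zero (hvan φ))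
  rw [h1]
  simp only [Finset.sum_mul]
  rw [integral_finsetSum]
  · exact Finset.sum_congr rfl fun k _ => hpair φ k
  · intro k _
    exact PB_integrable _ (hc k) (PB_cv _ _ (hu.pb k)) φ

end

/-! ### Sequence spaces and Nikol'skii's inequality -/

section

variable {n : ℕ}

/-- Bounding the sum by the cardinality times its largest term covers all exponents `t > 0` at once. -/
lemma sum_rpow_le {ι : Type*} (W : Finset ι) (b : ι → ℝ≥0∞) {t : ℝ} (ht : 0 < t) :
    (∑ k ∈ W, b k) ^ t ≤ (W.card : ℝ≥0∞) ^ t * ∑ k ∈ W, b k ^ t := by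
  rcases W.eq_empty_or_nonempty with rfl | hW
  · simp [ht]
  obtain ⟨k0, hk0, hmax⟩ := W.exists_max_image b hW
  have h1 : ∑ k ∈ W, b k ≤ W.card * b k0 := by
    simpa using Finset.sum_le_card_nsmul W b (b k0) hmax
  calc (∑ k ∈ W, b k) ^ t ≤ (W.card * b k0) ^ t := ENNReal.rpow_le_rpow h1 ht.le
    _ = (W.card : ℝ≥0∞) ^ t * b k0 ^ t := ENNReal.mul_rpow_of_nonneg _ _ ht.le
    _ ≤ _ := mul_le_mul_right
        (Finset.single_le_sum (f := fun k => b k ^ t) (fun _ _ => bot_le) hk0) _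

lemma le_ellqNorm {q : ℝ≥0∞} (hq : 0 < q) (b : ℕ → ℝ≥0∞) (k : ℕ) : b k ≤ ellqNorm q b := by
  unfold ellqNorm
  split_ifs with h
  · exact le_iSup b k
  · have hq' : 0 < q.toReal := ENNReal.toReal_pos hq.ne' h
    have := ENNReal.rpow_le_rpow (ENNReal.le_tsum (f := fun j => b j ^ q.toReal) k)
      (by positivity : 0 ≤ 1 / q.toReal)
    rwa [← ENNReal.rpow_mul, mul_one_div_cancel hq'.ne', ENNReal.rpow_one] at this

lemma ellqNorm_const_mul {q : ℝ≥0∞} (hq : 0 < q) (c : ℝ≥0∞) (b : ℕ → ℝ≥0∞) :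
    ellqNorm q (fun k => c * b k) = c * ellqNorm q b := by
  unfold ellqNorm
  split_ifs with h
  · rw [ENNReal.mul_iSup]
  · have hq' : 0 < q.toReal := ENNReal.toReal_pos hq.ne' h
    simp_rw [ENNReal.mul_rpow_of_nonneg _ _ hq'.le]
    rw [ENNReal.tsum_mul_left, ENNReal.mul_rpow_of_nonneg _ _ (by positivity),
      ← ENNReal.rpow_mul, mul_one_div_cancel hq'.ne', ENNReal.rpow_one]

/-- Passing to `r`-th powers turns the `ℓ_q` quasi-norm into the `ℓ_{q/r}` one, also for `q = ∞`. -/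
lemma ellqNorm_rpow (q : ℝ≥0∞) {r : ℝ} (hr : 0 < r) (b : ℕ → ℝ≥0∞) :
    ellqNorm (q / ENNReal.ofReal r) (fun k => b k ^ r) = ellqNorm q b ^ r := by
  have hr0 : ENNReal.ofReal r ≠ 0 := by simpa using hr
  unfold ellqNorm
  rcases eq_or_ne q ∞ with rfl | h
  · rw [ENNReal.top_div_of_ne_top ENNReal.ofReal_ne_top, if_pos rfl, if_pos rfl]
    exact ((ENNReal.orderIsoRpow r hr).map_iSup b).symm
  · rw [if_neg h, if_neg (ENNReal.div_ne_top h hr0), ENNReal.toReal_div, ENNReal.toReal_ofReal hr.le,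
      ← ENNReal.rpow_mul]
    congr 1
    · refine tsum_congr fun k => ?_
      rw [← ENNReal.rpow_mul]; congr 1; field_simp
    · field_simp

/-- The indices `k` with `|k - j| ≤ h`. -/
abbrev win (h j : ℕ) : Finset ℕ := Finset.Icc (j - h) (j + h)

lemma win_card (h j : ℕ) : (win h j).card ≤ 2 * h + 1 := by
  rw [Nat.card_Icc]; omega

lemma tsum_win_le (h : ℕ) (x : ℕ → ℝ≥0∞) :
    ∑' j, ∑ k ∈ win h j, x k ≤ ((2 * h + 1 : ℕ) : ℝ≥0∞) * ∑' k, x k := by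
  have e : ∀ j, ∑ k ∈ win h j, x k = ∑' k, if k ∈ win h j then x k else 0 := fun j => by
    rw [tsum_eq_sum (s := win h j) (fun k hk => if_neg hk)]
    exact Finset.sum_congr rfl fun k hk => (if_pos hk).symm
  simp_rw [e]
  rw [ENNReal.tsum_comm, ← ENNReal.tsum_mul_left]
  refine ENNReal.tsum_le_tsum fun k => ?_
  have e2 : ∀ j, (if k ∈ win h j then x k else 0) = if j ∈ win h k then x k else 0 := fun j => by
    congr 1
    simp only [Finset.mem_Icc, eq_iff_iff]
    omega
  simp_rw [e2]
  rw [tsum_eq_sum (s := win h k) (fun j hj => if_neg hj), Finset.sum_ite_mem, Finset.inter_self,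
    Finset.sum_const, nsmul_eq_mul]
  exact mul_le_mul_left (by exact_mod_cast win_card h k) _

/-- The weights are comparable within a window. -/
lemma tw_le (s : ℝ) (h j k : ℕ) (hk : k ∈ win h j) :
    tw s j ≤ ENNReal.ofReal (2 ^ (|s| * h)) * tw s k := by
  rw [Finset.mem_Icc] at hk
  rw [tw, tw, ← ENNReal.ofReal_mul (by positivity), ← Real.rpow_add two_pos]
  refine ENNReal.ofReal_le_ofReal (Real.rpow_le_rpow_of_exponent_le one_le_two ?_)
  have h1 : |(j : ℝ) - k| ≤ h := by
    rw [abs_le]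
    constructor
    · have : (k : ℝ) ≤ j + h := by exact_mod_cast hk.2
      linarith
    · have : (j : ℝ) ≤ k + h := by exact_mod_cast (by omega : j ≤ k + h)
      linarith
  have h2 : s * (j - k) ≤ |s| * h :=
    (le_abs_self _).trans ((abs_mul _ _).trans_le (mul_le_mul_of_nonneg_left h1 (abs_nonneg s)))
  linarith

/-- Summation over a window of neighbouring indices is bounded on weighted `ℓ_q`. -/
lemma ellq_win {q : ℝ≥0∞} (hq : 0 < q) (s : ℝ) (h : ℕ) : ∃ C : ℝ≥0∞, C ≠ ∞ ∧ ∀ a : ℕ → ℝ≥0∞,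
    (ellqNorm q fun j => tw s j * ∑ k ∈ win h j, a k) ≤ C * ellqNorm q fun k => tw s k * a k := by
  set c : ℝ≥0∞ := ENNReal.ofReal (2 ^ (|s| * h)) with hc
  have hct : c ≠ ∞ := ENNReal.ofReal_ne_top
  set N : ℝ≥0∞ := ((2 * h + 1 : ℕ) : ℝ≥0∞) with hN
  have hNt : N ≠ ∞ := ENNReal.natCast_ne_top _
  have step : ∀ (a : ℕ → ℝ≥0∞) j, tw s j * ∑ k ∈ win h j, a k ≤
      c * ∑ k ∈ win h j, tw s k * a k := fun a j => by
    rw [Finset.mul_sum, Finset.mul_sum]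
    refine Finset.sum_le_sum fun k hk => ?_
    rw [← mul_assoc]
    exact mul_le_mul_left (tw_le s h j k hk) _
  suffices H : ∃ C : ℝ≥0∞, C ≠ ∞ ∧ ∀ b : ℕ → ℝ≥0∞,
      (ellqNorm q fun j => ∑ k ∈ win h j, b k) ≤ C * ellqNorm q b by
    obtain ⟨C, hC, H⟩ := H
    refine ⟨c * C, ENNReal.mul_ne_top hct hC, fun a => (ellqNorm_mono q (step a)).trans ?_⟩
    rw [ellqNorm_const_mul hq, mul_assoc]
    exact mul_le_mul_right (H _) _
  rcases eq_or_ne q ∞ with rfl | hqt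
  · refine ⟨N, hNt, fun b => ?_⟩
    simp only [ellqNorm, if_true]
    refine iSup_le fun j => ?_
    calc ∑ k ∈ win h j, b k ≤ (win h j).card • ⨆ k, b k :=
          Finset.sum_le_card_nsmul _ _ _ fun k _ => le_iSup b k
      _ ≤ _ := by
          rw [nsmul_eq_mul]
          exact mul_le_mul_left (by rw [hN]; exact_mod_cast win_card h j) _
  · have hq' : 0 < q.toReal := ENNReal.toReal_pos hq.ne' hqt
    have hi : 0 ≤ 1 / q.toReal := by positivity
    refine ⟨(N ^ q.toReal * N) ^ (1 / q.toReal), ENNReal.rpow_ne_top_of_nonneg hi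
      (ENNReal.mul_ne_top (ENNReal.rpow_ne_top_of_nonneg hq'.le hNt) hNt), fun b => ?_⟩
    simp only [ellqNorm, if_neg hqt]
    rw [← ENNReal.mul_rpow_of_nonneg _ _ hi]
    refine ENNReal.rpow_le_rpow ?_ hi
    calc ∑' j, (∑ k ∈ win h j, b k) ^ q.toReal
        ≤ ∑' j, N ^ q.toReal * ∑ k ∈ win h j, b k ^ q.toReal := by
          refine ENNReal.tsum_le_tsum fun j => (sum_rpow_le _ _ hq').trans ?_
          refine mul_le_mul_left (ENNReal.rpow_le_rpow ?_ hq'.le) _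
          rw [hN]; exact_mod_cast win_card h j
      _ ≤ _ := by
          rw [ENNReal.tsum_mul_left, mul_assoc]
          exact mul_le_mul_right (tsum_win_le h _) _

/-- The quasi-triangle inequality in `L_p` for the sums over windows. -/
lemma eLpNorm_win {p : ℝ≥0∞} (hp : 0 < p) (h : ℕ) : ∃ C : ℝ≥0∞, C ≠ ∞ ∧
    ∀ (G : ℕ → Eu n → ℝ≥0∞), (∀ k, Measurable (G k)) → ∀ j,
      eLpNorm (fun x => ∑ k ∈ win h j, G k x) p volume ≤
        C * ∑ k ∈ win h j, eLpNorm (G k) p volume := by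
  rcases eq_or_ne p ∞ with rfl | hpt
  · refine ⟨1, ENNReal.one_ne_top, fun G _ j => ?_⟩
    rw [one_mul, eLpNorm_exponent_top]
    refine essSup_le_of_ae_le _ ?_
    have : ∀ᵐ x, ∀ k, ‖G k x‖ₑ ≤ eLpNorm (G k) ∞ volume := by
      refine ae_all_iff.2 fun k => ?_
      rw [eLpNorm_exponent_top]
      exact ae_le_eLpNormEssSup
    filter_upwards [this] with x hx
    rw [enorm_eq_self]
    exact Finset.sum_le_sum fun k _ => by simpa using hx k
  · have hp' : 0 < p.toReal := ENNReal.toReal_pos hp.ne' hpt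
    have hi : 0 < 1 / p.toReal := by positivity
    set N : ℝ≥0∞ := ((2 * h + 1 : ℕ) : ℝ≥0∞) with hN
    have hNt : N ≠ ∞ := ENNReal.natCast_ne_top _
    refine ⟨N * N ^ (1 / p.toReal), ENNReal.mul_ne_top hNt
      (ENNReal.rpow_ne_top_of_nonneg hi.le hNt), fun G hG j => ?_⟩
    have hcard : ((win h j).card : ℝ≥0∞) ≤ N := by rw [hN]; exact_mod_cast win_card h j
    simp only [eLpNorm_eq_lintegral_rpow_enorm_toReal hp.ne' hpt, enorm_eq_self]
    calc (∫⁻ x, (∑ k ∈ win h j, G k x) ^ p.toReal) ^ (1 / p.toReal)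
        ≤ (N ^ p.toReal * ∑ k ∈ win h j, ∫⁻ x, G k x ^ p.toReal) ^ (1 / p.toReal) := by
          refine ENNReal.rpow_le_rpow ?_ hi.le
          rw [← lintegral_finsetSum _ fun k _ => (hG k).pow_const _,
            ← lintegral_const_mul' _ _ (ENNReal.rpow_ne_top_of_nonneg hp'.le hNt)]
          refine lintegral_mono fun x => (sum_rpow_le _ _ hp').trans ?_
          exact mul_le_mul_left (ENNReal.rpow_le_rpow hcard hp'.le) _
      _ = N * (∑ k ∈ win h j, ∫⁻ x, G k x ^ p.toReal) ^ (1 / p.toReal) := by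
          rw [ENNReal.mul_rpow_of_nonneg _ _ hi.le, ← ENNReal.rpow_mul,
            mul_one_div_cancel hp'.ne', ENNReal.rpow_one]
      _ ≤ _ := by
          rw [mul_assoc]
          refine mul_le_mul_right ((sum_rpow_le _ _ hi).trans ?_) _
          exact mul_le_mul_left (ENNReal.rpow_le_rpow hcard hi.le) _

/-- Nikol'skii's inequality, in the form needed for convergence in `𝒮'`. -/
lemma SF.exp_bound {A : ℝ} (hA : 0 < A) {u : ℕ → Eu n → ℂ} (hu : SF A u) (s : ℝ) {p : ℝ≥0∞}
    {r : ℝ} (hr : 0 < r) (hr1 : r ≤ 1) (hrp : ENNReal.ofReal r ≤ p) (B : ℝ≥0∞) (hB : B ≠ ∞)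
    (hb : ∀ k, tw s k * eLpNorm (u k) p volume ≤ B) :
    ∃ (K : ℝ) (L : ℕ), 0 ≤ K ∧ ∀ k x, ‖u k x‖ ≤ K * 2 ^ (k * L) := by
  obtain ⟨D, hD⟩ := exists_nat_gt ((n : ℝ) / r)
  have hDr : (n : ℝ) < D * r := (div_lt_iff₀ hr).1 hD
  obtain ⟨b, hbb⟩ := exists_low (n := n) hA
  obtain ⟨C1, hC1, h1⟩ := cv_SF hA hr hr1 D 0 (KB_dil b)
  obtain ⟨C2, hC2, h2⟩ := kc_Lp hDr hr p hrp
  -- Integer exponents absorbing the factors `2^{kn/p}` and `2^{-sk}`; for `p = ∞`, `1 / p.toReal = 0`.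
  obtain ⟨m1, hm1⟩ := exists_nat_ge (1 / p.toReal)
  obtain ⟨m2, hm2⟩ := exists_nat_ge (-s)
  refine ⟨(C1 * (C2 * B)).toReal, n * m1 + m2, ENNReal.toReal_nonneg, fun k x => ?_⟩
  have hCt : C1 * (C2 * B) ≠ ∞ := ENNReal.mul_ne_top hC1 (ENNReal.mul_ne_top hC2 hB)
  have e1 : ENNReal.ofReal ((2 ^ k) ^ n) ^ (1 / p.toReal) ≤ ENNReal.ofReal (2 ^ (k * (n * m1))) := by
    have h1le : 1 ≤ ENNReal.ofReal (((2 : ℝ) ^ k) ^ n) := by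
      rw [ENNReal.one_le_ofReal]
      exact one_le_pow₀ (one_le_pow₀ one_le_two)
    refine (ENNReal.rpow_le_rpow_of_exponent_le h1le hm1).trans_eq ?_
    rw [ENNReal.rpow_natCast, ← ENNReal.ofReal_pow (by positivity)]
    congr 1; ring
  have e2 : eLpNorm (u k) p volume ≤ ENNReal.ofReal (2 ^ (k * m2)) * B := by
    have h3 : 1 ≤ ENNReal.ofReal (2 ^ (k * m2)) * tw s k := by
      rw [tw, ← ENNReal.ofReal_mul (by positivity), ENNReal.one_le_ofReal, ← Real.rpow_natCast,
        ← Real.rpow_add two_pos]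
      refine Real.one_le_rpow one_le_two ?_
      push_cast
      have : (0 : ℝ) ≤ k := Nat.cast_nonneg k
      nlinarith
    calc eLpNorm (u k) p volume ≤ (ENNReal.ofReal (2 ^ (k * m2)) * tw s k) *
          eLpNorm (u k) p volume := le_mul_of_one_le_left bot_le h3
      _ ≤ _ := by rw [mul_assoc]; exact mul_le_mul_right (hb k) _
  have h3 : ‖u k x‖ₑ ≤ ENNReal.ofReal ((C1 * (C2 * B)).toReal * 2 ^ (k * (n * m1 + m2))) := by
    have h4 := h1 u hu k k le_rfl le_rfl x
    rw [hu.rep hA b hbb k] at h4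
    refine (h4.trans (mul_le_mul_right ((h2 (u k) (hu.cont k) k).1 x) _)).trans ?_
    rw [ENNReal.ofReal_mul ENNReal.toReal_nonneg, ENNReal.ofReal_toReal hCt, mul_add, pow_add,
      ENNReal.ofReal_mul (by positivity)]
    calc _ ≤ C1 * (C2 * (ENNReal.ofReal (2 ^ (k * (n * m1))) *
          (ENNReal.ofReal (2 ^ (k * m2)) * B))) := by gcongr
      _ = _ := by ring
  rw [← ofReal_norm] at h3
  exact (ENNReal.ofReal_le_ofReal_iff (by positivity)).1 h3

lemma tw_ne_top (s : ℝ) (k : ℕ) : tw s k ≠ ∞ := ENNReal.ofReal_ne_top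

/-- Each weighted term is bounded by the Triebel–Lizorkin quasi-norm of the sequence. -/
lemma tl_term_le {s : ℝ} {p q : ℝ≥0∞} (hp : 0 < p) (hpt : p ≠ ∞) (hq : 0 < q)
    (u : ℕ → Eu n → ℂ) (k : ℕ) :
    tw s k * eLpNorm (u k) p volume ≤ tlNormSeq s p q u := by
  have hp' : 0 < p.toReal := ENNReal.toReal_pos hp.ne' hpt
  have hi : 0 ≤ 1 / p.toReal := by positivity
  have e : tw s k = (tw s k ^ p.toReal) ^ (1 / p.toReal) := by
    rw [← ENNReal.rpow_mul, mul_one_div_cancel hp'.ne', ENNReal.rpow_one]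
  rw [eLpNorm_eq_lintegral_rpow_enorm_toReal hp.ne' hpt, e, ← ENNReal.mul_rpow_of_nonneg _ _ hi,
    ← lintegral_const_mul' _ _ (ENNReal.rpow_ne_top_of_nonneg hp'.le (tw_ne_top s k)), tlNormSeq]
  refine ENNReal.rpow_le_rpow (lintegral_mono fun x => ?_) hi
  rw [← ENNReal.mul_rpow_of_nonneg _ _ hp'.le]
  exact ENNReal.rpow_le_rpow (le_ellqNorm hq (fun j => tw s j * (‖u j x‖₊ : ℝ≥0∞)) k) hp'.le

end

/-! ### Comparison with the Littlewood–Paley decomposition -/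

section
variable {n : ℕ}

/-- The `L_p` quasi-norm of `2^{sj} |f_j|` in `ℓ_q`, for nonnegative `f_j`, is stable under the
operators `f ↦ (K_k * f^r)^{1/r}` as soon as `r < min p q`: this is the vector-valued maximal
inequality with exponents `p / r` and `q / r`. -/
lemma kc_TL {a r : ℝ} (ha : (n : ℝ) < a) (hr : 0 < r) (s : ℝ) {p q : ℝ≥0∞} (hpt : p ≠ ∞)
    (hrp : ENNReal.ofReal r < p) (hrq : ENNReal.ofReal r < q) :
    ∃ C : ℝ≥0∞, C ≠ ∞ ∧ ∀ f : ℕ → Eu n → ℝ≥0∞, (∀ k, Measurable (f k)) →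
      (∫⁻ x, (ellqNorm q fun k => tw s k * (kc a k (fun y => f k y ^ r) x) ^ (1 / r)) ^ p.toReal) ^
          (1 / p.toReal) ≤
        C * (∫⁻ x, (ellqNorm q fun k => tw s k * f k x) ^ p.toReal) ^ (1 / p.toReal) := by
  have hr0 : ENNReal.ofReal r ≠ 0 := by simpa using hr
  have hrt : ENNReal.ofReal r ≠ ∞ := ENNReal.ofReal_ne_top
  have hP : 1 < p.toReal / r := by
    rw [one_lt_div hr]
    exact (ENNReal.ofReal_lt_iff_lt_toReal hr.le hpt).1 hrp
  have hp' : 0 < p.toReal := by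
    have := (one_lt_div hr).1 hP; linarith
  have hi : 0 ≤ 1 / p.toReal := by positivity
  have hQ : 1 < q / ENNReal.ofReal r := by
    rwa [ENNReal.lt_div_iff_mul_lt (Or.inl hr0) (Or.inl hrt), one_mul]
  obtain ⟨C, hC, H⟩ := vec_all ha _ _ hP hQ
  refine ⟨C ^ (1 / p.toReal), ENNReal.rpow_ne_top_of_nonneg hi hC, fun f hf => ?_⟩
  rw [← ENNReal.mul_rpow_of_nonneg _ _ hi]
  refine ENNReal.rpow_le_rpow ?_ hi
  have h1 := H (fun k y => (tw s k * f k y) ^ r)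
    fun k => ((hf k).const_mul _).pow_const _
  have e (b : ℕ → ℝ≥0∞) : ellqNorm (q / ENNReal.ofReal r) (fun k => b k ^ r) ^ (p.toReal / r) =
      ellqNorm q b ^ p.toReal := by
    rw [ellqNorm_rpow q hr, ← ENNReal.rpow_mul]
    congr 1; field_simp
  simp only [e] at h1
  refine le_trans (le_of_eq (lintegral_congr fun x => ?_)) h1
  rw [← e]
  congr 2
  funext k
  simp_rw [ENNReal.mul_rpow_of_nonneg _ _ hr.le]
  rw [kc_const_mul _ _ _ _ ((hf k).pow_const _), ← ENNReal.rpow_mul, one_div_mul_cancel hr.ne',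
    ENNReal.rpow_one]

/-- Comparison of the Littlewood–Paley pieces of the sum with the given terms: only the terms with
`|k - j| ≤ h` contribute to the `j`-th piece. -/
lemma SF.LP_bound {Ψ : ℝ → ℝ} {Φs : ℕ → SchwartzMap (Eu n) ℂ} (hΨ : GoodPsi Ψ) (hΦ : IsLP Ψ Φs)
    {A : ℝ} (hA : 0 < A) {h : ℕ} (hh : 2 * A < 2 ^ h) {r : ℝ} (hr : 0 < r) (hr1 : r ≤ 1) (D : ℕ) :
    ∃ C : ℝ≥0∞, C ≠ ∞ ∧ ∀ (u : ℕ → Eu n → ℂ), SF A u → ∀ U : TD n,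
      (∀ φ : SchwartzMap (Eu n) ℂ, HasSum (fun k => ∫ x, u k x * φ x) (U φ)) → ∀ j x,
      ‖LPfun (Φs j) U x‖ₑ ≤
        C * ∑ k ∈ win h j, (kc (D * r) k (fun y => ‖u k y‖ₑ ^ r) x) ^ (1 / r) := by
  obtain ⟨C, hC, H⟩ := cv_SF hA hr hr1 D h (LP_KB hΦ)
  refine ⟨C, hC, fun u hu U hU j x => ?_⟩
  rw [hu.LP_eq hΨ hΦ hA hh U hU j, Finset.mul_sum]
  refine (enorm_sum_le _ _).trans (Finset.sum_le_sum fun k hk => ?_)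
  rw [Finset.mem_Icc] at hk
  exact H u hu j k (by omega) (by omega) x

end

/-- Yamazaki's convergence theorem for spectrally supported series. -/
theorem statement_1 (n : ℕ) (hn : 1 ≤ n) (Ψ : ℝ → ℝ) (hΨ : GoodPsi Ψ)
    (Φs : ℕ → SchwartzMap (Eu n) ℂ) (hΦ : IsLP Ψ Φs)
    (s : ℝ) (p q : ℝ≥0∞) (hp : 0 < p) (hq : 0 < q) (A : ℝ) (hA : 0 < A) :
    ∃ C : ℝ≥0∞, C ≠ ∞ ∧
      ∀ u : ℕ → Eu n → ℂ,
        (∀ j, Continuous (u j)) →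
        (∀ j, ∃ (c : ℝ) (k : ℕ), ∀ x, ‖u j x‖ ≤ c * (1 + eun x) ^ k) →
        (∀ j, FsuppIn (u j)
          {ξ : Eu n | (j ≠ 0 → A⁻¹ * 2 ^ j ≤ eun ξ) ∧ eun ξ ≤ A * 2 ^ j}) →
        ((besovNormSeq s p q u ≠ ∞ →
          ∃ U : TD n,
            (∀ φ : SchwartzMap (Eu n) ℂ,
              Tendsto (fun N => ∑ j ∈ Finset.range N, ∫ x, u j x * φ x)
                atTop (𝓝 (U φ))) ∧
            besovNormD Φs s p q U ≤ C * besovNormSeq s p q u) ∧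
        (p ≠ ∞ → tlNormSeq s p q u ≠ ∞ →
          ∃ U : TD n,
            (∀ φ : SchwartzMap (Eu n) ℂ,
              Tendsto (fun N => ∑ j ∈ Finset.range N, ∫ x, u j x * φ x)
                atTop (𝓝 (U φ))) ∧
            tlNormD Φs s p q U ≤ C * tlNormSeq s p q u)) := by
  -- With `r < min p q` the maximal inequality applies with exponents `p / r, q / r > 1`, and with
  -- `D * r > n` the kernels with decay `D * r` are integrable.
  obtain ⟨r, hr, hr1, hrp, hrq⟩ : ∃ r : ℝ, 0 < r ∧ r ≤ 1 ∧ ENNReal.ofReal r < p ∧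
      ENNReal.ofReal r < q := by
    obtain ⟨t, ht0, ht⟩ := ENNReal.lt_iff_exists_nnreal_btwn.1
      (lt_min one_pos (lt_min hp hq) : (0 : ℝ≥0∞) < min 1 (min p q))
    refine ⟨t, by exact_mod_cast ht0, ?_, ?_, ?_⟩
    · exact_mod_cast (ht.trans_le (min_le_left _ _)).le
    · rw [ENNReal.ofReal_coe_nnreal]
      exact ht.trans_le ((min_le_right _ _).trans (min_le_left _ _))
    · rw [ENNReal.ofReal_coe_nnreal]
      exact ht.trans_le ((min_le_right _ _).trans (min_le_right _ _))
  obtain ⟨D, hD⟩ := exists_nat_gt ((n : ℝ) / r)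
  have hDr : (n : ℝ) < D * r := (div_lt_iff₀ hr).1 hD
  obtain ⟨h, hh⟩ := pow_unbounded_of_one_lt (2 * A) (one_lt_two : (1 : ℝ) < 2)
  obtain ⟨C1, hC1, H1⟩ := SF.LP_bound hΨ hΦ hA hh hr hr1 D
  obtain ⟨C2, hC2, H2⟩ := kc_Lp hDr hr p hrp.le
  obtain ⟨C3, hC3, H3⟩ := eLpNorm_win (n := n) hp h
  obtain ⟨C4, hC4, H4⟩ := ellq_win hq s h
  obtain ⟨C5, hC5, H5⟩ : ∃ C : ℝ≥0∞, C ≠ ∞ ∧ (p ≠ ∞ → ∀ f : ℕ → Eu n → ℝ≥0∞,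
      (∀ k, Measurable (f k)) →
      (∫⁻ x, (ellqNorm q fun k => tw s k * (kc (D * r) k (fun y => f k y ^ r) x) ^ (1 / r)) ^
          p.toReal) ^ (1 / p.toReal) ≤
        C * (∫⁻ x, (ellqNorm q fun k => tw s k * f k x) ^ p.toReal) ^ (1 / p.toReal)) := by
    by_cases hpt : p = ∞
    -- The Triebel–Lizorkin part is void for `p = ∞`, so any constant will do.
    · exact ⟨0, ENNReal.zero_ne_top, fun h => absurd hpt h⟩
    · obtain ⟨C, hC, H⟩ := kc_TL hDr hr s hpt hrp hrq
      exact ⟨C, hC, fun _ => H⟩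
  refine ⟨C1 * C3 * C2 * C4 + C1 * C4 * C5, ENNReal.add_ne_top.2
    ⟨ENNReal.mul_ne_top (ENNReal.mul_ne_top (ENNReal.mul_ne_top hC1 hC3) hC2) hC4,
      ENNReal.mul_ne_top (ENNReal.mul_ne_top hC1 hC4) hC5⟩, fun u hc hb hs => ?_⟩
  have hu : SF A u := ⟨hc, fun j => by
    obtain ⟨c, k, hck⟩ := hb j
    exact PB_of_eun _ ⟨c, k, hck⟩, hs⟩
  have conv : ∀ B : ℝ≥0∞, B ≠ ∞ → (∀ k, tw s k * eLpNorm (u k) p volume ≤ B) → ∃ U : TD n,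
      ∀ φ : SchwartzMap (Eu n) ℂ, HasSum (fun k => ∫ x, u k x * φ x) (U φ) := fun B hB hbd => by
    obtain ⟨K, L, hK, hL⟩ := hu.exp_bound hA s hr hr1 hrp.le B hB hbd
    exact hu.exists_sum hA K hK L hL
  refine ⟨fun hB => ?_, fun hpt hB => ?_⟩
  · obtain ⟨U, hU⟩ := conv _ hB fun k =>
      le_ellqNorm hq (fun j => tw s j * eLpNorm (u j) p volume) k
    refine ⟨U, fun φ => (hU φ).tendsto_sum_nat, ?_⟩
    have key : ∀ j, eLpNorm (LPfun (Φs j) U) p volume ≤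
        (C1 * C3 * C2) * ∑ k ∈ win h j, eLpNorm (u k) p volume := fun j => by
      have hG : ∀ k, Measurable fun x => (kc (D * r) k (fun y => ‖u k y‖ₑ ^ r) x) ^ (1 / r) :=
        fun k => (kc_measurable _ k _ ((hu.meas k).pow_const _)).pow_const _
      calc eLpNorm (LPfun (Φs j) U) p volume
          ≤ C1 * eLpNorm (fun x => ∑ k ∈ win h j,
              (kc (D * r) k (fun y => ‖u k y‖ₑ ^ r) x) ^ (1 / r)) p volume := by
            refine eLpNorm_le_mul_eLpNorm_of_ae_le_mul'' p
              (Finset.measurable_fun_sum _ fun k _ => hG k).aestronglyMeasurable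
              (Eventually.of_forall fun x => ?_)
            rw [enorm_eq_self]
            exact H1 u hu U hU j x
        _ ≤ C1 * (C3 * ∑ k ∈ win h j, C2 * eLpNorm (u k) p volume) := by
            refine mul_le_mul_right ((H3 _ hG j).trans (mul_le_mul_right ?_ _)) _
            exact Finset.sum_le_sum fun k _ => (H2 (u k) (hc k) k).2
        _ = _ := by rw [← Finset.mul_sum]; ring
    calc besovNormD Φs s p q U
        ≤ ellqNorm q fun j => (C1 * C3 * C2) *
            (tw s j * ∑ k ∈ win h j, eLpNorm (u k) p volume) := by
          refine ellqNorm_mono q fun j => (mul_le_mul_right (key j) _).trans_eq ?_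
          ring
      _ ≤ (C1 * C3 * C2) * (C4 * besovNormSeq s p q u) := by
          rw [ellqNorm_const_mul hq]
          exact mul_le_mul_right (H4 _) _
      _ ≤ _ := by
          rw [← mul_assoc]
          exact mul_le_mul_left le_self_add _
  · obtain ⟨U, hU⟩ := conv _ hB fun k => tl_term_le hp hpt hq u k
    refine ⟨U, fun φ => (hU φ).tendsto_sum_nat, ?_⟩
    have hp' : 0 < p.toReal := ENNReal.toReal_pos hp.ne' hpt
    have hi : 0 ≤ 1 / p.toReal := by positivity
    have hCt : C1 * C4 ≠ ∞ := ENNReal.mul_ne_top hC1 hC4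
    have e : C1 * C4 = ((C1 * C4) ^ p.toReal) ^ (1 / p.toReal) := by
      rw [← ENNReal.rpow_mul, mul_one_div_cancel hp'.ne', ENNReal.rpow_one]
    have key : ∀ x, (ellqNorm q fun j => tw s j * (‖LPfun (Φs j) U x‖₊ : ℝ≥0∞)) ≤ (C1 * C4) *
        ellqNorm q fun k => tw s k * (kc (D * r) k (fun y => ‖u k y‖ₑ ^ r) x) ^ (1 / r) := fun x => by
      calc _ ≤ ellqNorm q fun j => C1 * (tw s j *
            ∑ k ∈ win h j, (kc (D * r) k (fun y => ‖u k y‖ₑ ^ r) x) ^ (1 / r)) := by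
            refine ellqNorm_mono q fun j => (mul_le_mul_right (H1 u hu U hU j x) _).trans_eq ?_
            ring
        _ ≤ _ := by
            rw [ellqNorm_const_mul hq, mul_assoc]
            exact mul_le_mul_right (H4 _) _
    calc tlNormD Φs s p q U
        ≤ (C1 * C4) * (∫⁻ x, (ellqNorm q fun k =>
            tw s k * (kc (D * r) k (fun y => ‖u k y‖ₑ ^ r) x) ^ (1 / r)) ^ p.toReal) ^
              (1 / p.toReal) := by
          rw [e, ← ENNReal.mul_rpow_of_nonneg _ _ hi,
            ← lintegral_const_mul' _ _ (ENNReal.rpow_ne_top_of_nonneg hp'.le hCt)]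
          refine ENNReal.rpow_le_rpow (lintegral_mono fun x => ?_) hi
          rw [← ENNReal.mul_rpow_of_nonneg _ _ hp'.le]
          exact ENNReal.rpow_le_rpow (key x) hp'.le
      _ ≤ (C1 * C4) * (C5 * tlNormSeq s p q u) :=
          mul_le_mul_right (H5 hpt (fun k y => ‖u k y‖ₑ) hu.meas) _
      _ ≤ _ := by
          rw [← mul_assoc]
          exact mul_le_mul_left le_add_self _

end
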